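/- arXiv:1707.02501 — 3 statements merged into one kernel-verified Lean document; each statement's English description precedes it below -/
import Mathlib

section
/- For every rational number c, the following are equivalent: (i) either Φ_{4,c} is reducible in ℚ[x], or the Galois group G_c of Φ_{4,c} over ℚ is not isomorphic to the Galois group G of Φ₄(t,x) over ℚ(t); (ii) c ∈ Im λ ∪ Im η ∪ {−5/2}. -/
open Polynomial

/-- The fourth dynatomic polynomial of `x^2 + c`. -/
noncomputable def Phi4 {K : Type*} [Field K] (c : K) : K[X] :=
  X ^ 12 + C (6 * c) * X ^ 10 + X ^ 9 + C (15 * c ^ 2 + 3 * c) * X ^ 8 +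
    C (4 * c) * X ^ 7 + C (20 * c ^ 3 + 12 * c ^ 2 + 1) * X ^ 6 +
    C (6 * c ^ 2 + 2 * c) * X ^ 5 +
    C (15 * c ^ 4 + 18 * c ^ 3 + 3 * c ^ 2 + 4 * c) * X ^ 4 +
    C (4 * c ^ 3 + 4 * c ^ 2 + 1) * X ^ 3 +
    C (6 * c ^ 5 + 12 * c ^ 4 + 6 * c ^ 3 + 5 * c ^ 2 + c) * X ^ 2 +
    C (c ^ 4 + 2 * c ^ 3 + c ^ 2 + 2 * c) * X +
    C (c ^ 6 + 3 * c ^ 5 + 3 * c ^ 4 + 3 * c ^ 3 + 2 * c ^ 2 + 1)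



/-- Eisenstein integers. -/
abbrev EisInt := QuadraticAlgebra ℤ (-1) (-1)

namespace EisInt

lemma norm_eq (z : EisInt) : z.norm = z.re ^ 2 - z.re * z.im + z.im ^ 2 := by
  rw [QuadraticAlgebra.norm_def]; ring

lemma norm_nonneg (z : EisInt) : 0 ≤ z.norm := by
  rw [norm_eq]; nlinarith [sq_nonneg (z.re - z.im), sq_nonneg z.re, sq_nonneg z.im]

lemma norm_eq_zero {z : EisInt} (h : z.norm = 0) : z = 0 := by
  rw [norm_eq] at h
  have h1 : z.re = 0 := by nlinarith [sq_nonneg (z.re - 2 * z.im), sq_nonneg z.re]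
  have h2 : z.im = 0 := by nlinarith [sq_nonneg (z.im - 2 * z.re), sq_nonneg z.im]
  ext <;> simp [h1, h2]

/-- quotient by rounding -/
def quo (x y : EisInt) : EisInt :=
  ⟨round (((x * star y).re : ℚ) / (y.norm : ℚ)), round (((x * star y).im : ℚ) / (y.norm : ℚ))⟩

lemma norm_rem_lt (x : EisInt) {y : EisInt} (hy : y ≠ 0) :
    (x - y * quo x y).norm < y.norm := by
  have hN : 0 < y.norm := lt_of_le_of_ne (norm_nonneg y) (fun h => hy (norm_eq_zero h.symm))
  set N := y.norm with hNdef
  set A := (x * star y).re with hA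
  set B := (x * star y).im with hB
  have hNq : (0 : ℚ) < N := by exact_mod_cast hN
  have h1 := abs_le.mp (abs_sub_round ((A : ℚ) / N))
  have h2 := abs_le.mp (abs_sub_round ((B : ℚ) / N))
  set p := round ((A : ℚ) / N) with hp
  set q := round ((B : ℚ) / N) with hq
  have e1 : (A : ℚ) - N * p = N * ((A : ℚ) / N - p) := by field_simp
  have e2 : (B : ℚ) - N * q = N * ((B : ℚ) / N - q) := by field_simp
  have key : (x - y * quo x y).norm * N = (A - N * p) ^ 2 - (A - N * p) * (B - N * q) + (B - N * q) ^ 2 := by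
    rw [hNdef, ← QuadraticAlgebra.norm_star y, ← map_mul, norm_eq]
    have hq1 : quo x y = ⟨p, q⟩ := rfl
    have r1 : ((x - y * quo x y) * star y).re = A - N * p := by
      rw [hq1, hA, hNdef, norm_eq]
      clear_value p q
      simp only [QuadraticAlgebra.re_mul, QuadraticAlgebra.im_mul, QuadraticAlgebra.re_sub,
        QuadraticAlgebra.im_sub, QuadraticAlgebra.re_star, QuadraticAlgebra.im_star]
      ring
    have r2 : ((x - y * quo x y) * star y).im = B - N * q := by
      rw [hq1, hB, hNdef, norm_eq]
      clear_value p q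
      simp only [QuadraticAlgebra.re_mul, QuadraticAlgebra.im_mul, QuadraticAlgebra.re_sub,
        QuadraticAlgebra.im_sub, QuadraticAlgebra.re_star, QuadraticAlgebra.im_star]
      ring
    rw [r1, r2, QuadraticAlgebra.norm_star]
  have key2 : ((x - y * quo x y).norm : ℚ) * N < N * N := by
    have : ((x - y * quo x y).norm : ℚ) * N = (A - N * p) ^ 2 - (A - N * p) * (B - N * q) + (B - N * q) ^ 2 := by
      exact_mod_cast key
    rw [this, e1, e2]
    generalize (A : ℚ) / N - p = s at *
    generalize (B : ℚ) / N - q = t at *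
    have : s ^ 2 - s * t + t ^ 2 < 1 := by nlinarith
    nlinarith [mul_pos hNq hNq]
  have := lt_of_mul_lt_mul_right key2 hNq.le
  exact_mod_cast this

noncomputable instance : EuclideanDomain EisInt :=
  { (inferInstance : CommRing EisInt) with
    exists_pair_ne := ⟨0, 1, by intro h; have := congrArg QuadraticAlgebra.re h; simp [QuadraticAlgebra.re_one] at this⟩
    quotient := quo
    quotient_zero := by intro a; ext <;> simp [quo]
    remainder := fun a b => a - b * quo a b
    quotient_mul_add_remainder_eq := by intro a b; ring
    r := fun a b => a.norm.natAbs < b.norm.natAbs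
    r_wellFounded := (measure (fun a : EisInt => a.norm.natAbs)).wf
    remainder_lt := by
      intro a b hb
      have := norm_rem_lt a hb
      have h0 := norm_nonneg (a - b * quo a b)
      show (a - b * quo a b).norm.natAbs < b.norm.natAbs
      omega
    mul_left_not_lt := by
      intro a b hb
      show ¬ ((a * b).norm.natAbs < a.norm.natAbs)
      have hN : 0 < b.norm := lt_of_le_of_ne (norm_nonneg b) (fun h => hb (norm_eq_zero h.symm))
      rw [map_mul, Int.natAbs_mul, not_lt]
      exact Nat.le_mul_of_pos_right _ (by omega) }

lemma unit_cases {u : EisInt} (hu : IsUnit u) :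
    (u.re = 1 ∧ u.im = 0) ∨ (u.re = -1 ∧ u.im = 0) ∨ (u.re = 0 ∧ u.im = 1) ∨ (u.re = 0 ∧ u.im = -1) ∨
      (u.re = 1 ∧ u.im = 1) ∨ (u.re = -1 ∧ u.im = -1) := by
  rw [QuadraticAlgebra.isUnit_iff_norm_isUnit, Int.isUnit_iff] at hu
  have h0 := norm_nonneg u
  have h1 : u.re ^ 2 - u.re * u.im + u.im ^ 2 = 1 := by
    rw [← norm_eq]; omega
  have a1 : u.re ≤ 1 := by nlinarith [sq_nonneg (u.re - 2 * u.im)]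
  have a2 : -1 ≤ u.re := by nlinarith [sq_nonneg (u.re - 2 * u.im)]
  have a3 : u.im ≤ 1 := by nlinarith [sq_nonneg (u.im - 2 * u.re)]
  have a4 : -1 ≤ u.im := by nlinarith [sq_nonneg (u.im - 2 * u.re)]
  generalize u.re = a at *
  generalize u.im = b at *
  interval_cases a <;> interval_cases b <;> simp_all

end EisInt

lemma cube_rep (q P t : ℤ) (h : q ^ 2 + 3 * P ^ 2 = t ^ 3) (hc : IsCoprime (2 * q) (t ^ 3)) :
    ∃ x y : ℤ, q + P = x ^ 3 + y ^ 3 - 3 * x * y ^ 2 ∧ 2 * P = 3 * x * y * (x - y) := by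
  let α : EisInt := ⟨q + P, 2 * P⟩
  let α' : EisInt := ⟨q - P, - 2 * P⟩
  have hprod : α * α' = ((⟨t, 0⟩ : EisInt)) ^ 3 := by
    ext
    · simp [α, α', pow_succ]; linarith
    · simp [α, α', pow_succ]; ring
  have hcop : IsCoprime α α' := by
    obtain ⟨u, v, huv⟩ := hc
    refine ⟨⟨u, 0⟩ + ⟨v, 0⟩ * α', ⟨u, 0⟩, ?_⟩
    ext
    · simp [α, α', QuadraticAlgebra.re_one]; rw [← h] at huv; linarith
    · simp [α, α', QuadraticAlgebra.im_one]; ring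
  obtain ⟨β, u, hu⟩ := exists_associated_pow_of_mul_eq_pow' hcop hprod
  have e1 := congrArg QuadraticAlgebra.re hu
  have e2 := congrArg QuadraticAlgebra.im hu
  have todd : ¬ (2 ∣ t ^ 3) := by
    intro hd
    have := hc.isUnit_of_dvd' (Dvd.intro q rfl) hd
    rw [Int.isUnit_iff] at this; omega
  have hN : (q ^ 2 + 3 * P ^ 2) % 2 = 1 := by rw [h]; omega
  have hpar : (q + P) % 2 = 1 := by
    rcases Int.emod_two_eq_zero_or_one q with a | a <;> rcases Int.emod_two_eq_zero_or_one P with b | b <;>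
      simp [pow_two, Int.add_emod, Int.mul_emod, a, b] at hN ⊢
  have hre : (β ^ 3).re = β.re ^ 3 + β.im ^ 3 - 3 * β.re * β.im ^ 2 := by
    simp [pow_succ]; ring
  have him : (β ^ 3).im = 3 * β.re * β.im * (β.re - β.im) := by
    simp [pow_succ]; ring
  have heven : (β ^ 3).im % 2 = 0 := by
    rw [him]
    rcases Int.emod_two_eq_zero_or_one β.re with a | a <;> rcases Int.emod_two_eq_zero_or_one β.im with b | b <;>
      simp [Int.sub_emod, Int.mul_emod, a, b]
  simp only [QuadraticAlgebra.re_mul, QuadraticAlgebra.im_mul, α] at e1 e2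
  generalize hR : (β ^ 3).re = R at *
  generalize hI : (β ^ 3).im = I at *
  rcases EisInt.unit_cases u.isUnit with ⟨a, b⟩ | ⟨a, b⟩ | ⟨a, b⟩ | ⟨a, b⟩ | ⟨a, b⟩ | ⟨a, b⟩ <;> rw [a, b] at e1 e2
  · exact ⟨β.re, β.im, by linarith, by linarith⟩
  · exact ⟨-β.re, -β.im, by linarith, by linarith⟩
  all_goals exfalso; omega

lemma four_cube_aux (u v w s : ℤ) (h1 : IsCoprime u v) (h2 : IsCoprime u w) (h3 : IsCoprime v w)
    (hw : w % 2 = 0) (h : u * v * w = 4 * s ^ 3) :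
    ∃ e f g : ℤ, u = e ^ 3 ∧ v = f ^ 3 ∧ w = 4 * g ^ 3 ∧ g ∣ s := by
  have hw2 : (2 : ℤ) ∣ w := by omega
  have c1 : IsCoprime u 2 := h2.of_isCoprime_of_dvd_right hw2
  have c2 : IsCoprime v 2 := h3.of_isCoprime_of_dvd_right hw2
  have c3 : IsCoprime (u * v) 4 := by
    have : IsCoprime (u * v) (2 ^ 2) := (c1.mul_left c2).pow_right
    simpa using this
  have hd : (4 : ℤ) ∣ w := c3.symm.dvd_of_dvd_mul_left (Dvd.intro _ h.symm)
  obtain ⟨w', rfl⟩ := hd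
  have h' : u * v * w' = s ^ 3 := by linarith
  have k2 : IsCoprime u w' := h2.of_isCoprime_of_dvd_right (Dvd.intro_left _ rfl)
  have k3 : IsCoprime v w' := h3.of_isCoprime_of_dvd_right (Dvd.intro_left _ rfl)
  obtain ⟨⟨k, hk⟩, g, hg⟩ := Int.eq_pow_of_mul_eq_pow_odd (k2.mul_left k3) (by decide : Odd 3) h'
  obtain ⟨⟨e, he⟩, f, hf⟩ := Int.eq_pow_of_mul_eq_pow_odd h1 (by decide : Odd 3) hk
  refine ⟨e, f, g, he, hf, by rw [hg], ?_⟩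
  rw [← Int.pow_dvd_pow_iff (n := 3) (by norm_num), ← hg]
  exact Dvd.intro_left _ h'

theorem no_cubes_four : ∀ (n : ℕ) (a b c : ℤ), c.natAbs = n → a ^ 3 + b ^ 3 = 4 * c ^ 3 → c = 0 := by
  intro n
  induction n using Nat.strong_induction_on with
  | _ n ih =>
  intro a b c hn h
  by_contra hc
  -- coprime
  by_cases hcop : IsCoprime a b
  swap
  · rw [Int.isCoprime_iff_nat_coprime, Nat.Prime.not_coprime_iff_dvd] at hcop
    obtain ⟨p, hp, ha, hb⟩ := hcop
    rw [← Int.natCast_dvd] at ha hb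
    obtain ⟨a', rfl⟩ := ha
    obtain ⟨b', rfl⟩ := hb
    have hpc : (p : ℤ) ∣ c := by
      by_contra hpc
      have : IsCoprime ((p : ℤ) ^ 3) (c ^ 3) := by
        apply IsCoprime.pow
        exact (Prime.coprime_iff_not_dvd (Nat.prime_iff_prime_int.mp hp)).mpr hpc
      have hd : (p : ℤ) ^ 3 ∣ 4 := this.dvd_of_dvd_mul_right ⟨a' ^ 3 + b' ^ 3, by rw [← h]; ring⟩
      have h4 := Int.le_of_dvd (by norm_num) hd
      have h2 : (2 : ℤ) ≤ p := by exact_mod_cast hp.two_le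
      nlinarith [pow_le_pow_left₀ (by norm_num) h2 3]
    obtain ⟨c', rfl⟩ := hpc
    have hp0 : (p : ℤ) ≠ 0 := by exact_mod_cast hp.ne_zero
    have hc' : c' ≠ 0 := by rintro rfl; simp at hc
    apply hc'
    refine ih c'.natAbs ?_ a' b' c' rfl ?_
    · rw [← hn, Int.natAbs_mul, Int.natAbs_natCast]
      have := hp.two_le
      have : 0 < c'.natAbs := Int.natAbs_pos.mpr hc'
      nlinarith
    · apply mul_left_cancel₀ (pow_ne_zero 3 hp0); linarith
  -- 3 divides c and a + b
  have h9 : c % 3 = 0 ∧ (a + b) % 3 = 0 := by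
    have h9 := congrArg (Int.cast : ℤ → ZMod 9) h
    push_cast at h9
    have key : ∀ a b c : ZMod 9, a ^ 3 + b ^ 3 = 4 * c ^ 3 →
        ((c = 0 ∨ c = 3 ∨ c = 6) ∧ (a + b = 0 ∨ a + b = 3 ∨ a + b = 6)) := by decide
    have k := key _ _ _ h9
    have conv : ∀ t : ℤ, ((t : ZMod 9) = 0 ∨ (t : ZMod 9) = 3 ∨ (t : ZMod 9) = 6) → t % 3 = 0 := by
      intro t ht
      rcases ht with ht | ht | ht
      · have := (ZMod.intCast_eq_intCast_iff_dvd_sub 0 t 9).mp (by simpa using ht.symm); omega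
      · have := (ZMod.intCast_eq_intCast_iff_dvd_sub 3 t 9).mp (by simpa using ht.symm); omega
      · have := (ZMod.intCast_eq_intCast_iff_dvd_sub 6 t 9).mp (by simpa using ht.symm); omega
    exact ⟨conv _ k.1, conv _ (by simpa using k.2)⟩
  have hpar : a % 2 = 1 ∧ b % 2 = 1 := by
    have h2 : (a ^ 3 + b ^ 3) % 2 = 0 := by omega
    rcases Int.emod_two_eq_zero_or_one a with x | x <;> rcases Int.emod_two_eq_zero_or_one b with y | y
    · have := hcop.isUnit_of_dvd' (show (2 : ℤ) ∣ a by omega) (show (2 : ℤ) ∣ b by omega)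
      rw [Int.isUnit_iff] at this; omega
    · simp [pow_succ, Int.add_emod, Int.mul_emod, x, y] at h2
    · simp [pow_succ, Int.add_emod, Int.mul_emod, x, y] at h2
    · exact ⟨x, y⟩
  obtain ⟨C, rfl⟩ : (3 : ℤ) ∣ c := by omega
  obtain ⟨P, hP⟩ : ∃ P, a + b = 6 * P := ⟨(a + b) / 6, by omega⟩
  obtain ⟨q, hq⟩ : ∃ q, a - b = 2 * q := ⟨(a - b) / 2, by omega⟩
  obtain rfl : a = 3 * P + q := by omega
  obtain rfl : b = 3 * P - q := by omega
  have hC : C ≠ 0 := by rintro rfl; simp at hc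
  have e : P * (q ^ 2 + 3 * P ^ 2) = 6 * C ^ 3 := by nlinarith
  have hcPq : IsCoprime P q := by
    obtain ⟨u, v, huv⟩ := hcop
    exact ⟨3 * u + 3 * v, u - v, by linarith⟩
  have hc3 : IsCoprime (3 : ℤ) q := by
    obtain ⟨u, v, huv⟩ := hcop
    exact ⟨(u + v) * P, u - v, by linarith⟩
  have hodd : (q ^ 2 + 3 * P ^ 2) % 2 = 1 := by
    rcases Int.emod_two_eq_zero_or_one q with x | x <;> rcases Int.emod_two_eq_zero_or_one P with y | y <;>
      simp [pow_two, Int.add_emod, Int.mul_emod, x, y] <;> omega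
  have cT2 : IsCoprime (2 : ℤ) (q ^ 2 + 3 * P ^ 2) :=
    (Prime.coprime_iff_not_dvd Int.prime_two).mpr (by omega)
  have cT3 : IsCoprime (3 : ℤ) (q ^ 2 + 3 * P ^ 2) := by
    have := (hc3.pow_right (n := 2)).add_mul_left_right (P ^ 2); simpa using this
  have cTP : IsCoprime P (q ^ 2 + 3 * P ^ 2) := by
    have := (hcPq.pow_right (n := 2)).add_mul_left_right (3 * P)
    have e0 : q ^ 2 + P * (3 * P) = q ^ 2 + 3 * P ^ 2 := by ring
    rwa [e0] at this
  have cTq : IsCoprime q (q ^ 2 + 3 * P ^ 2) := by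
    have h0 : IsCoprime q (3 * P ^ 2) := hc3.symm.mul_right hcPq.symm.pow_right
    have := h0.add_mul_left_right q
    have e0 : 3 * P ^ 2 + q * q = q ^ 2 + 3 * P ^ 2 := by ring
    rwa [e0] at this
  have c6 : IsCoprime (6 : ℤ) (q ^ 2 + 3 * P ^ 2) := by
    have := cT2.mul_left cT3; norm_num at this; exact this
  have hd6 : (6 : ℤ) ∣ P := c6.dvd_of_dvd_mul_right (Dvd.intro _ e.symm)
  obtain ⟨P', hP'⟩ := hd6
  have e2 : P' * (q ^ 2 + 3 * P ^ 2) = C ^ 3 := by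
    have : 6 * (P' * (q ^ 2 + 3 * P ^ 2)) = 6 * C ^ 3 := by
      rw [← e]; linear_combination (-(q ^ 2 + 3 * P ^ 2)) * hP'
    linarith
  have cTP' : IsCoprime P' (q ^ 2 + 3 * P ^ 2) :=
    cTP.of_isCoprime_of_dvd_left ⟨6, by rw [hP']; ring⟩
  obtain ⟨⟨s, hs⟩, t, ht⟩ := Int.eq_pow_of_mul_eq_pow_odd cTP' (by decide : Odd 3) e2
  obtain ⟨x, y, hx, hy⟩ := cube_rep q P t ht (by rw [← ht]; exact cT2.mul_left cTq)
  have hxy4 : x * y * (x - y) = 4 * s ^ 3 := by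
    rw [hP', hs] at hy; linarith
  have hs0 : s ≠ 0 := by
    rintro rfl
    rw [hs] at e2; apply hC; simpa using e2.symm
  have hsC : s ∣ C := by
    rw [← Int.pow_dvd_pow_iff (n := 3) (by norm_num), ← hs]
    exact Dvd.intro _ e2
  have hlt : ∀ g : ℤ, g ∣ s → g.natAbs < n := by
    intro g hg
    have h1 := Nat.le_of_dvd (Int.natAbs_pos.mpr hC) (Int.natAbs_dvd_natAbs.mpr (hg.trans hsC))
    have h2 := Int.natAbs_pos.mpr hC
    rw [← hn, Int.natAbs_mul]; simp; omega
  have hnz : ∀ g : ℤ, g ∣ s → g ≠ 0 := by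
    rintro g hg rfl; exact hs0 (zero_dvd_iff.mp hg)
  have hcxy : IsCoprime x y := by
    rw [Int.isCoprime_iff_nat_coprime]
    by_contra hcon
    rw [Nat.Prime.not_coprime_iff_dvd] at hcon
    obtain ⟨p, hp, ha, hb⟩ := hcon
    rw [← Int.natCast_dvd] at ha hb
    have hp' := Nat.prime_iff_prime_int.mp hp
    obtain ⟨x', rfl⟩ := ha
    obtain ⟨y', rfl⟩ := hb
    have d1 : (p : ℤ) ∣ q + P := ⟨p ^ 2 * (x' ^ 3 + y' ^ 3 - 3 * x' * y' ^ 2), by rw [hx]; ring⟩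
    have d2 : (p : ℤ) ∣ P := by
      have : (p : ℤ) ^ 3 ∣ 4 * s ^ 3 := ⟨x' * y' * (x' - y'), by rw [← hxy4]; ring⟩
      have d4 : (p : ℤ) ∣ s := by
        by_contra hps
        have hh : IsCoprime ((p : ℤ) ^ 3) (s ^ 3) := by
          apply IsCoprime.pow
          exact (Prime.coprime_iff_not_dvd hp').mpr hps
        have hd := hh.dvd_of_dvd_mul_right this
        have h4 := Int.le_of_dvd (by norm_num) hd
        have h2 : (2 : ℤ) ≤ p := by exact_mod_cast hp.two_le
        nlinarith [pow_le_pow_left₀ (by norm_num) h2 3]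
      rw [hP', hs]
      exact (dvd_pow d4 (by norm_num)).mul_left 6
    have d3 : (p : ℤ) ∣ q := by have := dvd_sub d1 d2; simpa using this
    exact hp'.not_isUnit (hcPq.isUnit_of_dvd' d2 d3)
  have hcx : IsCoprime x (x - y) := by
    obtain ⟨u, v, huv⟩ := hcxy
    exact ⟨u + v, -v, by linarith⟩
  have hcy : IsCoprime y (x - y) := by
    obtain ⟨u, v, huv⟩ := hcxy
    exact ⟨u + v, u, by linarith⟩
  rcases Int.emod_two_eq_zero_or_one x with ex | ex
  · obtain ⟨e', f, g, he, hf, hg, hgs⟩ := four_cube_aux y (x - y) x s hcy hcxy.symm hcx.symm ex (by linarith)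
    exact hnz g hgs (ih _ (hlt g hgs) e' f g rfl (by rw [← he, ← hf, ← hg]; ring))
  · rcases Int.emod_two_eq_zero_or_one y with ey | ey
    · obtain ⟨e', f, g, he, hf, hg, hgs⟩ := four_cube_aux x (x - y) y s hcx hcxy hcy.symm ey (by linarith)
      exact hnz g hgs (ih _ (hlt g hgs) e' (-f) g rfl (by rw [← hg, Odd.neg_pow (by decide), ← he, ← hf]; ring))
    · obtain ⟨e', f, g, he, hf, hg, hgs⟩ := four_cube_aux x y (x - y) s hcxy hcx hcy (by omega) (by linarith)
      exact hnz g hgs (ih _ (hlt g hgs) e' (-f) g rfl (by rw [← hg, Odd.neg_pow (by decide), ← he, ← hf]; ring))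

/-- `y² = x³ - 108` has no rational point. -/
theorem no_point_A (x y : ℚ) (h : y ^ 2 = x ^ 3 - 108) : False := by
  have hx : x ≠ 0 := by rintro rfl; nlinarith [sq_nonneg y]
  have key : ((18 + y) / (3 * x)) ^ 3 + ((18 - y) / (3 * x)) ^ 3 = 4 := by
    field_simp
    linear_combination (108) * h
  generalize (18 + y) / (3 * x) = u at key
  generalize (18 - y) / (3 * x) = v at key
  have hu : (u.den : ℚ) ≠ 0 := by exact_mod_cast u.den_nz
  have hv : (v.den : ℚ) ≠ 0 := by exact_mod_cast v.den_nz
  have k2 : ((u.num * v.den : ℤ) : ℚ) ^ 3 + ((v.num * u.den : ℤ) : ℚ) ^ 3 = 4 * ((u.den * v.den : ℤ) : ℚ) ^ 3 := by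
    rw [← Rat.num_div_den u, ← Rat.num_div_den v] at key
    field_simp at key
    push_cast
    linear_combination key
  have k3 := no_cubes_four _ (u.num * v.den) (v.num * u.den) (u.den * v.den) rfl (by exact_mod_cast k2)
  have : (u.den : ℤ) * v.den ≠ 0 := by exact_mod_cast mul_ne_zero u.den_nz v.den_nz
  exact this k3



lemma prime_five_int : Prime (5 : ℤ) := by norm_num

lemma int_coprime_of_prime (a b : ℤ) (h : ∀ p : ℕ, p.Prime → (p : ℤ) ∣ a → (p : ℤ) ∣ b → False) :
    IsCoprime a b := by
  rw [Int.isCoprime_iff_nat_coprime]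
  by_contra hcon
  rw [Nat.Prime.not_coprime_iff_dvd] at hcon
  obtain ⟨p, hp, ha, hb⟩ := hcon
  rw [← Int.natCast_dvd] at ha hb
  exact h p hp ha hb

lemma fourth_aux (U V k : ℤ) (hk : k ≠ 0) (hc : IsCoprime U V) (h : U * V = 5 * k ^ 4) (hpos : 0 < U + V) :
    ∃ g h : ℤ, IsCoprime g h ∧ k ^ 2 = g ^ 2 * h ^ 2 ∧ U + V = 5 * g ^ 4 + h ^ 4 := by
  have main : ∀ U V : ℤ, IsCoprime U V → U * V = 5 * k ^ 4 → 0 < U + V → (5 : ℤ) ∣ U →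
      ∃ g h : ℤ, IsCoprime g h ∧ k ^ 2 = g ^ 2 * h ^ 2 ∧ U + V = 5 * g ^ 4 + h ^ 4 := by
    rintro U V hc h hpos ⟨U', rfl⟩
    have h' : U' * V = k ^ 4 := by linarith
    have hc' : IsCoprime U' V := hc.of_isCoprime_of_dvd_left (Dvd.intro_left _ rfl)
    obtain ⟨g, hg⟩ := exists_associated_pow_of_mul_eq_pow' hc' h'
    obtain ⟨l, hl⟩ := exists_associated_pow_of_mul_eq_pow' hc'.symm (by rw [mul_comm]; exact h')
    rw [Int.associated_iff] at hg hl
    have hk4 : 0 < k ^ 4 := by positivity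
    have g4 : 0 ≤ g ^ 4 := by positivity
    have l4 : 0 ≤ l ^ 4 := by positivity
    have hU : U' = g ^ 4 ∧ V = l ^ 4 := by
      rcases hg with hg | hg <;> rcases hl with hl | hl
      · exact ⟨hg.symm, hl.symm⟩
      · nlinarith
      · nlinarith
      · exfalso; linarith
    obtain ⟨rfl, rfl⟩ := hU
    refine ⟨g, l, ?_, ?_, rfl⟩
    · exact (IsCoprime.pow_iff (by norm_num) (by norm_num)).mp hc'
    · have : (k ^ 2) ^ 2 = (g ^ 2 * l ^ 2) ^ 2 := by linarith
      exact (sq_eq_sq₀ (by positivity) (by positivity)).mp this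
  have h5 : (5 : ℤ) ∣ U * V := Dvd.intro _ h.symm
  rcases (Int.Prime.dvd_mul' (by norm_num : Nat.Prime 5) h5) with h5 | h5
  · exact main U V hc h hpos h5
  · obtain ⟨g, l, a, b, c⟩ := main V U hc.symm (by linarith) (by linarith) h5
    exact ⟨g, l, a, b, by linarith⟩

lemma sq_pos_of_gcd {m n b : ℤ} (hmn : m.gcd n = 1) (h : m * n = b ^ 2) (hb : b ≠ 0) (hpos : 0 ≤ m) :
    ∃ p q : ℤ, m = p ^ 2 ∧ n = q ^ 2 := by
  have hb2 : 0 < b ^ 2 := by positivity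
  obtain ⟨p, hp⟩ := Int.sq_of_gcd_eq_one hmn h
  obtain ⟨q, hq⟩ := Int.sq_of_gcd_eq_one (by rwa [Int.gcd_comm]) (by rw [mul_comm]; exact h)
  have p2 : 0 ≤ p ^ 2 := by positivity
  have q2 : 0 ≤ q ^ 2 := by positivity
  have m0 : m ≠ 0 := by rintro rfl; rw [zero_mul] at h; exact hb2.ne h
  have hm : m = p ^ 2 := by
    rcases hp with hp | hp
    · exact hp
    · exfalso; apply m0; linarith
  refine ⟨p, q, hm, ?_⟩
  rcases hq with hq | hq
  · exact hq
  · nlinarith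

lemma both_one {x y : ℤ} (hx : 0 < x) (hy : 0 < y) (h : x * y ≤ 1) : x = 1 ∧ y = 1 := by
  constructor <;> nlinarith

set_option maxHeartbeats 2000000 in
theorem quartic_descent : ∀ (n : ℕ) (a b w : ℤ), b.natAbs = n → IsCoprime a b →
    a ^ 4 - 2 * a ^ 2 * b ^ 2 + 5 * b ^ 4 = w ^ 2 → b = 0 ∨ a ^ 2 = b ^ 2 := by
  intro n
  induction n using Nat.strong_induction_on with
  | _ n ih =>
  intro a b w hn hcop h
  by_cases hb : b = 0
  · exact Or.inl hb
  right
  have hb2 : 0 < b ^ 2 := by positivity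
  have hw : w ≠ 0 := by
    rintro rfl
    nlinarith [sq_nonneg (a ^ 2 - b ^ 2), mul_pos hb2 hb2]
  have hlt : ∀ g : ℤ, g ^ 2 < b ^ 2 → g.natAbs < n := by
    intro g hg; rw [← hn]; exact Int.natAbs_lt_iff_sq_lt.mpr hg
  rcases Int.even_or_odd' b with ⟨b', hb' | hb'⟩ <;> rcases Int.even_or_odd' a with ⟨a', ha' | ha'⟩
  · exfalso
    have := hcop.isUnit_of_dvd' (show (2 : ℤ) ∣ a by omega) (show (2 : ℤ) ∣ b by omega)
    rw [Int.isUnit_iff] at this; omega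
  · -- b even, a odd
    exfalso
    have hxo : (a ^ 2 - b ^ 2) % 2 = 1 := by
      rw [ha', hb']; ring_nf; omega
    have hpt : PythagoreanTriple (a ^ 2 - b ^ 2) (2 * b ^ 2) |w| := by
      unfold PythagoreanTriple; rw [abs_mul_abs_self]; linarith
    have hc2 : IsCoprime (a ^ 2 - b ^ 2) (2 * b ^ 2) := by
      apply IsCoprime.mul_right
      · exact ((Prime.coprime_iff_not_dvd Int.prime_two).mpr (by omega)).symm
      · have := (hcop.pow (m := 2) (n := 2)).add_mul_left_left (-1)
        have e : a ^ 2 + b ^ 2 * (-1) = a ^ 2 - b ^ 2 := by ring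
        rwa [e] at this
    obtain ⟨m, n', h1, h2, -, h4, h5, h6⟩ := PythagoreanTriple.coprime_classification' hpt
      (Int.isCoprime_iff_gcd_eq_one.mp hc2) hxo (abs_pos.mpr hw)
    obtain ⟨p, q, rfl, rfl⟩ := sq_pos_of_gcd h4 (by linarith : m * n' = b ^ 2) hb h6
    have hpq : IsCoprime p q :=
      (IsCoprime.pow_iff (by norm_num) (by norm_num)).mp (Int.isCoprime_iff_gcd_eq_one.mpr h4)
    have hbpq : b ^ 2 = p ^ 2 * q ^ 2 := by linarith
    have haa : a ^ 2 = p ^ 4 + p ^ 2 * q ^ 2 - q ^ 4 := by linarith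
    have hpar : p % 2 = 1 ∧ q % 2 = 0 := by
      rcases h5 with ⟨x, y⟩ | ⟨x, y⟩
      · exfalso
        obtain ⟨p', rfl⟩ : (2 : ℤ) ∣ p := Int.prime_two.dvd_of_dvd_pow (n := 2) (by omega)
        have hqo : q % 2 = 1 := by
          rcases Int.emod_two_eq_zero_or_one q with z | z
          · simp [pow_two, Int.mul_emod, z] at y
          · exact z
        obtain ⟨q', rfl⟩ : ∃ q', q = 2 * q' + 1 := ⟨q / 2, by omega⟩
        rw [ha'] at haa
        ring_nf at haa
        omega
      · constructor
        · rcases Int.emod_two_eq_zero_or_one p with z | z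
          · simp [pow_two, Int.mul_emod, z] at x
          · exact z
        · have : (2 : ℤ) ∣ q := Int.prime_two.dvd_of_dvd_pow (n := 2) (by omega)
          omega
    obtain ⟨hp1, hq1⟩ := hpar
    obtain ⟨k, rfl⟩ : (2 : ℤ) ∣ q := by omega
    have hk0 : k ≠ 0 := by rintro rfl; simp at hbpq; exact hb hbpq
    have hp0 : p ≠ 0 := by rintro rfl; simp at hp1
    obtain ⟨p', hp'⟩ : ∃ p', p = 2 * p' + 1 := ⟨p / 2, by omega⟩
    obtain ⟨U, hU⟩ : ∃ U, p ^ 2 + 2 * k ^ 2 - a = 2 * U := by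
      refine ⟨2 * p' ^ 2 + 2 * p' + k ^ 2 - a', ?_⟩
      rw [hp', ha']; ring
    have hV : p ^ 2 + 2 * k ^ 2 + a = 2 * (U + a) := by linarith
    have hUV : U * (U + a) = 5 * k ^ 4 := by
      have : (2 * U) * (2 * (U + a)) = 20 * k ^ 4 := by rw [← hU, ← hV]; linear_combination (-1) * haa
      linarith
    have hcUV : IsCoprime U (U + a) := by
      apply int_coprime_of_prime
      intro l hl d1 d2
      have hl' := Nat.prime_iff_prime_int.mp hl
      have d3 : (l : ℤ) ∣ a := by have := dvd_sub d2 d1; simpa using this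
      have d4 : (l : ℤ) ∣ p ^ 2 + 2 * k ^ 2 := by
        have : p ^ 2 + 2 * k ^ 2 = U + (U + a) := by linarith
        rw [this]; exact dvd_add d1 d2
      have d5 : (l : ℤ) * l ∣ 5 * k ^ 4 := by rw [← hUV]; exact mul_dvd_mul d1 d2
      have d6 : ¬ (l : ℤ) ∣ k := by
        intro d6
        have : (l : ℤ) ∣ p ^ 2 := by
          have := dvd_sub d4 ((dvd_pow d6 (two_ne_zero)).mul_left 2); simpa using this
        exact hl'.not_isUnit (hpq.isUnit_of_dvd' (hl'.dvd_of_dvd_pow this) (d6.mul_left 2))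
      have hcl : IsCoprime ((l : ℤ) * l) (k ^ 4) := by
        have := (Prime.coprime_iff_not_dvd hl').mpr d6
        exact (this.mul_left this).pow_right
      have d7 := hcl.dvd_of_dvd_mul_right d5
      have hl5 : (l * l) ∣ 5 := by exact_mod_cast d7
      have : l ∣ 5 := (Dvd.intro _ rfl).trans hl5
      rw [Nat.dvd_prime (by norm_num)] at this
      rcases this with rfl | rfl <;> revert hl5 hl <;> norm_num
    obtain ⟨g, l, hgl, hk, hs⟩ := fourth_aux U (U + a) k hk0 hcUV hUV (by
      have : U + (U + a) = p ^ 2 + 2 * k ^ 2 := by linarith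
      rw [this]; positivity)
    have hg0 : g ≠ 0 := by rintro rfl; simp at hk; exact hk0 hk
    have hl0 : l ≠ 0 := by rintro rfl; simp at hk; exact hk0 hk
    have hlt' : g ^ 2 < b ^ 2 := by
      have e : b ^ 2 = 4 * p ^ 2 * l ^ 2 * g ^ 2 := by rw [hbpq]; linear_combination (4 * p ^ 2) * hk
      have a1 : 0 < p ^ 2 := by positivity
      have a2 : 0 < l ^ 2 := by positivity
      have a3 : 0 < g ^ 2 := by positivity
      have a4 : 0 < p ^ 2 * l ^ 2 := by positivity
      nlinarith
    rcases ih _ (hlt g hlt') l g p rfl hgl.symm (by linear_combination (2:ℤ) * hk - hs - hU) with r | r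
    · exact hg0 r
    · have : p ^ 2 = 4 * g ^ 4 := by
        have : p ^ 2 = l ^ 4 - 2 * l ^ 2 * g ^ 2 + 5 * g ^ 4 := by linear_combination hU + hs - 2 * hk
        rw [this]; linear_combination (l ^ 2 - g ^ 2) * r
      rw [hp'] at this
      ring_nf at this
      omega
  · -- a even, b odd
    exfalso
    have h8 := congrArg (Int.cast : ℤ → ZMod 8) h
    rw [ha', hb'] at h8
    push_cast at h8
    have key : ∀ a b w : ZMod 8, (2 * a) ^ 4 - 2 * (2 * a) ^ 2 * (2 * b + 1) ^ 2 + 5 * (2 * b + 1) ^ 4 ≠ w ^ 2 := by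
      decide
    exact key _ _ _ h8
  · -- both odd
    have hwe : (2 : ℤ) ∣ w := by
      apply Int.prime_two.dvd_of_dvd_pow (n := 2)
      rw [← h, ha', hb']
      apply Int.dvd_of_emod_eq_zero; ring_nf; omega
    obtain ⟨w', rfl⟩ := hwe
    obtain ⟨u, hu⟩ : ∃ u, a ^ 2 - b ^ 2 = 2 * u := ⟨2 * a' ^ 2 + 2 * a' - 2 * b' ^ 2 - 2 * b', by rw [ha', hb']; ring⟩
    have hpt : PythagoreanTriple (b ^ 2) u |w'| := by
      unfold PythagoreanTriple; rw [abs_mul_abs_self]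
      have e : a ^ 2 = b ^ 2 + 2 * u := by linarith
      have : (a ^ 2) ^ 2 - 2 * a ^ 2 * b ^ 2 + 5 * b ^ 4 = (2 * w') ^ 2 := by linarith
      rw [e] at this; linarith
    have hc2 : IsCoprime (b ^ 2) u := by
      have := (hcop.symm.pow (m := 2) (n := 2)).add_mul_left_right (-1)
      have e : a ^ 2 + b ^ 2 * (-1) = 2 * u := by linarith
      rw [e] at this
      exact this.of_isCoprime_of_dvd_right (Dvd.intro_left _ rfl)
    have hw' : w' ≠ 0 := by rintro rfl; simp at hw
    have hbo : b ^ 2 % 2 = 1 := by rw [hb']; ring_nf; omega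
    obtain ⟨m, n', h1, h2, -, h4, h5, h6⟩ := PythagoreanTriple.coprime_classification' hpt
      (Int.isCoprime_iff_gcd_eq_one.mp hc2) hbo (abs_pos.mpr hw')
    have hmn := Int.isCoprime_iff_gcd_eq_one.mpr h4
    have c1 : IsCoprime (m - n') (m + n') := by
      apply int_coprime_of_prime
      intro l hl d1 d2
      have hl' := Nat.prime_iff_prime_int.mp hl
      have o : (m - n') % 2 = 1 := by omega
      have l2 : ¬ (l : ℤ) ∣ 2 := by
        intro l2
        have : l ∣ 2 := by exact_mod_cast l2
        rw [Nat.dvd_prime (by norm_num)] at this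
        rcases this with rfl | rfl
        · exact Nat.not_prime_one hl
        · omega
      have d3 : (l : ℤ) ∣ 2 * m := by
        have := dvd_add d1 d2
        have e : m - n' + (m + n') = 2 * m := by ring
        rwa [e] at this
      have d4 : (l : ℤ) ∣ 2 * n' := by
        have := dvd_sub d2 d1
        have e : m + n' - (m - n') = 2 * n' := by ring
        rwa [e] at this
      exact hl'.not_isUnit (hmn.isUnit_of_dvd' ((hl'.dvd_or_dvd d3).resolve_left l2)
        ((hl'.dvd_or_dvd d4).resolve_left l2))
    have hprod : (m - n') * (m + n') = b ^ 2 := by linarith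
    obtain ⟨e, f, he, hf⟩ := sq_pos_of_gcd (Int.isCoprime_iff_gcd_eq_one.mp c1) hprod hb (by
      by_contra hneg
      push Not at hneg
      nlinarith)
    rw [he, hf] at c1
    have hef : IsCoprime e f := (IsCoprime.pow_iff (by norm_num) (by norm_num)).mp c1
    have hbef : b ^ 2 = e ^ 2 * f ^ 2 := by rw [← hprod, he, hf]
    have haa : a ^ 2 = f ^ 4 + e ^ 2 * f ^ 2 - e ^ 4 := by
      have : a ^ 2 = b ^ 2 + 4 * (m * n') := by linarith
      rw [this, hbef]
      have e1 : (m + n') ^ 2 - (m - n') ^ 2 = 4 * (m * n') := by ring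
      rw [← e1, he, hf]; ring
    have he1 : e % 2 = 1 := by
      rcases Int.emod_two_eq_zero_or_one e with z | z
      · have : e ^ 2 % 2 = 1 := by rw [← he]; omega
        simp [pow_two, Int.mul_emod, z] at this
      · exact z
    have he0 : e ≠ 0 := by rintro rfl; simp at he1
    have hf0 : f ≠ 0 := by rintro rfl; simp at hbef; exact hb hbef
    have hUV : (2 * f ^ 2 + e ^ 2 - 2 * a) * (2 * f ^ 2 + e ^ 2 + 2 * a) = 5 * e ^ 4 := by
      linear_combination (-4) * haa
    have hcUV : IsCoprime (2 * f ^ 2 + e ^ 2 - 2 * a) (2 * f ^ 2 + e ^ 2 + 2 * a) := by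
      apply int_coprime_of_prime
      intro l hl d1 d2
      have hl' := Nat.prime_iff_prime_int.mp hl
      have l2 : ¬ (l : ℤ) ∣ 2 := by
        intro l2
        have : l ∣ 2 := by exact_mod_cast l2
        rw [Nat.dvd_prime (by norm_num)] at this
        rcases this with rfl | rfl
        · exact Nat.not_prime_one hl
        · obtain ⟨e', rfl⟩ : ∃ e', e = 2 * e' + 1 := ⟨e / 2, by omega⟩
          ring_nf at d1
          omega
      have d4 : (l : ℤ) ∣ 2 * f ^ 2 + e ^ 2 := by
        have : (l : ℤ) ∣ 2 * (2 * f ^ 2 + e ^ 2) := by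
          have := dvd_add d1 d2
          have e : 2 * f ^ 2 + e ^ 2 - 2 * a + (2 * f ^ 2 + e ^ 2 + 2 * a) = 2 * (2 * f ^ 2 + e ^ 2) := by ring
          rwa [e] at this
        exact (hl'.dvd_or_dvd this).resolve_left l2
      have d5 : (l : ℤ) * l ∣ 5 * e ^ 4 := by rw [← hUV]; exact mul_dvd_mul d1 d2
      have d6 : ¬ (l : ℤ) ∣ e := by
        intro d6
        have : (l : ℤ) ∣ 2 * f ^ 2 := by
          have := dvd_sub d4 (dvd_pow d6 (two_ne_zero)); simpa using this
        exact hl'.not_isUnit (hef.isUnit_of_dvd' d6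
          (hl'.dvd_of_dvd_pow ((hl'.dvd_or_dvd this).resolve_left l2)))
      have hcl : IsCoprime ((l : ℤ) * l) (e ^ 4) := by
        have := (Prime.coprime_iff_not_dvd hl').mpr d6
        exact (this.mul_left this).pow_right
      have d7 := hcl.dvd_of_dvd_mul_right d5
      have hl5 : (l * l) ∣ 5 := by exact_mod_cast d7
      have : l ∣ 5 := (Dvd.intro _ rfl).trans hl5
      rw [Nat.dvd_prime (by norm_num)] at this
      rcases this with rfl | rfl <;> revert hl5 hl <;> norm_num
    obtain ⟨g, l, hgl, hk, hs⟩ := fourth_aux _ _ e he0 hcUV hUV (by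
      have : (2 * f ^ 2 + e ^ 2 - 2 * a) + (2 * f ^ 2 + e ^ 2 + 2 * a) = 4 * f ^ 2 + 2 * e ^ 2 := by ring
      rw [this]; positivity)
    have hg0 : g ≠ 0 := by rintro rfl; simp at hk; exact he0 hk
    have hl0 : l ≠ 0 := by rintro rfl; simp at hk; exact he0 hk
    have hnew : l ^ 4 - 2 * l ^ 2 * g ^ 2 + 5 * g ^ 4 = (2 * f) ^ 2 := by
      linear_combination (2:ℤ) * hk - hs
    have hg2 : 0 < g ^ 2 := by positivity
    have hl2 : 0 < l ^ 2 := by positivity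
    have hf2 : 0 < f ^ 2 := by positivity
    have fin : g ^ 2 = 1 → l ^ 2 = 1 → a ^ 2 = b ^ 2 := by
      intro x y
      have z : f ^ 2 = 1 := by
        have : 4 * f ^ 2 = (l ^ 2) ^ 2 - 2 * l ^ 2 * g ^ 2 + 5 * (g ^ 2) ^ 2 := by linarith
        rw [x, y] at this; linarith
      have ze : e ^ 2 = 1 := by rw [hk, x, y]; norm_num
      rw [haa, hbef]
      have : f ^ 4 + e ^ 2 * f ^ 2 - e ^ 4 = (f ^ 2) ^ 2 + e ^ 2 * f ^ 2 - (e ^ 2) ^ 2 := by ring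
      rw [this, z, ze]; norm_num
    have hbe : b ^ 2 = (l ^ 2 * f ^ 2) * g ^ 2 := by rw [hbef, hk]; ring
    by_cases hlt' : g ^ 2 < b ^ 2
    · rcases ih _ (hlt g hlt') l g (2 * f) rfl hgl.symm hnew with r | r
      · exact absurd r hg0
      · have hc' : IsCoprime (g ^ 2) (l ^ 2) := hgl.pow
        rw [r] at hc'
        have := isCoprime_self.mp hc'
        rw [Int.isUnit_iff] at this
        have hg1 : g ^ 2 = 1 := by omega
        exact fin hg1 (by rw [r, hg1])
    · have hlf : l ^ 2 * f ^ 2 ≤ 1 := by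
        by_contra hcon
        push Not at hcon
        apply hlt'; rw [hbe]; nlinarith
      obtain ⟨hl1, hf1⟩ := both_one hl2 hf2 hlf

      have : (g ^ 2 - 1) * (5 * g ^ 2 + 3) = 0 := by
        have : (l ^ 2) ^ 2 - 2 * l ^ 2 * g ^ 2 + 5 * g ^ 4 = 4 * f ^ 2 := by linarith
        rw [hl1, hf1] at this; linarith
      rcases mul_eq_zero.mp this with z | z
      · exact fin (by linarith) hl1
      · exfalso; linarith

/-- rational points on `v² = r (r² - 2 r + 5)`. -/
theorem points_B (r v : ℚ) (h : v ^ 2 = r * (r ^ 2 - 2 * r + 5)) : r = 0 ∨ r = 1 ∨ r = 5 := by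
  by_cases hr0 : r = 0
  · exact Or.inl hr0
  right
  set X := r.num with hX
  set Y : ℤ := (r.den : ℤ) with hY
  have hY0 : 0 < Y := by rw [hY]; exact_mod_cast r.pos
  have hYq : (Y : ℚ) ≠ 0 := by exact_mod_cast hY0.ne'
  have hr : r = X / Y := by rw [hX, hY]; push_cast; exact (Rat.num_div_den r).symm
  have hX0 : X ≠ 0 := by rw [hX]; simpa using hr0
  have hcop : IsCoprime X Y := by
    rw [Int.isCoprime_iff_nat_coprime]; simpa [hX, hY] using r.reduced
  obtain ⟨S, hS⟩ : ∃ S : ℤ, S ^ 2 = X * Y * (X ^ 2 - 2 * X * Y + 5 * Y ^ 2) := by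
    have : ((X * Y * (X ^ 2 - 2 * X * Y + 5 * Y ^ 2) : ℤ) : ℚ) = (v * Y ^ 2) ^ 2 := by
      push_cast
      rw [mul_pow, h, hr]; field_simp
    have hsq : IsSquare (((X * Y * (X ^ 2 - 2 * X * Y + 5 * Y ^ 2) : ℤ)) : ℚ) := ⟨v * Y ^ 2, by rw [this]; ring⟩
    rw [Rat.isSquare_intCast_iff] at hsq
    obtain ⟨S, hS⟩ := hsq
    exact ⟨S, by rw [hS]; ring⟩
  have hqpos : 0 < X ^ 2 - 2 * X * Y + 5 * Y ^ 2 := by nlinarith [sq_nonneg (X - Y), sq_nonneg Y]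
  have hS0 : S ≠ 0 := by
    rintro rfl
    have : X * Y * (X ^ 2 - 2 * X * Y + 5 * Y ^ 2) ≠ 0 := mul_ne_zero (mul_ne_zero hX0 hY0.ne') hqpos.ne'
    apply this; rw [← hS]; norm_num
  have hXpos : 0 < X := by
    by_contra hcon
    have : X < 0 := lt_of_le_of_ne (not_lt.mp hcon) hX0
    have h1 : 0 < S ^ 2 := by positivity
    rw [hS] at h1
    have h2 : X * Y < 0 := by nlinarith
    nlinarith
  have c1 : IsCoprime Y (X * (X ^ 2 - 2 * X * Y + 5 * Y ^ 2)) := by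
    apply hcop.symm.mul_right
    have := (hcop.symm.pow_right (n := 2)).add_mul_left_right (-2 * X + 5 * Y)
    have e : X ^ 2 + Y * (-2 * X + 5 * Y) = X ^ 2 - 2 * X * Y + 5 * Y ^ 2 := by ring
    rwa [e] at this
  obtain ⟨b, s, hb, hs⟩ := sq_pos_of_gcd (Int.isCoprime_iff_gcd_eq_one.mp c1)
    (by rw [hS]; ring : Y * (X * (X ^ 2 - 2 * X * Y + 5 * Y ^ 2)) = S ^ 2) hS0 hY0.le
  have hs0 : s ≠ 0 := by
    rintro rfl
    have : X * (X ^ 2 - 2 * X * Y + 5 * Y ^ 2) ≠ 0 := mul_ne_zero hX0 hqpos.ne'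
    apply this; rw [hs]; norm_num
  by_cases h5 : (5 : ℤ) ∣ X
  · right
    obtain ⟨X1, hX1⟩ := h5
    have hX1c : IsCoprime X1 Y := by
      rw [hX1] at hcop; exact hcop.of_isCoprime_of_dvd_left (Dvd.intro_left _ rfl)
    have h5s : (5 : ℤ) ∣ s := prime_five_int.dvd_of_dvd_pow (n := 2) (by rw [← hs, hX1, mul_assoc]; exact Dvd.intro _ rfl)
    obtain ⟨s1, rfl⟩ := h5s
    have e : X1 * (5 * X1 ^ 2 - 2 * X1 * Y + Y ^ 2) = s1 ^ 2 := by
      rw [hX1] at hs; linarith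
    have c2 : IsCoprime X1 (5 * X1 ^ 2 - 2 * X1 * Y + Y ^ 2) := by
      have := (hX1c.pow_right (n := 2)).add_mul_left_right (-2 * Y + 5 * X1)
      have e : Y ^ 2 + X1 * (-2 * Y + 5 * X1) = 5 * X1 ^ 2 - 2 * X1 * Y + Y ^ 2 := by ring
      rwa [e] at this
    obtain ⟨a, w, ha, hw⟩ := sq_pos_of_gcd (Int.isCoprime_iff_gcd_eq_one.mp c2) e
      (by rintro rfl; simp at hs0) (by omega)
    rw [ha, hb] at hX1c
    rcases quartic_descent _ b a w rfl ((IsCoprime.pow_iff (by norm_num) (by norm_num)).mp hX1c).symm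
      (by rw [ha, hb] at hw; linarith) with z | z
    · exfalso; rw [z] at ha; apply hX0; rw [hX1, ha]; norm_num
    · rw [hr, hX1, ha, hb, z]
      rw [hb, z] at hYq
      push_cast at hYq ⊢
      have ha0 : (a : ℚ) ≠ 0 := by
        intro h0; apply hYq; rw [h0]; norm_num
      field_simp
  · left
    have c2 : IsCoprime X (X ^ 2 - 2 * X * Y + 5 * Y ^ 2) := by
      have c5 : IsCoprime X 5 := ((Prime.coprime_iff_not_dvd prime_five_int).mpr h5).symm
      have := (c5.mul_right (hcop.pow_right (n := 2))).add_mul_left_right (X - 2 * Y)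
      have e : 5 * Y ^ 2 + X * (X - 2 * Y) = X ^ 2 - 2 * X * Y + 5 * Y ^ 2 := by ring
      rwa [e] at this
    obtain ⟨a, w, ha, hw⟩ := sq_pos_of_gcd (Int.isCoprime_iff_gcd_eq_one.mp c2) hs hs0 hXpos.le
    rw [ha, hb] at hcop
    rcases quartic_descent _ a b w rfl ((IsCoprime.pow_iff (by norm_num) (by norm_num)).mp hcop)
      (by rw [ha, hb] at hw; linarith) with z | z
    · exfalso; rw [z] at hb; simp at hb; omega
    · rw [hr, ha, hb, z]
      rw [hb] at hYq
      push_cast at hYq ⊢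
      have ha0 : (b : ℚ) ≠ 0 := by
        intro h0; apply hYq; rw [h0]; norm_num
      field_simp



lemma jacobi_ne (n : ℕ) (D u v : ℤ) (hc : IsCoprime v (n : ℤ)) (h : (n : ℤ) ∣ D * u ^ 2 - v ^ 2) :
    jacobiSym D n ≠ -1 := by
  intro hD
  have h1 : jacobiSym (D * u ^ 2) n = jacobiSym (v ^ 2) n := by
    apply jacobiSym.mod_left'
    exact (Int.emod_emod_of_dvd _ (dvd_refl _)).symm.trans (by
      rw [Int.emod_emod_of_dvd _ (dvd_refl _)]
      exact Int.emod_eq_emod_iff_emod_sub_eq_zero.mpr (Int.emod_eq_zero_of_dvd h))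
  rw [jacobiSym.mul_left, jacobiSym.pow_left, jacobiSym.pow_left,
    jacobiSym.sq_one (Int.isCoprime_iff_gcd_eq_one.mp hc), hD] at h1
  nlinarith [sq_nonneg (jacobiSym u n)]

lemma jacobi_ten (n : ℕ) (h : n % 40 = 11 ∨ n % 40 = 19 ∨ n % 40 = 17 ∨ n % 40 = 33) :
    jacobiSym 10 n = -1 := by
  rw [jacobiSym.mod_right 10 (Nat.odd_iff.mpr (by omega))]
  have : 4 * (10 : ℤ).natAbs = 40 := by norm_num
  rw [this]
  rcases h with h | h | h | h <;> rw [h] <;> norm_num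

lemma jacobi_fifteen (n : ℕ) (h : n % 60 = 19 ∨ n % 60 = 31 ∨ n % 60 = 41 ∨ n % 60 = 29) :
    jacobiSym 15 n = -1 := by
  rw [jacobiSym.mod_right 15 (Nat.odd_iff.mpr (by omega))]
  have : 4 * (15 : ℤ).natAbs = 60 := by norm_num
  rw [this]
  rcases h with h | h | h | h <;> rw [h] <;> norm_num

lemma sq_mod_eight_of_odd (z : ℤ) (h : z % 2 = 1) : z ^ 2 % 8 = 1 := by
  obtain ⟨k, rfl⟩ : ∃ k, z = 2 * k + 1 := ⟨z / 2, by omega⟩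
  rcases Int.even_or_odd' k with ⟨l, rfl | rfl⟩ <;> ring_nf <;> omega

lemma coprime_lin (X Z n c : ℤ) (e : ℤ) (hc : IsCoprime X Z) (h : e * n = X + c * Z) : IsCoprime Z n := by
  have h1 : IsCoprime Z (X + Z * c) := hc.symm.add_mul_left_right c
  rw [mul_comm Z c, ← h] at h1
  exact h1.of_mul_right_right

lemma five_ten (X Z B n : ℤ) (e : ℤ) (hc : IsCoprime X Z) (hn : 0 < n)
    (he : e * n = X + 2 * Z) (hQ : X ^ 2 + 8 * X * Z + 20 * Z ^ 2 = 5 * B ^ 2)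
    (hm : n % 40 = 11 ∨ n % 40 = 19 ∨ n % 40 = 17 ∨ n % 40 = 33) : False := by
  have hc' := coprime_lin X Z n 2 e hc he
  lift n to ℕ using hn.le
  refine jacobi_ne n 10 (5 * B) (20 * Z) ?_ ?_ (jacobi_ten n (by omega))
  · apply IsCoprime.mul_left _ hc'
    have h2 : IsCoprime (2 : ℤ) n := (Prime.coprime_iff_not_dvd Int.prime_two).mpr (by omega)
    have h5 : IsCoprime (5 : ℤ) n := (Prime.coprime_iff_not_dvd (by norm_num)).mpr (by omega)
    have : (20 : ℤ) = 2 * 2 * 5 := by norm_num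
    rw [this]
    exact (h2.mul_left h2).mul_left h5
  · have : 10 * (5 * B) ^ 2 - (20 * Z) ^ 2 = n * (e * 50 * (X + 6 * Z)) := by
      linear_combination (-50 : ℤ) * hQ - 50 * (X + 6 * Z) * he
    rw [this]; exact Dvd.intro _ rfl

lemma five_fifteen (X z A n : ℤ) (e : ℤ) (hc : IsCoprime X (z ^ 2))
    (he : e * n = X + (-6) * z ^ 2) (hP : X ^ 3 - 108 * (z ^ 2) ^ 3 = 5 * A ^ 2)
    (hm : n.natAbs % 60 = 19 ∨ n.natAbs % 60 = 31 ∨ n.natAbs % 60 = 41 ∨ n.natAbs % 60 = 29) : False := by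
  have hc' := coprime_lin X (z ^ 2) n (-6) e hc he
  have hc2 : IsCoprime z n := (IsCoprime.pow_left_iff (by norm_num)).mp hc'
  refine jacobi_ne n.natAbs 15 A (18 * z ^ 3) ?_ ?_ (jacobi_fifteen _ hm)
  · have h2 : IsCoprime (2 : ℤ) n := (Prime.coprime_iff_not_dvd Int.prime_two).mpr (by omega)
    have h3 : IsCoprime (3 : ℤ) n := (Prime.coprime_iff_not_dvd (by norm_num)).mpr (by omega)
    have : (18 : ℤ) = 2 * 3 * 3 := by norm_num
    have hh : IsCoprime (18 * z ^ 3) n := by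
      apply IsCoprime.mul_left _ hc2.pow_left
      rw [this]
      exact (h2.mul_left h3).mul_left h3
    rw [Int.natCast_natAbs]
    rcases abs_choice n with h | h <;> rw [h]
    · exact hh
    · exact hh.neg_right
  · rw [Int.natAbs_dvd]
    have : 15 * A ^ 2 - (18 * z ^ 3) ^ 2 = n * (e * 3 * (X ^ 2 + 6 * X * z ^ 2 + 36 * z ^ 4)) := by
      linear_combination (-3 : ℤ) * hP - 3 * (X ^ 2 + 6 * X * z ^ 2 + 36 * z ^ 4) * he
    rw [this]; exact Dvd.intro _ rfl

set_option maxHeartbeats 2000000 in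
lemma no_five (X z A B : ℤ) (hc : IsCoprime X (z ^ 2)) (hz : z ≠ 0)
    (hP : X ^ 3 - 108 * (z ^ 2) ^ 3 = 5 * A ^ 2)
    (hQ : X ^ 2 + 8 * X * z ^ 2 + 20 * (z ^ 2) ^ 2 = 5 * B ^ 2) : False := by
  have hz2 : 0 < z ^ 2 := by positivity
  -- mod 5
  have m5 : ∃ s, (z ^ 2 % 5 = 1 ∨ z ^ 2 % 5 = 4) ∧ X = 2 * z ^ 2 + 5 * s := by
    have key : ∀ x w : ZMod 5, x ^ 3 - 108 * (w ^ 2) ^ 3 = 0 → x ^ 2 + 8 * x * w ^ 2 + 20 * (w ^ 2) ^ 2 = 0 →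
      (x = 0 ∧ w ^ 2 = 0) ∨ ((w ^ 2 = 1 ∨ w ^ 2 = 4) ∧ x - 2 * w ^ 2 = 0) := by decide
    have h0 : (5 : ZMod 5) = 0 := by decide
    have e1 := congrArg (Int.cast : ℤ → ZMod 5) hP
    have e2 := congrArg (Int.cast : ℤ → ZMod 5) hQ
    push_cast at e1 e2
    rw [h0, zero_mul] at e1 e2
    rcases key _ _ e1 e2 with ⟨a, b⟩ | ⟨a, b⟩
    · exfalso
      have a' : ((X : ℤ) : ZMod 5) = 0 := a
      have b' : ((z ^ 2 : ℤ) : ZMod 5) = 0 := by push_cast; exact b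
      rw [ZMod.intCast_zmod_eq_zero_iff_dvd] at a' b'
      have := hc.isUnit_of_dvd' a' b'
      rw [Int.isUnit_iff] at this; revert this; norm_num
    · have b' : ((X - 2 * z ^ 2 : ℤ) : ZMod 5) = 0 := by push_cast; exact b
      rw [ZMod.intCast_zmod_eq_zero_iff_dvd] at b'
      obtain ⟨s, hs⟩ := b'
      refine ⟨s, ?_, by push_cast at hs; linarith⟩
      rcases a with a | a
      · left
        have : ((z ^ 2 - 1 : ℤ) : ZMod 5) = 0 := by push_cast; rw [a]; decide
        rw [ZMod.intCast_zmod_eq_zero_iff_dvd] at this; push_cast at this; omega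
      · right
        have : ((z ^ 2 - 4 : ℤ) : ZMod 5) = 0 := by push_cast; rw [a]; decide
        rw [ZMod.intCast_zmod_eq_zero_iff_dvd] at this; push_cast at this; omega
  obtain ⟨s, hz5, hs⟩ := m5
  have hX : 0 < X := by
    by_contra hcon
    push Not at hcon
    have : X ^ 3 ≤ 0 := by
      have := sq_nonneg X
      nlinarith
    have : 0 < (z ^ 2) ^ 3 := by positivity
    nlinarith [sq_nonneg A]
  have hzo : z % 2 = 1 := by
    rcases Int.emod_two_eq_zero_or_one z with h | h
    · exfalso
      have hXo : X % 2 = 1 := by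
        rcases Int.emod_two_eq_zero_or_one X with h' | h'
        · exfalso
          have := hc.isUnit_of_dvd' (show (2 : ℤ) ∣ X by omega)
            (dvd_pow (show (2 : ℤ) ∣ z by omega) (two_ne_zero))
          rw [Int.isUnit_iff] at this; omega
        · exact h'
      obtain ⟨w, rfl⟩ : ∃ w, z = 2 * w := ⟨z / 2, by omega⟩
      obtain ⟨y, rfl⟩ : ∃ w, X = 2 * w + 1 := ⟨X / 2, by omega⟩
      have key : ∀ y w b : ZMod 8, (2 * y + 1) ^ 2 + 8 * (2 * y + 1) * (2 * w) ^ 2 + 20 * ((2 * w) ^ 2) ^ 2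
        ≠ 5 * b ^ 2 := by decide
      have e2 := congrArg (Int.cast : ℤ → ZMod 8) hQ
      push_cast at e2
      exact key _ _ _ e2
    · exact h
  have hz8 := sq_mod_eight_of_odd z hzo
  rcases Int.emod_two_eq_zero_or_one X with hX2 | hX2
  · -- X even
    obtain ⟨X1, rfl⟩ : ∃ w, X = 2 * w := ⟨X / 2, by omega⟩
    obtain ⟨w, rfl⟩ : ∃ w, z = 2 * w + 1 := ⟨z / 2, by omega⟩
    have hA : (2 : ℤ) ∣ A := by
      have : (2 : ℤ) ∣ 5 * A ^ 2 := by
        rw [← hP]; exact ⟨4 * X1 ^ 3 - 54 * ((2 * w + 1) ^ 2) ^ 3, by ring⟩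
      exact Int.prime_two.dvd_of_dvd_pow (n := 2) (by omega)
    obtain ⟨A1, rfl⟩ := hA
    have hB : (2 : ℤ) ∣ B := by
      have : (2 : ℤ) ∣ 5 * B ^ 2 := by
        rw [← hQ]; exact ⟨2 * X1 ^ 2 + 8 * X1 * (2 * w + 1) ^ 2 + 10 * ((2 * w + 1) ^ 2) ^ 2, by ring⟩
      exact Int.prime_two.dvd_of_dvd_pow (n := 2) (by omega)
    obtain ⟨B1, rfl⟩ := hB
    have hP1 : 2 * X1 ^ 3 - 27 * ((2 * w + 1) ^ 2) ^ 3 = 5 * A1 ^ 2 := by linarith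
    have hQ1 : X1 ^ 2 + 4 * X1 * (2 * w + 1) ^ 2 + 5 * ((2 * w + 1) ^ 2) ^ 2 = 5 * B1 ^ 2 := by linarith
    have hX1 : X1 % 4 = 0 := by
      have key : ∀ x w a b : ZMod 4, 2 * x ^ 3 - 27 * ((2 * w + 1) ^ 2) ^ 3 = 5 * a ^ 2 →
          x ^ 2 + 4 * x * (2 * w + 1) ^ 2 + 5 * ((2 * w + 1) ^ 2) ^ 2 = 5 * b ^ 2 → x = 0 ∨ x = 2 := by decide
      have key2 : ∀ x w b : ZMod 8,
          (2 * x) ^ 2 + 4 * (2 * x) * (2 * w + 1) ^ 2 + 5 * ((2 * w + 1) ^ 2) ^ 2 = 5 * b ^ 2 → 4 * x = 0 := by decide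
      have e1 := congrArg (Int.cast : ℤ → ZMod 4) hP1
      have e2 := congrArg (Int.cast : ℤ → ZMod 4) hQ1
      push_cast at e1 e2
      have h2 : (2 : ℤ) ∣ X1 := by
        have : ((2 * X1 : ℤ) : ZMod 4) = 0 := by
          push_cast
          rcases key _ _ _ _ e1 e2 with h | h <;> rw [h] <;> decide
        rw [ZMod.intCast_zmod_eq_zero_iff_dvd] at this; push_cast at this; omega
      obtain ⟨X2, rfl⟩ := h2
      have e3 := congrArg (Int.cast : ℤ → ZMod 8) hQ1
      push_cast at e3
      have e4 := key2 _ _ _ e3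
      have : ((4 * X2 : ℤ) : ZMod 8) = 0 := by push_cast; exact e4
      rw [ZMod.intCast_zmod_eq_zero_iff_dvd] at this; push_cast at this; omega
    obtain ⟨k, rfl⟩ : ∃ k, X1 = 4 * k := ⟨X1 / 4, by omega⟩
    rcases Int.emod_two_eq_zero_or_one k with hk | hk
    · refine five_ten (2 * (4 * k)) ((2 * w + 1) ^ 2) (2 * B1) (4 * k + (2 * w + 1) ^ 2) 2 hc (add_pos (by linarith) hz2) (by ring) hQ ?_
      generalize (2 * w + 1) ^ 2 = Z at *
      omega
    · -- mod 3
      have m3 : (3 : ℤ) ∣ k ∧ ((2 * w + 1) ^ 2) % 3 = 1 := by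
        have key : ∀ x z a b : ZMod 3, (2 * (4 * x)) ^ 3 - 108 * (z ^ 2) ^ 3 = 5 * (2 * a) ^ 2 →
          (2 * (4 * x)) ^ 2 + 8 * (2 * (4 * x)) * z ^ 2 + 20 * (z ^ 2) ^ 2 = 5 * (2 * b) ^ 2 →
           x = 0 ∧ (z ^ 2 = 0 ∨ z ^ 2 = 1) := by decide
        have e1 := congrArg (Int.cast : ℤ → ZMod 3) hP
        have e2 := congrArg (Int.cast : ℤ → ZMod 3) hQ
        push_cast at e1 e2
        obtain ⟨h1, h2⟩ := key _ _ _ _ e1 e2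
        have h1' : ((k : ℤ) : ZMod 3) = 0 := h1
        rw [ZMod.intCast_zmod_eq_zero_iff_dvd] at h1'
        refine ⟨h1', ?_⟩
        rcases h2 with h2 | h2
        · exfalso
          have h2' : (((2 * w + 1) ^ 2 : ℤ) : ZMod 3) = 0 := by push_cast; exact h2
          rw [ZMod.intCast_zmod_eq_zero_iff_dvd] at h2'
          have := hc.isUnit_of_dvd' ((h1'.mul_left 4).mul_left 2) h2'
          rw [Int.isUnit_iff] at this; revert this; norm_num
        · have h2' : (((2 * w + 1) ^ 2 - 1 : ℤ) : ZMod 3) = 0 := by push_cast; rw [h2]; decide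
          rw [ZMod.intCast_zmod_eq_zero_iff_dvd] at h2'; push_cast at h2'; omega
      obtain ⟨⟨j, rfl⟩, hZ3⟩ := m3
      have hA3 : (3 : ℤ) ∣ A1 := by
        apply (by norm_num : Prime (3 : ℤ)).dvd_of_dvd_pow (n := 2)
        have : (3 : ℤ) ∣ 5 * A1 ^ 2 := by
          rw [← hP1]; exact ⟨2 * 9 * (4 * j) ^ 3 - 9 * ((2 * w + 1) ^ 2) ^ 3, by ring⟩
        omega
      obtain ⟨A2, rfl⟩ := hA3
      have hP2 : 6 * (4 * j) ^ 3 - 3 * ((2 * w + 1) ^ 2) ^ 3 = 5 * A2 ^ 2 := by linarith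
      have hA3 : (3 : ℤ) ∣ A2 := by
        apply (by norm_num : Prime (3 : ℤ)).dvd_of_dvd_pow (n := 2)
        have : (3 : ℤ) ∣ 5 * A2 ^ 2 := by
          rw [← hP2]; exact ⟨2 * (4 * j) ^ 3 - ((2 * w + 1) ^ 2) ^ 3, by ring⟩
        omega
      obtain ⟨A3, rfl⟩ := hA3
      have hj : j % 3 = 2 := by
        have e : 128 * j ^ 3 - ((2 * w + 1) ^ 2) ^ 3 = 15 * A3 ^ 2 := by linarith
        have key : ∀ x a : ZMod 3, 128 * x ^ 3 - 1 ^ 3 = 15 * a ^ 2 → x + 1 = 0 := by decide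
        have e1 := congrArg (Int.cast : ℤ → ZMod 3) e
        push_cast at e1
        have hZ : (2 * (w : ZMod 3) + 1) ^ 2 = 1 := by
          have : (((2 * w + 1) ^ 2 - 1 : ℤ) : ZMod 3) = 0 := by
            rw [ZMod.intCast_zmod_eq_zero_iff_dvd]; push_cast; omega
          push_cast at this
          exact sub_eq_zero.mp this
        rw [hZ] at e1
        have e2 := key _ _ e1
        have : ((j + 1 : ℤ) : ZMod 3) = 0 := by push_cast; exact e2
        rw [ZMod.intCast_zmod_eq_zero_iff_dvd] at this; push_cast at this; omega
      refine five_fifteen (2 * (4 * (3 * j))) (2 * w + 1) (2 * (3 * (3 * A3))) (4 * j - (2 * w + 1) ^ 2) 6 hc (by ring) hP ?_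
      clear hP hQ hP1 hQ1 hP2 hc
      generalize (2 * w + 1) ^ 2 = Z at *
      omega
  · -- X odd
    have hX8 : X % 8 = 1 := by
      obtain ⟨y, rfl⟩ : ∃ w, X = 2 * w + 1 := ⟨X / 2, by omega⟩
      obtain ⟨w, rfl⟩ : ∃ w, z = 2 * w + 1 := ⟨z / 2, by omega⟩
      have key : ∀ y w a : ZMod 8, (2 * y + 1) ^ 3 - 108 * ((2 * w + 1) ^ 2) ^ 3 = 5 * a ^ 2 → 2 * y = 0 := by decide
      have e1 := congrArg (Int.cast : ℤ → ZMod 8) hP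
      push_cast at e1
      have e2 := key _ _ _ e1
      have : ((2 * y : ℤ) : ZMod 8) = 0 := by push_cast; exact e2
      rw [ZMod.intCast_zmod_eq_zero_iff_dvd] at this; push_cast at this; omega
    refine five_ten X (z ^ 2) B (X + 2 * z ^ 2) 1 hc (by positivity) (by ring) hQ ?_
    generalize z ^ 2 = Z at *
    omega

lemma no_seventeen (X Z z d A B : ℤ) (hZ : Z = z ^ 2) (hc : IsCoprime X Z) (hd : Squarefree (17 * d))
    (hP : X ^ 3 - 108 * Z ^ 3 = 17 * d * A ^ 2)
    (hQ : X ^ 2 + 8 * X * Z + 20 * Z ^ 2 = 17 * d * B ^ 2) : False := by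
  have p17 : Prime (17 : ℤ) := by norm_num
  have h17Z : ¬ (17 : ℤ) ∣ Z := by
    intro h
    have : (17 : ℤ) ∣ X := by
      apply p17.dvd_of_dvd_pow (n := 2)
      have e : X ^ 2 = 17 * (d * B ^ 2) - Z * (8 * X + 20 * Z) := by linarith
      rw [e]
      exact dvd_sub (Dvd.intro _ rfl) (h.mul_right _)
    have := hc.isUnit_of_dvd' this h
    rw [Int.isUnit_iff] at this; omega
  have hd17 : ¬ (17 : ℤ) ∣ d := by
    rintro ⟨e, rfl⟩
    have := hd 17 ⟨e, by ring⟩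
    rw [Int.isUnit_iff] at this; omega
  obtain ⟨k, hk⟩ : (17 : ℤ) ∣ X - 5 * Z := by
    have key : ∀ x w : ZMod 17, x ^ 3 - 108 * w ^ 3 = 0 → x ^ 2 + 8 * x * w + 20 * w ^ 2 = 0 →
      x - 5 * w = 0 := by decide
    have h0 : (17 : ZMod 17) = 0 := by decide
    have e1 := congrArg (Int.cast : ℤ → ZMod 17) hP
    have e2 := congrArg (Int.cast : ℤ → ZMod 17) hQ
    push_cast at e1 e2
    rw [h0, zero_mul, zero_mul] at e1 e2
    have e3 := key _ _ e1 e2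
    have b' : ((X - 5 * Z : ℤ) : ZMod 17) = 0 := by push_cast; exact e3
    rw [ZMod.intCast_zmod_eq_zero_iff_dvd] at b'
    exact_mod_cast b'
  obtain rfl : X = 5 * Z + 17 * k := by linarith
  have h1 : Z ^ 3 + 75 * Z ^ 2 * k + 15 * 17 * Z * k ^ 2 + 289 * k ^ 3 = d * A ^ 2 := by linarith
  have h2 : 5 * Z ^ 2 + 18 * k * Z + 17 * k ^ 2 = d * B ^ 2 := by linarith
  have h3 : (17 : ℤ) ∣ d * (A ^ 2 - 7 * (z * B) ^ 2) := by
    refine ⟨15 * Z * k ^ 2 + 17 * k ^ 3 + 4 * Z ^ 2 * k - 7 * Z * k ^ 2 - 2 * Z ^ 3 - 7 * Z ^ 2 * k, ?_⟩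
    rw [hZ] at *
    linear_combination (-1) * h1 + 7 * z ^ 2 * h2
  have h4 := (p17.dvd_or_dvd h3).resolve_left hd17
  have key : ∀ u v : ZMod 17, u ^ 2 - 7 * v ^ 2 = 0 → u = 0 ∧ v = 0 := by decide
  have h5 : ((A ^ 2 - 7 * (z * B) ^ 2 : ℤ) : ZMod 17) = 0 := by
    rw [ZMod.intCast_zmod_eq_zero_iff_dvd]; exact_mod_cast h4
  push_cast at h5
  obtain ⟨hA, hB⟩ := key (A : ZMod 17) ((z : ZMod 17) * B) h5
  rw [ZMod.intCast_zmod_eq_zero_iff_dvd] at hA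
  have hB' : ((z * B : ℤ) : ZMod 17) = 0 := by push_cast; exact hB
  rw [ZMod.intCast_zmod_eq_zero_iff_dvd] at hB'
  push_cast at hA hB'
  have hB2 : (17 : ℤ) ∣ B := (p17.dvd_or_dvd hB').resolve_left (by
    intro h; apply h17Z; rw [hZ]; exact dvd_pow h two_ne_zero)
  obtain ⟨A', rfl⟩ := hA
  obtain ⟨B', rfl⟩ := hB2
  have h6 : (17 : ℤ) ∣ 20 * Z ^ 4 := by
    refine ⟨484 * Z ^ 2 * d * B' ^ 2 - (11 * (5 * Z + 17 * k) + 75 * Z) * (d * A' ^ 2 - ((5 * Z + 17 * k) - 8 * Z) * d * B' ^ 2), ?_⟩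
    have : 289 * (20 * Z ^ 4) = 289 * (17 * (484 * Z ^ 2 * d * B' ^ 2 - (11 * (5 * Z + 17 * k) + 75 * Z) * (d * A' ^ 2 - ((5 * Z + 17 * k) - 8 * Z) * d * B' ^ 2))) := by
      linear_combination (484 * Z ^ 2 + (11 * (5 * Z + 17 * k) + 75 * Z) * ((5 * Z + 17 * k) - 8 * Z)) * hQ - (11 * (5 * Z + 17 * k) + 75 * Z) * hP
    linarith
  rcases p17.dvd_or_dvd h6 with h | h
  · omega
  · exact h17Z (p17.dvd_of_dvd_pow h)

lemma no_two (X Z d A : ℤ) (hc : IsCoprime X Z) (hd : Squarefree (2 * d))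
    (hP : X ^ 3 - 108 * Z ^ 3 = 2 * d * A ^ 2) : False := by
  have hX : (2 : ℤ) ∣ X := by
    apply Int.prime_two.dvd_of_dvd_pow (n := 3)
    exact ⟨d * A ^ 2 + 54 * Z ^ 3, by linarith⟩
  have hZ : ¬ (2 : ℤ) ∣ Z := by
    intro h
    have := hc.isUnit_of_dvd' hX h
    rw [Int.isUnit_iff] at this; omega
  have hd2 : ¬ (2 : ℤ) ∣ d := by
    rintro ⟨e, rfl⟩
    have := hd 2 ⟨e, by ring⟩
    rw [Int.isUnit_iff] at this; omega
  obtain ⟨Y, rfl⟩ := hX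
  have h1 : (2 : ℤ) ∣ d * A ^ 2 := ⟨2 * Y ^ 3 - 27 * Z ^ 3, by linarith⟩
  have h2 := Int.prime_two.dvd_of_dvd_pow ((Int.prime_two.dvd_or_dvd h1).resolve_left hd2)
  obtain ⟨A', rfl⟩ := h2
  have h3 : (2 : ℤ) ∣ 27 * Z ^ 3 := ⟨Y ^ 3 - d * A' ^ 2, by linarith⟩
  rcases Int.prime_two.dvd_or_dvd h3 with h | h
  · omega
  · exact hZ (Int.prime_two.dvd_of_dvd_pow h)

theorem no_point_C (x y : ℚ) (h : y ^ 2 = (x ^ 3 - 108) * (x ^ 2 + 8 * x + 20)) : False := by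
  set X := x.num with hX
  set Y : ℤ := (x.den : ℤ) with hY
  have hY0 : 0 < Y := by rw [hY]; exact_mod_cast x.pos
  have hYq : (Y : ℚ) ≠ 0 := by exact_mod_cast hY0.ne'
  have hr : x = X / Y := by rw [hX, hY]; push_cast; exact (Rat.num_div_den x).symm
  have hcop : IsCoprime X Y := by
    rw [Int.isCoprime_iff_nat_coprime]; simpa [hX, hY] using x.reduced
  obtain ⟨S, hS⟩ : ∃ S : ℤ, S ^ 2 = Y * ((X ^ 3 - 108 * Y ^ 3) * (X ^ 2 + 8 * X * Y + 20 * Y ^ 2)) := by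
    have : ((Y * ((X ^ 3 - 108 * Y ^ 3) * (X ^ 2 + 8 * X * Y + 20 * Y ^ 2)) : ℤ) : ℚ) = (y * Y ^ 3) ^ 2 := by
      push_cast
      rw [mul_pow, h, hr]; field_simp
    have hsq : IsSquare (((Y * ((X ^ 3 - 108 * Y ^ 3) * (X ^ 2 + 8 * X * Y + 20 * Y ^ 2)) : ℤ)) : ℚ) :=
      ⟨y * Y ^ 3, by rw [this]; ring⟩
    rw [Rat.isSquare_intCast_iff] at hsq
    obtain ⟨S, hS⟩ := hsq
    exact ⟨S, by rw [hS]; ring⟩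
  have hQpos : 0 < X ^ 2 + 8 * X * Y + 20 * Y ^ 2 := by nlinarith [sq_nonneg (X + 4 * Y), sq_nonneg Y]
  have hP0 : X ^ 3 - 108 * Y ^ 3 ≠ 0 := by
    intro h0
    have : ((X ^ 3 - 108 * Y ^ 3 : ℤ) : ℚ) = 0 := by rw [h0]; norm_num
    push_cast at this
    apply no_point_A x 0
    rw [hr]; field_simp; linarith
  have hS0 : S ≠ 0 := by
    rintro rfl
    have : Y * ((X ^ 3 - 108 * Y ^ 3) * (X ^ 2 + 8 * X * Y + 20 * Y ^ 2)) ≠ 0 :=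
      mul_ne_zero hY0.ne' (mul_ne_zero hP0 hQpos.ne')
    apply this; rw [← hS]; norm_num
  have c1 : IsCoprime Y ((X ^ 3 - 108 * Y ^ 3) * (X ^ 2 + 8 * X * Y + 20 * Y ^ 2)) := by
    apply IsCoprime.mul_right
    · have := (hcop.symm.pow_right (n := 3)).add_mul_left_right (-108 * Y ^ 2)
      have e : X ^ 3 + Y * (-108 * Y ^ 2) = X ^ 3 - 108 * Y ^ 3 := by ring
      rwa [e] at this
    · have := (hcop.symm.pow_right (n := 2)).add_mul_left_right (8 * X + 20 * Y)
      have e : X ^ 2 + Y * (8 * X + 20 * Y) = X ^ 2 + 8 * X * Y + 20 * Y ^ 2 := by ring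
      rwa [e] at this
  obtain ⟨z, s, hz, hs⟩ := sq_pos_of_gcd (Int.isCoprime_iff_gcd_eq_one.mp c1) hS.symm hS0 hY0.le
  have hz0 : z ≠ 0 := by rintro rfl; simp at hz; omega
  have hPpos : 0 < X ^ 3 - 108 * Y ^ 3 := by
    rcases lt_or_gt_of_ne hP0 with h0 | h0
    · nlinarith [sq_nonneg s]
    · exact h0
  obtain ⟨d, A, B, hdpos, hdsq, hP, hQ⟩ : ∃ d A B : ℤ, 0 < d ∧ Squarefree d ∧
      X ^ 3 - 108 * Y ^ 3 = d * A ^ 2 ∧ X ^ 2 + 8 * X * Y + 20 * Y ^ 2 = d * B ^ 2 := by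
    generalize X ^ 3 - 108 * Y ^ 3 = P at *
    generalize X ^ 2 + 8 * X * Y + 20 * Y ^ 2 = Q at *
    obtain ⟨d, A, hdA, hd⟩ := Nat.sq_mul_squarefree P.natAbs
    have hPd : P = d * (A : ℤ) ^ 2 := by
      have : (P.natAbs : ℤ) = P := Int.natAbs_of_nonneg hPpos.le
      rw [← this, ← hdA]; push_cast; ring
    have hd' : Squarefree (d : ℤ) := by exact_mod_cast (Int.squarefree_natCast.mpr hd)
    have hA0 : (A : ℤ) ≠ 0 := by intro h; rw [h] at hPd; simp at hPd; exact hP0 hPd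
    have hd0 : (d : ℤ) ≠ 0 := hd'.ne_zero
    have hAs : (A : ℤ) ∣ s := by
      rw [← Int.pow_dvd_pow_iff (n := 2) (by norm_num), ← hs, hPd]
      exact ⟨d * Q, by ring⟩
    obtain ⟨s', rfl⟩ := hAs
    have h1 : d * Q = s' ^ 2 := by
      have : (A : ℤ) ^ 2 * (d * Q) = A ^ 2 * s' ^ 2 := by rw [← mul_pow, ← hs, hPd]; ring
      exact mul_left_cancel₀ (pow_ne_zero 2 hA0) this
    have h2 : (d : ℤ) ∣ s' := by
      have : (d : ℤ) ∣ s' ^ 2 := ⟨Q, h1.symm⟩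
      exact (hd'.dvd_pow_iff_dvd (by norm_num)).mp this
    obtain ⟨B, rfl⟩ := h2
    refine ⟨d, A, B, by positivity, hd', hPd, ?_⟩
    have : (d : ℤ) * Q = d * (d * B ^ 2) := by rw [h1]; ring
    exact mul_left_cancel₀ hd0 this
  have hdvd : d ∣ 5780 * Y ^ 4 := by
    refine ⟨484 * Y ^ 2 * B ^ 2 - (11 * X + 75 * Y) * (A ^ 2 - (X - 8 * Y) * B ^ 2), ?_⟩
    linear_combination (484 * Y ^ 2 + (11 * X + 75 * Y) * (X - 8 * Y)) * hQ - (11 * X + 75 * Y) * hP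
  have hdY : IsCoprime d Y := by
    have := (hcop.symm.pow_right (n := 2)).add_mul_left_right (8 * X + 20 * Y)
    have e : X ^ 2 + Y * (8 * X + 20 * Y) = d * B ^ 2 := by linarith
    rw [e] at this
    exact this.of_mul_right_left.symm
  have h5780 : d ∣ 5780 := hdY.pow_right.dvd_of_dvd_mul_right hdvd
  have hd2 : IsCoprime d 2 := by
    apply IsCoprime.symm
    rw [Prime.coprime_iff_not_dvd Int.prime_two]
    rintro ⟨e, rfl⟩
    exact no_two X Y e A hcop hdsq hP
  have hd17 : IsCoprime d 17 := by
    apply IsCoprime.symm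
    rw [Prime.coprime_iff_not_dvd (by norm_num)]
    rintro ⟨e, rfl⟩
    exact no_seventeen X Y z e A B hz hcop hdsq hP hQ
  have hd5 : d ∣ 5 := by
    have e : (5780 : ℤ) = 5 * (2 * 2 * (17 * 17)) := by norm_num
    rw [e] at h5780
    exact ((hd2.mul_right hd2).mul_right (hd17.mul_right hd17)).dvd_of_dvd_mul_right h5780
  have : d = 1 ∨ d = 5 := by
    have h1 := Int.le_of_dvd (by norm_num) hd5
    interval_cases d <;> revert hd5 <;> decide
  rcases this with rfl | rfl
  · apply no_point_A x (A / z ^ 3)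
    have : ((X ^ 3 - 108 * Y ^ 3 : ℤ) : ℚ) = ((1 * A ^ 2 : ℤ) : ℚ) := by rw [hP]
    push_cast at this
    have hzq : (z : ℚ) ≠ 0 := by exact_mod_cast hz0
    have hYz : (Y : ℚ) = z ^ 2 := by rw [hz]; push_cast; rfl
    rw [hr, hYz]
    rw [hYz] at this
    field_simp
    linarith
  · rw [hz] at hP hQ hcop
    exact no_five X z A B hcop hz0 hP hQ



/-- The five conditions on `m = 4 c + 3` which force the Galois group to be maximal. -/
structure GoodParam {K : Type*} [Field K] (m : K) : Prop where
  root : ∀ t : K, t ^ 3 + m * t + 4 ≠ 0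
  disc : ∀ y : K, y ^ 2 ≠ -4 * (m ^ 3 + 108)
  nrm : ∀ y : K, y ^ 2 ≠ 4 * (m ^ 2 - 8 * m + 20)
  nd : ∀ y : K, y ^ 2 ≠ 4 * (m ^ 2 - 8 * m + 20) * (-4 * (m ^ 3 + 108))
  quart : ∀ y : K, (y ^ 2 - (m - 4) * (m - 12)) ^ 2 ≠ 4 * (4 * (m ^ 2 - 8 * m + 20)) * (2 * y + (12 - 2 * m))

theorem eta_iff (c : ℚ) : (∃ r : ℚ, r ≠ 0 ∧ c = (4 - 3 * r - r ^ 3) / (4 * r)) ↔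
    ∃ t : ℚ, t ^ 3 + (4 * c + 3) * t + 4 = 0 := by
  constructor
  · rintro ⟨r, hr, rfl⟩
    refine ⟨-r, ?_⟩
    field_simp; ring
  · rintro ⟨t, ht⟩
    have ht0 : t ≠ 0 := by rintro rfl; norm_num at ht
    refine ⟨-t, neg_ne_zero.mpr ht0, ?_⟩
    field_simp
    linear_combination ht

theorem lambda_iff (c : ℚ) : (∃ r : ℚ, r ≠ 0 ∧ c = (r ^ 2 + 2 * r - 4) / (8 * r)) ↔
    ∃ y : ℚ, y ^ 2 = 4 * ((4 * c + 3) ^ 2 - 8 * (4 * c + 3) + 20) := by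
  constructor
  · rintro ⟨r, hr, rfl⟩
    refine ⟨(r ^ 2 + 4) / r, ?_⟩
    field_simp; ring
  · rintro ⟨y, hy⟩
    have key : ((y + 8 * c - 2) / 2) ^ 2 + (2 - 8 * c) * ((y + 8 * c - 2) / 2) - 4 = 0 := by
      linear_combination (1 / 4) * hy
    set r := (y + 8 * c - 2) / 2
    have hr0 : r ≠ 0 := by intro h; rw [h] at key; norm_num at key
    refine ⟨r, hr0, ?_⟩
    field_simp
    linear_combination (-1) * key

theorem good_of_not_exc (c : ℚ) (h1 : ¬ ∃ r : ℚ, r ≠ 0 ∧ c = (r ^ 2 + 2 * r - 4) / (8 * r))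
    (h2 : ¬ ∃ r : ℚ, r ≠ 0 ∧ c = (4 - 3 * r - r ^ 3) / (4 * r)) (h3 : c ≠ -5/2) : GoodParam (4 * c + 3) := by
  constructor
  · intro t ht; exact h2 ((eta_iff c).mpr ⟨t, ht⟩)
  · intro y hy
    exact no_point_A (-(4 * c + 3)) (y / 2) (by linear_combination (1 / 4) * hy)
  · intro y hy; exact h1 ((lambda_iff c).mpr ⟨y, hy⟩)
  · intro y hy
    exact no_point_C (-(4 * c + 3)) (y / 4) (by linear_combination (1 / 16) * hy)
  · intro y hy
    generalize hm : 4 * c + 3 = m at hy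
    obtain ⟨r, rfl⟩ : ∃ r, y = 2 * r + m - 6 := ⟨(y - m + 6) / 2, by ring⟩
    have e1 : (m * (1 + r) + r ^ 2 - 6 * r - 3) ^ 2 = 4 * r * (m ^ 2 - 8 * m + 20) := by
      linear_combination (1 / 16) * hy
    have e2 : ((r - 1) * (m + r - 3) / 2) ^ 2 = r * (r ^ 2 - 2 * r + 5) := by
      linear_combination (1 / 4) * e1
    rcases points_B _ _ e2 with rfl | rfl | rfl
    · have : m = 3 := by
        have : (m - 3) ^ 2 = 0 := by linear_combination e1
        have := pow_eq_zero_iff (two_ne_zero) |>.mp this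
        linarith
      exact h2 ⟨1, one_ne_zero, by linarith⟩
    · norm_num at e2
    · have : (m - 3) * (m + 7) = 0 := by linear_combination (1 / 16) * e1
      rcases mul_eq_zero.mp this with h | h
      · exact h2 ⟨1, one_ne_zero, by linarith⟩
      · exact h3 (by linarith)



theorem good_seven : GoodParam (7 : ℚ) := by
  have : (7 : ℚ) = 4 * 1 + 3 := by norm_num
  rw [this]
  apply good_of_not_exc
  · rw [lambda_iff]
    rintro ⟨y, hy⟩
    have h : IsSquare (((52 : ℤ)) : ℚ) := ⟨y, by rw [← pow_two, hy]; norm_num⟩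
    rw [Rat.isSquare_intCast_iff] at h
    obtain ⟨r, hr⟩ := h
    have e := congrArg (Int.cast : ℤ → ZMod 5) hr
    push_cast at e
    revert e
    generalize (r : ZMod 5) = s
    revert s; decide
  · rw [eta_iff]
    rintro ⟨t, ht⟩
    have hi : IsIntegral ℤ t := by
      refine ⟨X ^ 3 + C 7 * X + C 4, by monicity!, ?_⟩
      simp
      linear_combination ht
    rw [IsIntegrallyClosed.isIntegral_iff] at hi
    obtain ⟨n, rfl⟩ := hi
    have h : n ^ 3 + 7 * n + 4 = 0 := by
      have : ((n ^ 3 + 7 * n + 4 : ℤ) : ℚ) = 0 := by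
        push_cast; simp at ht; linear_combination ht
      exact_mod_cast this
    have e := congrArg (Int.cast : ℤ → ZMod 5) h
    push_cast at e
    revert e
    generalize (n : ZMod 5) = s
    revert s; decide
  · norm_num

theorem good_frac {R F : Type*} [CommRing R] [IsDomain R] [IsIntegrallyClosed R] [Field F] [Algebra R F]
    [IsFractionRing R F] (ev : R →+* ℚ) (M : R) (hM1 : ev M = 7) :
    GoodParam (algebraMap R F M) := by
  have inj : Function.Injective (algebraMap R F) := IsFractionRing.injective R F
  have g := good_seven
  have lift : ∀ y : F, IsIntegral R y → ∃ T, algebraMap R F T = y := by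
    intro y hy; exact IsIntegrallyClosed.isIntegral_iff.mp hy
  have sq : ∀ (y : F) (a : R), y ^ 2 = algebraMap R F a → ∃ T, algebraMap R F T = y := by
    intro y a h
    apply lift
    apply IsIntegral.of_pow (n := 2) (by norm_num)
    rw [h]; exact isIntegral_algebraMap
  constructor
  · intro t ht
    obtain ⟨T, rfl⟩ := lift t (by
      refine ⟨X ^ 3 + C M * X + C 4, by monicity!, ?_⟩
      simp [map_ofNat]
      linear_combination ht)
    have e : T ^ 3 + M * T + 4 = 0 := by
      apply inj; simpa [map_ofNat] using ht
    have e1 := congrArg ev e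
    simp [hM1, map_ofNat] at e1
    exact g.root _ e1
  · intro y hy
    obtain ⟨T, rfl⟩ := sq y (-4 * (M ^ 3 + 108)) (by rw [hy]; simp [map_ofNat])
    have e : T ^ 2 = -4 * (M ^ 3 + 108) := by
      apply inj; simpa [map_ofNat] using hy
    have e1 := congrArg ev e
    apply g.disc (ev T)
    simp [hM1, map_ofNat] at e1
    linear_combination e1
  · intro y hy
    obtain ⟨T, rfl⟩ := sq y (4 * (M ^ 2 - 8 * M + 20)) (by rw [hy]; simp [map_ofNat])
    have e : T ^ 2 = 4 * (M ^ 2 - 8 * M + 20) := by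
      apply inj; simpa [map_ofNat] using hy
    have e1 := congrArg ev e
    apply g.nrm (ev T)
    simp [hM1, map_ofNat] at e1
    linear_combination e1
  · intro y hy
    obtain ⟨T, rfl⟩ := sq y (4 * (M ^ 2 - 8 * M + 20) * (-4 * (M ^ 3 + 108))) (by rw [hy]; simp [map_ofNat])
    have e : T ^ 2 = 4 * (M ^ 2 - 8 * M + 20) * (-4 * (M ^ 3 + 108)) := by
      apply inj; simpa [map_ofNat] using hy
    have e1 := congrArg ev e
    apply g.nd (ev T)
    simp [hM1, map_ofNat] at e1
    linear_combination e1
  · intro y hy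
    obtain ⟨T, rfl⟩ := lift y (by
      refine ⟨X ^ 4 - C (2 * ((M - 4) * (M - 12))) * X ^ 2 - C (32 * (M ^ 2 - 8 * M + 20)) * X
        + C (((M - 4) * (M - 12)) ^ 2 - 16 * (M ^ 2 - 8 * M + 20) * (12 - 2 * M)), by monicity!, ?_⟩
      simp [map_ofNat]
      linear_combination hy)
    have e : (T ^ 2 - (M - 4) * (M - 12)) ^ 2 = 4 * (4 * (M ^ 2 - 8 * M + 20)) * (2 * T + (12 - 2 * M)) := by
      apply inj; simpa [map_ofNat] using hy
    have e1 := congrArg ev e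
    apply g.quart (ev T)
    simp [hM1, map_ofNat] at e1
    linear_combination e1

theorem good_ratFunc : GoodParam (4 * RatFunc.X + 3 : RatFunc ℚ) := by
  have h := good_frac (F := RatFunc ℚ) (evalRingHom (1 : ℚ)) (4 * X + 3) (by simp; norm_num)
  have e : algebraMap ℚ[X] (RatFunc ℚ) (4 * X + 3) = 4 * RatFunc.X + 3 := by
    rw [map_add, map_mul, RatFunc.algebraMap_X]
    congr 1
    · congr 1
      exact map_ofNat (algebraMap ℚ[X] (RatFunc ℚ)) 4
    · exact map_ofNat (algebraMap ℚ[X] (RatFunc ℚ)) 3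
  rwa [e] at h



lemma exists_perm_hom {K L ι : Type*} [Field K] [Field L] [Algebra K L] [Finite ι] (y : ι → L)
    (inj : Function.Injective y) (h : ∀ (g : L ≃ₐ[K] L) (i : ι), ∃ k, y k = g (y i)) :
    ∃ ψ : (L ≃ₐ[K] L) →* Equiv.Perm ι, ∀ g i, y (ψ g i) = g (y i) := by
  choose φ hφ using h
  have hinj : ∀ g, Function.Bijective (φ g) := by
    intro g
    apply Finite.injective_iff_bijective.mp
    intro i j hij
    have h1 := hφ g i
    rw [hij, hφ g j] at h1
    exact inj (g.injective h1.symm)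
  refine ⟨MonoidHom.mk' (fun g => Equiv.ofBijective (φ g) (hinj g)) ?_, fun g i => hφ g i⟩
  intro g h
  ext i
  apply inj
  simp [hφ]

lemma perm_three_gen (H : Subgroup (Equiv.Perm (Fin 3))) (h1 : ∀ i, ∃ g ∈ H, g i ≠ i)
    (h2 : ∃ g ∈ H, Equiv.Perm.sign g = -1) : H = ⊤ := by
  obtain ⟨h, hh, hs⟩ := h2
  have k1 : ∀ h : Equiv.Perm (Fin 3), Equiv.Perm.sign h = -1 → ∃ k, h k = k := by decide
  obtain ⟨k, hk⟩ := k1 h hs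
  obtain ⟨g, hg, hgk⟩ := h1 k
  have key : ∀ (h g : Equiv.Perm (Fin 3)) (k : Fin 3), Equiv.Perm.sign h = -1 → h k = k → g k ≠ k →
      ∀ u : Equiv.Perm (Fin 3), u = 1 ∨ u = h ∨ u = g ∨ u = h * g ∨ u = g * h ∨ u = h * g * h ∨ u = g * g := by
    decide
  rw [eq_top_iff]
  intro u _
  rcases key h g k hs hk hgk u with rfl | rfl | rfl | rfl | rfl | rfl | rfl
  · exact H.one_mem
  · exact hh
  · exact hg
  · exact H.mul_mem hh hg
  · exact H.mul_mem hg hh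
  · exact H.mul_mem (H.mul_mem hh hg) hh
  · exact H.mul_mem hg hg

lemma vec_top (R : AddSubmonoid (Fin 3 → ZMod 4))
    (hperm : ∀ (u : Equiv.Perm (Fin 3)) (v : Fin 3 → ZMod 4), v ∈ R → (fun i => v (u i)) ∈ R)
    (h1 : ∃ v ∈ R, 2 * (v 0 + v 1 + v 2) = 2) (h2 : ∃ w ∈ R, ∃ i k, 2 * w i ≠ 2 * w k) :
    R = ⊤ := by
  obtain ⟨v, hv, hv2⟩ := h1
  obtain ⟨w, hw, hw2⟩ := h2
  have par : ∀ z : ZMod 4, 2 * z = 0 ∨ 2 * z = 2 := by decide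
  -- a vector congruent to a unit vector mod 2
  have type1 : ∃ t ∈ R, ∃ k : Fin 3, ∀ i, 2 * t i = if i = k then 2 else 0 := by
    have aux : ∀ t : Fin 3 → ZMod 4, (2 * t 0 = 2 ∧ 2 * t 1 = 0 ∧ 2 * t 2 = 0) ∨
        (2 * t 0 = 0 ∧ 2 * t 1 = 2 ∧ 2 * t 2 = 0) ∨ (2 * t 0 = 0 ∧ 2 * t 1 = 0 ∧ 2 * t 2 = 2) →
        ∃ k : Fin 3, ∀ i, 2 * t i = if i = k then 2 else 0 := by
      rintro t (⟨a, b, c⟩ | ⟨a, b, c⟩ | ⟨a, b, c⟩)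
      · exact ⟨0, fun i => by fin_cases i <;> simp [a, b, c]⟩
      · exact ⟨1, fun i => by fin_cases i <;> simp [a, b, c]⟩
      · exact ⟨2, fun i => by fin_cases i <;> simp [a, b, c]⟩
    have key : ∀ a b c d e f : ZMod 4, 2 * (a + b + c) = 2 → (2 * d ≠ 2 * e ∨ 2 * d ≠ 2 * f ∨ 2 * e ≠ 2 * f) →
      (let P := fun x y z : ZMod 4 => (2 * x = 2 ∧ 2 * y = 0 ∧ 2 * z = 0) ∨
        (2 * x = 0 ∧ 2 * y = 2 ∧ 2 * z = 0) ∨ (2 * x = 0 ∧ 2 * y = 0 ∧ 2 * z = 2)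
       P a b c ∨ P d e f ∨ P (a + d) (b + e) (c + f)) := by
      intro a b c d e f
      have e1 : 2 * (a + b + c) = 2 * a + 2 * b + 2 * c := by ring
      have e2 : 2 * (a + d) = 2 * a + 2 * d := by ring
      have e3 : 2 * (b + e) = 2 * b + 2 * e := by ring
      have e4 : 2 * (c + f) = 2 * c + 2 * f := by ring
      have z2 : (0 : ZMod 4) ≠ 2 := by decide
      have z3 : (2 : ZMod 4) + 2 = 0 := by decide
      simp only [e1, e2, e3, e4]
      rcases par a with h | h <;> rcases par b with h' | h' <;> rcases par c with h'' | h'' <;>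
      rcases par d with g | g <;> rcases par e with g' | g' <;> rcases par f with g'' | g'' <;>
      simp [h, h', h'', g, g', g'', z2, z2.symm, z3]
    have hw3 : 2 * w 0 ≠ 2 * w 1 ∨ 2 * w 0 ≠ 2 * w 2 ∨ 2 * w 1 ≠ 2 * w 2 := by
      by_contra hcon
      push Not at hcon
      obtain ⟨a, b, c⟩ := hcon
      obtain ⟨i, k, hik⟩ := hw2
      apply hik
      have : ∀ i, 2 * w i = 2 * w 0 := by
        intro i; fin_cases i
        · rfl
        · exact a.symm
        · exact b.symm
      rw [this i, this k]
    rcases key _ _ _ _ _ _ hv2 hw3 with h | h | h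
    · exact ⟨v, hv, aux v h⟩
    · exact ⟨w, hw, aux w h⟩
    · exact ⟨v + w, R.add_mem hv hw, aux (v + w) h⟩
  obtain ⟨t, ht, k, htk⟩ := type1
  have type2 : ∀ l : Fin 3, ∃ t ∈ R, ∀ i, 2 * t i = if i = l then 2 else 0 := by
    intro l
    refine ⟨_, hperm (Equiv.swap k l) t ht, ?_⟩
    intro i
    rw [htk]
    have : Equiv.swap k l i = k ↔ i = l := by
      rw [Equiv.apply_eq_iff_eq_symm_apply, Equiv.symm_swap, Equiv.swap_apply_left]
    simp [this]
  have type3 : ∀ l : Fin 3, (Pi.single l 2 : Fin 3 → ZMod 4) ∈ R := by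
    intro l
    obtain ⟨t, ht, htl⟩ := type2 l
    have : (Pi.single l 2 : Fin 3 → ZMod 4) = t + t := by
      ext i
      rw [Pi.add_apply, ← two_mul, htl, Pi.single_apply]
    rw [this]; exact R.add_mem ht ht
  have even : ∀ z : Fin 3 → ZMod 4, (∀ i, 2 * z i = 0) → z ∈ R := by
    intro z hz
    have hz' : ∀ a : ZMod 4, 2 * a = 0 → ∃ n : ℕ, a = n • (2 : ZMod 4) := by
      intro a ha
      have : a = 0 ∨ a = 2 := by revert a; decide
      rcases this with rfl | rfl
      · exact ⟨0, by simp⟩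
      · exact ⟨1, by simp⟩
    rw [← Finset.univ_sum_single z]
    apply R.sum_mem
    intro l _
    obtain ⟨n, hn⟩ := hz' _ (hz l)
    rw [hn, Pi.single_smul]
    exact R.nsmul_mem (type3 l) n
  have type4 : ∀ l : Fin 3, (Pi.single l 1 : Fin 3 → ZMod 4) ∈ R := by
    intro l
    obtain ⟨t, ht, htl⟩ := type2 l
    have : (Pi.single l 1 : Fin 3 → ZMod 4) = t + (Pi.single l 1 - t) := by abel
    rw [this]
    refine R.add_mem ht (even _ ?_)
    intro i
    rw [Pi.sub_apply, mul_sub, htl, Pi.single_apply]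
    split_ifs <;> simp
  rw [eq_top_iff]
  intro z _
  rw [← Finset.univ_sum_single z]
  apply R.sum_mem
  intro l _
  have : z l = (z l).val • (1 : ZMod 4) := by simp
  rw [this, Pi.single_smul]
  exact R.nsmul_mem (type4 l) _


/-- Sum of the four points of the `i`-th orbit. -/
def orbT {L : Type*} [Field L] (x : Fin 3 × ZMod 4 → L) (i : Fin 3) : L :=
  x (i, 0) + x (i, 1) + x (i, 2) + x (i, 3)

/-- Alternating sum of the four points of the `i`-th orbit. -/
def orbD {L : Type*} [Field L] (x : Fin 3 × ZMod 4 → L) (i : Fin 3) : L :=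
  x (i, 0) - x (i, 1) + x (i, 2) - x (i, 3)

/-- A labelling of the twelve points of exact period four. -/
structure Cfg {L : Type*} [Field L] (c : L) (x : Fin 3 × ZMod 4 → L) : Prop where
  inj : Function.Injective x
  step : ∀ i j, x (i, j + 1) = x (i, j) ^ 2 + c
  ab : ∀ i, (x (i, 0) + x (i, 2)) * (x (i, 1) + x (i, 3)) = -1
  e1 : orbT x 0 + orbT x 1 + orbT x 2 = 0
  e2 : orbT x 0 * orbT x 1 + orbT x 1 * orbT x 2 + orbT x 0 * orbT x 2 = 4 * c + 3
  e3 : orbT x 0 * orbT x 1 * orbT x 2 = -4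

theorem exists_sq_root {Ω : Type*} [Field Ω] [IsAlgClosed Ω] (a : Ω) : ∃ s, s ^ 2 = a := by
  obtain ⟨z, hz⟩ := IsAlgClosed.exists_pow_nat_eq a (n := 2) (by norm_num)
  exact ⟨z, hz⟩

theorem exists_quad_root {Ω : Type*} [Field Ω] [IsAlgClosed Ω] [CharZero Ω] (p q : Ω) :
    ∃ z, z ^ 2 + p * z + q = 0 := by
  obtain ⟨s, hs⟩ := exists_sq_root (p ^ 2 - 4 * q)
  refine ⟨(-p + s) / 2, ?_⟩
  have h2 : (2 : Ω) ≠ 0 := by norm_num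
  field_simp
  linear_combination hs

theorem exists_cubic_root {Ω : Type*} [Field Ω] [IsAlgClosed Ω] (m : Ω) :
    ∃ z, z ^ 3 + m * z + 4 = 0 := by
  have hd : (X ^ 3 + C m * X + C 4 : Polynomial Ω).degree = 3 := by
    compute_degree!
  obtain ⟨z, hz⟩ := IsAlgClosed.exists_root (X ^ 3 + C m * X + C 4 : Polynomial Ω) (by rw [hd]; norm_num)
  exact ⟨z, by simpa [IsRoot] using hz⟩

theorem exists_orbit {Ω : Type*} [Field Ω] [IsAlgClosed Ω] [CharZero Ω] (c t : Ω)
    (h2 : 4 * c + 3 ≠ -2) (h4 : (4 * c + 3) ^ 2 - 8 * (4 * c + 3) + 20 ≠ 0)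
    (ht : t ^ 3 + (4 * c + 3) * t + 4 = 0) :
    ∃ y : ZMod 4 → Ω, (∀ j, y (j + 1) = y j ^ 2 + c) ∧ y 0 + y 1 + y 2 + y 3 = t ∧
      (y 0 + y 2) * (y 1 + y 3) = -1 ∧ y 0 ≠ y 2 := by
  obtain ⟨a, ha⟩ := exists_quad_root (-t) (-1)
  obtain ⟨s, hs⟩ := exists_sq_root (2 * (t - a) - a ^ 2 - 4 * c)
  have h20 : (2 : Ω) ≠ 0 := by norm_num
  have e01 : ((t - a) + a * s) / 2 = ((a + s) / 2) ^ 2 + c := by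
    field_simp
    linear_combination -hs
  have e12 : (a - s) / 2 = (((t - a) + a * s) / 2) ^ 2 + c := by
    linear_combination (a / 4) * ht + (2 * s + a ^ 2 + (2 + t) * a + t ^ 2 + 4 * c) / 4 * ha -
      (a ^ 2 / 4) * hs
  have e23 : ((t - a) - a * s) / 2 = ((a - s) / 2) ^ 2 + c := by
    field_simp
    linear_combination -hs
  have e30 : (a + s) / 2 = (((t - a) - a * s) / 2) ^ 2 + c := by
    linear_combination (a / 4) * ht + (-2 * s + a ^ 2 + (2 + t) * a + t ^ 2 + 4 * c) / 4 * ha -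
      (a ^ 2 / 4) * hs
  have hne : (a + s) / 2 ≠ (a - s) / 2 := by
    intro h
    have hs0 : s = 0 := by
      field_simp at h
      have : 2 * s = 0 := by linear_combination h
      simpa using this
    subst hs0
    have hq : (t - 2 * a) * (t + 2) = 0 := by
      linear_combination 4 * e01 - 4 * e12
    rcases mul_eq_zero.1 hq with h | h
    · apply h4
      have hta : t = 2 * a := by linear_combination h
      subst hta
      have ha2 : a ^ 2 = -1 := by linear_combination -ha
      have h1 : a * (4 * c + 3 - 4) = -2 := by linear_combination ht / 2 - 4 * a * ha2
      linear_combination - (a * (4 * c + 3 - 4) - 2) * h1 + (4 * c + 3 - 4) ^ 2 * ha2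
    · apply h2
      have : t = -2 := by linear_combination h
      subst this
      linear_combination -ht / 2
  refine ⟨![(a + s) / 2, ((t - a) + a * s) / 2, (a - s) / 2, ((t - a) - a * s) / 2],
    ?_, ?_, ?_, hne⟩
  · intro j
    fin_cases j
    · exact e01
    · exact e12
    · exact e23
    · exact e30
  · change (a + s) / 2 + ((t - a) + a * s) / 2 + (a - s) / 2 + ((t - a) - a * s) / 2 = t
    field_simp
    ring
  · change ((a + s) / 2 + (a - s) / 2) * (((t - a) + a * s) / 2 + ((t - a) - a * s) / 2) = -1
    field_simp
    linear_combination -4 * ha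

theorem orbit_inj {L : Type*} [Field L] {c : L} {y : ZMod 4 → L}
    (hy : ∀ j, y (j + 1) = y j ^ 2 + c) (h02 : y 0 ≠ y 2) : Function.Injective y := by
  intro j l h
  by_contra hne
  have hk : ∀ k : ℕ, y (j + k) = y (l + k) := by
    intro k
    induction k with
    | zero => simpa using h
    | succ n ih => push_cast; rw [← add_assoc, ← add_assoc, hy, hy, ih]
  have hk' : ∀ k : ZMod 4, y (j + k) = y (l + k) := by
    intro k
    have := hk k.val
    simpa using this
  have hs : ∀ k : ZMod 4, y k = y (k + (l - j)) := by
    intro k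
    have := hk' (k - j)
    rw [show j + (k - j) = k by ring] at this
    rw [this]; congr 1; ring
  have hd : l - j ≠ 0 := fun h => hne (sub_eq_zero.1 h).symm
  generalize l - j = d at hs hd
  apply h02
  have key : ∀ d : ZMod 4, d ≠ 0 → d + d = 2 ∨ d = 2 := by decide
  rcases key d hd with h | h
  · rw [hs 0, hs (0 + d), zero_add, h]
  · rw [hs 0, h, zero_add]

theorem exists_cfg {Ω : Type*} [Field Ω] [IsAlgClosed Ω] [CharZero Ω] (c : Ω)
    (h2 : 4 * c + 3 ≠ -2) (h3 : (4 * c + 3) ^ 3 + 108 ≠ 0)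
    (h4 : (4 * c + 3) ^ 2 - 8 * (4 * c + 3) + 20 ≠ 0) :
    ∃ x : Fin 3 × ZMod 4 → Ω, Cfg c x := by
  obtain ⟨t0, ht0⟩ := exists_cubic_root (4 * c + 3)
  obtain ⟨t1, ht1'⟩ := exists_quad_root t0 (t0 ^ 2 + (4 * c + 3))
  have ht1 : t1 ^ 3 + (4 * c + 3) * t1 + 4 = 0 := by
    linear_combination (t1 - t0) * ht1' + ht0
  have ht2 : (-t0 - t1) ^ 3 + (4 * c + 3) * (-t0 - t1) + 4 = 0 := by
    linear_combination (-2 * t0 - t1) * ht1' + ht0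
  have hdisc : (t0 - t1) ^ 2 * (t0 - (-t0 - t1)) ^ 2 * (t1 - (-t0 - t1)) ^ 2 ≠ 0 := by
    intro h
    apply h3
    have hm : 4 * c + 3 = -(t0 ^ 2 + t0 * t1 + t1 ^ 2) := by linear_combination ht1'
    have hq : t0 * t1 * (t0 + t1) = 4 := by linear_combination t0 * ht1' - ht0
    rw [hm]
    linear_combination -h / 4 - 27 / 4 * (t0 * t1 * (t0 + t1) + 4) * hq
  obtain ⟨y0, hy0, hs0, hp0, hn0⟩ := exists_orbit c t0 h2 h4 ht0
  obtain ⟨y1, hy1, hs1, hp1, hn1⟩ := exists_orbit c t1 h2 h4 ht1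
  obtain ⟨y2, hy2, hs2, hp2, hn2⟩ := exists_orbit c _ h2 h4 ht2
  set y : Fin 3 → ZMod 4 → Ω := ![y0, y1, y2] with hy
  have hstep : ∀ i j, y i (j + 1) = y i j ^ 2 + c := by
    intro i j
    fin_cases i
    · exact hy0 j
    · exact hy1 j
    · exact hy2 j
  set t : Fin 3 → Ω := ![t0, t1, -t0 - t1] with htdef
  have hsum : ∀ i, y i 0 + y i 1 + y i 2 + y i 3 = t i := by
    intro i
    fin_cases i
    · exact hs0
    · exact hs1
    · exact hs2
  have hn : ∀ i, y i 0 ≠ y i 2 := by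
    intro i
    fin_cases i
    · exact hn0
    · exact hn1
    · exact hn2
  have htinj : Function.Injective t := by
    have n01 : t0 ≠ t1 := by rintro rfl; simp at hdisc
    have n02 : t0 ≠ -t0 - t1 := by
      intro h; apply hdisc; rw [← h]; ring
    have n12 : t1 ≠ -t0 - t1 := by
      intro h; apply hdisc; rw [← h]; ring
    intro i k h
    fin_cases i <;> fin_cases k <;> simp [t] at h ⊢
    · exact n01 h
    · exact n02 h
    · exact n01 h.symm
    · exact n12 h
    · exact n02 h.symm
    · exact n12 h.symm
  have hfull : ∀ i k j l, y i j = y k l → i = k := by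
    intro i k j l h
    have hk : ∀ n : ℕ, y i (j + n) = y k (l + n) := by
      intro n
      induction n with
      | zero => simpa using h
      | succ n ih => push_cast; rw [← add_assoc, ← add_assoc, hstep, hstep, ih]
    have hsh : ∀ (z : ZMod 4 → Ω) (j : ZMod 4), z 0 + z 1 + z 2 + z 3 =
        z (j + (0 : ℕ)) + z (j + (1 : ℕ)) + z (j + (2 : ℕ)) + z (j + (3 : ℕ)) := by
      intro z j
      fin_cases j
      · change _ = z 0 + z 1 + z 2 + z 3
        ring
      · change _ = z 1 + z 2 + z 3 + z 0
        ring
      · change _ = z 2 + z 3 + z 0 + z 1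
        ring
      · change _ = z 3 + z 0 + z 1 + z 2
        ring
    apply htinj
    rw [← hsum, ← hsum, hsh (y i) j, hsh (y k) l, hk, hk, hk, hk]
  refine ⟨fun p => y p.1 p.2, ?_, fun i j => hstep i j, ?_, ?_, ?_, ?_⟩
  · rintro ⟨i, j⟩ ⟨k, l⟩ h
    have hik := hfull i k j l h
    subst hik
    have := orbit_inj (hstep i) (hn i) h
    exact Prod.ext rfl this
  · intro i
    fin_cases i
    · exact hp0
    · exact hp1
    · exact hp2
  · change (y 0 0 + y 0 1 + y 0 2 + y 0 3) + (y 1 0 + y 1 1 + y 1 2 + y 1 3) +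
      (y 2 0 + y 2 1 + y 2 2 + y 2 3) = 0
    rw [hsum, hsum, hsum]
    change t0 + t1 + (-t0 - t1) = 0
    ring
  · simp only [orbT]
    rw [hsum, hsum, hsum]
    change t0 * t1 + t1 * (-t0 - t1) + t0 * (-t0 - t1) = _
    linear_combination -ht1'
  · simp only [orbT]
    rw [hsum, hsum, hsum]
    change t0 * t1 * (-t0 - t1) = _
    linear_combination ht0 - t0 * ht1'

theorem phi4_eval {K : Type*} [Field K] (c x : K) : (Phi4 c).eval x =
    x ^ 12 + 6 * c * x ^ 10 + x ^ 9 + (15 * c ^ 2 + 3 * c) * x ^ 8 + 4 * c * x ^ 7 +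
    (20 * c ^ 3 + 12 * c ^ 2 + 1) * x ^ 6 + (6 * c ^ 2 + 2 * c) * x ^ 5 +
    (15 * c ^ 4 + 18 * c ^ 3 + 3 * c ^ 2 + 4 * c) * x ^ 4 + (4 * c ^ 3 + 4 * c ^ 2 + 1) * x ^ 3 +
    (6 * c ^ 5 + 12 * c ^ 4 + 6 * c ^ 3 + 5 * c ^ 2 + c) * x ^ 2 +
    (c ^ 4 + 2 * c ^ 3 + c ^ 2 + 2 * c) * x +
    (c ^ 6 + 3 * c ^ 5 + 3 * c ^ 4 + 3 * c ^ 3 + 2 * c ^ 2 + 1) := by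
  simp only [Phi4, eval_add, eval_mul, eval_pow, eval_X, eval_C]

theorem phi4_map {K L : Type*} [Field K] [Field L] (f : K →+* L) (c : K) :
    (Phi4 c).map f = Phi4 (f c) := by
  simp [Phi4, map_ofNat]

theorem phi4_natDegree {K : Type*} [Field K] (c : K) : (Phi4 c).natDegree = 12 := by
  unfold Phi4
  compute_degree!

theorem phi4_monic {K : Type*} [Field K] (c : K) : (Phi4 c).Monic := by
  unfold Phi4
  monicity!

theorem phi4_identity {K : Type*} [Field K] (c x : K) :
    ((x ^ 2 + c) ^ 2 + c - x) * (Phi4 c).eval x =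
      (((x ^ 2 + c) ^ 2 + c) ^ 2 + c) ^ 2 + c - x := by
  rw [phi4_eval]
  ring

namespace Cfg

variable {L : Type*} [Field L] {c : L} {x : Fin 3 × ZMod 4 → L}

theorem root (h : Cfg c x) (p : Fin 3 × ZMod 4) : (Phi4 c).eval (x p) = 0 := by
  obtain ⟨i, j⟩ := p
  have e : j + 1 + 1 + 1 + 1 = j := by revert j; decide
  have h1 := h.step i j
  have h2 := h.step i (j + 1)
  have h3 := h.step i (j + 1 + 1)
  have h4 := h.step i (j + 1 + 1 + 1)
  have ne : x (i, j + 1 + 1) ≠ x (i, j) := by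
    intro hh
    have := h.inj hh
    simp only [Prod.mk.injEq, true_and] at this
    revert this; clear * -; revert j; decide
  have := phi4_identity c (x (i, j))
  rw [← h1, ← h2, ← h3, ← h4, e, sub_self] at this
  rcases mul_eq_zero.1 this with h | h
  · exact absurd (sub_eq_zero.1 h) ne
  · exact h

theorem exists_of_root (h : Cfg c x) {z : L} (hz : (Phi4 c).eval z = 0) : ∃ p, x p = z := by
  classical
  by_contra hne
  push Not at hne
  have hsub : insert z (Finset.univ.image x) ⊆ (Phi4 c).roots.toFinset := by
    intro w hw
    rw [Multiset.mem_toFinset, mem_roots (phi4_monic c).ne_zero, IsRoot]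
    rcases Finset.mem_insert.1 hw with rfl | hw
    · exact hz
    · obtain ⟨p, -, rfl⟩ := Finset.mem_image.1 hw
      exact h.root p
  have h1 := Finset.card_le_card hsub
  have h2 := Multiset.toFinset_card_le (Phi4 c).roots
  have h3 := card_roots' (Phi4 c)
  rw [phi4_natDegree] at h3
  rw [Finset.card_insert_of_notMem (by simpa using hne), Finset.card_image_of_injective _ h.inj,
    Finset.card_univ, Fintype.card_prod, ZMod.card, Fintype.card_fin] at h1
  omega

theorem D_sq (h : Cfg c x) (i : Fin 3) : orbD x i ^ 2 = orbT x i ^ 2 + 4 := by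
  unfold orbD orbT
  linear_combination -4 * h.ab i

theorem T_root (h : Cfg c x) (i : Fin 3) :
    orbT x i ^ 3 + (4 * c + 3) * orbT x i + 4 = 0 := by
  have e1 := h.e1
  have e2 := h.e2
  have e3 := h.e3
  fin_cases i
  · change orbT x 0 ^ 3 + (4 * c + 3) * orbT x 0 + 4 = 0
    linear_combination orbT x 0 ^ 2 * e1 + e3 - orbT x 0 * e2
  · change orbT x 1 ^ 3 + (4 * c + 3) * orbT x 1 + 4 = 0
    linear_combination orbT x 1 ^ 2 * e1 + e3 - orbT x 1 * e2
  · change orbT x 2 ^ 3 + (4 * c + 3) * orbT x 2 + 4 = 0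
    linear_combination orbT x 2 ^ 2 * e1 + e3 - orbT x 2 * e2

theorem disc_eq (h : Cfg c x) :
    ((orbT x 0 - orbT x 1) * (orbT x 1 - orbT x 2) * (orbT x 0 - orbT x 2)) ^ 2 =
      -4 * ((4 * c + 3) ^ 3 + 108) := by
  have e1 := h.e1
  have e2 := h.e2
  have e3 := h.e3
  have e : orbT x 2 = - orbT x 0 - orbT x 1 := by linear_combination e1
  rw [← e2]
  rw [e] at e3 ⊢
  linear_combination -27 * (orbT x 0 * orbT x 1 * (- orbT x 0 - orbT x 1) - 4) * e3

theorem prodD_sq (h : Cfg c x) : (orbD x 0 * orbD x 1 * orbD x 2) ^ 2 =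
    4 * ((4 * c + 3) ^ 2 - 8 * (4 * c + 3) + 20) := by
  rw [mul_pow, mul_pow, h.D_sq, h.D_sq, h.D_sq]
  have e1 := h.e1
  have e2 := h.e2
  have e3 := h.e3
  have e : orbT x 2 = - orbT x 0 - orbT x 1 := by linear_combination e1
  rw [← e2]
  rw [e] at e3 ⊢
  linear_combination (orbT x 0 * orbT x 1 * (- orbT x 0 - orbT x 1) - 4) * e3

theorem T_inj (h : Cfg c x) (h2 : (4 : L) ≠ 0) (h3 : (4 * c + 3) ^ 3 + 108 ≠ 0) :
    Function.Injective (orbT x) := by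
  have hd : ((orbT x 0 - orbT x 1) * (orbT x 1 - orbT x 2) * (orbT x 0 - orbT x 2)) ^ 2 ≠ 0 := by
    rw [h.disc_eq]
    exact mul_ne_zero (neg_ne_zero.2 h2) h3
  have n01 : orbT x 0 ≠ orbT x 1 := by intro h; apply hd; rw [h]; ring
  have n12 : orbT x 1 ≠ orbT x 2 := by intro h; apply hd; rw [h]; ring
  have n02 : orbT x 0 ≠ orbT x 2 := by intro h; apply hd; rw [h]; ring
  intro i k hik
  fin_cases i <;> fin_cases k
  · rfl
  · exact absurd hik n01
  · exact absurd hik n02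
  · exact absurd hik.symm n01
  · rfl
  · exact absurd hik n12
  · exact absurd hik.symm n02
  · exact absurd hik.symm n12
  · rfl

theorem D_ne (h : Cfg c x) (h2 : (4 : L) ≠ 0)
    (h4 : (4 * c + 3) ^ 2 - 8 * (4 * c + 3) + 20 ≠ 0) (i : Fin 3) : orbD x i ≠ 0 := by
  have hd : (orbD x 0 * orbD x 1 * orbD x 2) ^ 2 ≠ 0 := by
    rw [h.prodD_sq]
    exact mul_ne_zero h2 h4
  intro hi
  apply hd
  fin_cases i
  · have : orbD x 0 = 0 := hi
    rw [this]; ring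
  · have : orbD x 1 = 0 := hi
    rw [this]; ring
  · have : orbD x 2 = 0 := hi
    rw [this]; ring

/-- pull a configuration back along a field embedding whose image contains the roots. -/
theorem pullback {M : Type*} [Field M] (f : M →+* L) {d : M} (h : Cfg (f d) x)
    (hs : ∀ p, ∃ y, f y = x p) : ∃ y, Cfg d y := by
  choose y hy using hs
  have hT : ∀ i, f (orbT y i) = orbT x i := by intro i; simp [orbT, hy]
  refine ⟨y, ?_, ?_, ?_, ?_, ?_, ?_⟩
  · intro p q hpq
    apply h.inj
    rw [← hy, ← hy, hpq]
  · intro i j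
    apply f.injective
    rw [map_add, map_pow, hy, hy, h.step]
  · intro i
    apply f.injective
    simp only [map_mul, map_add, hy, h.ab, map_neg, map_one]
  · apply f.injective
    simp only [map_add, hT, h.e1, map_zero]
  · apply f.injective
    simp only [map_add, map_mul, hT, h.e2, map_ofNat]
  · apply f.injective
    simp only [map_mul, hT, h.e3, map_neg, map_ofNat]

end Cfg

theorem exists_cfg_splitting {K : Type*} [Field K] [CharZero K] (c : K)
    (h2 : 4 * c + 3 ≠ -2) (h3 : (4 * c + 3) ^ 3 + 108 ≠ 0)
    (h4 : (4 * c + 3) ^ 2 - 8 * (4 * c + 3) + 20 ≠ 0) :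
    ∃ x : Fin 3 × ZMod 4 → (Phi4 c).SplittingField,
      Cfg (algebraMap K (Phi4 c).SplittingField c) x := by
  set L := (Phi4 c).SplittingField with hL
  set Ω := AlgebraicClosure L with hΩ
  have : CharZero L := charZero_of_injective_algebraMap (algebraMap K L).injective
  have : CharZero Ω := charZero_of_injective_algebraMap (algebraMap L Ω).injective
  set f : K →+* Ω := (algebraMap L Ω).comp (algebraMap K L) with hf
  obtain ⟨x, hx⟩ := exists_cfg (f c)
    (by
      intro h; apply h2; apply f.injective
      simpa [map_ofNat] using h)
    (by
      intro h; apply h3; apply f.injective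
      simpa [map_ofNat] using h)
    (by
      intro h; apply h4; apply f.injective
      simpa [map_ofNat] using h)
  refine Cfg.pullback (algebraMap L Ω) (d := algebraMap K L c) hx ?_
  intro p
  have hr := hx.root p
  have hsp : ((Phi4 c).map (algebraMap K L)).Splits := SplittingField.splits (Phi4 c)
  rw [phi4_map] at hsp
  have hmap : (Phi4 (algebraMap K L c)).map (algebraMap L Ω) = Phi4 (f c) := phi4_map _ _
  have hx0 : ((Phi4 (algebraMap K L c)).map (algebraMap L Ω)).IsRoot (x p) := by
    rw [hmap]
    exact hr
  obtain ⟨y, hy⟩ := hsp.mem_range_of_isRoot (phi4_monic _).ne_zero hx0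
  exact ⟨y, hy⟩

/-- The Galois action on a labelling of the points of period four. -/
structure GalData {K L : Type*} [Field K] [Field L] [Algebra K L] (c : K)
    (x : Fin 3 × ZMod 4 → L) (s : (L ≃ₐ[K] L) →* Equiv.Perm (Fin 3))
    (r : (L ≃ₐ[K] L) → Fin 3 → ZMod 4) : Prop where
  cfg : Cfg (algebraMap K L c) x
  act : ∀ g i j, g (x (i, j)) = x (s g i, j + r g i)
  Tinj : Function.Injective (orbT x)
  Dne : ∀ i, orbD x i ≠ 0
  gen : ∀ g : L ≃ₐ[K] L, (∀ p, g (x p) = x p) → g = 1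

theorem orbT_shift {L : Type*} [Field L] (x : Fin 3 × ZMod 4 → L) (i : Fin 3) (l : ZMod 4) :
    x (i, 0 + l) + x (i, 1 + l) + x (i, 2 + l) + x (i, 3 + l) = orbT x i := by
  unfold orbT
  fin_cases l
  · change x (i, 0) + x (i, 1) + x (i, 2) + x (i, 3) = _
    ring
  · change x (i, 1) + x (i, 2) + x (i, 3) + x (i, 0) = _
    ring
  · change x (i, 2) + x (i, 3) + x (i, 0) + x (i, 1) = _
    ring
  · change x (i, 3) + x (i, 0) + x (i, 1) + x (i, 2) = _
    ring

/-- Parity character of `ZMod 4`. -/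
def sgn (z : ZMod 4) : ℤˣ := if 2 * z = 0 then 1 else -1

theorem sgn_add (a b : ZMod 4) : sgn (a + b) = sgn a * sgn b := by
  revert a b; decide

theorem orbD_shift {L : Type*} [Field L] (x : Fin 3 × ZMod 4 → L) (i : Fin 3) (l : ZMod 4) :
    x (i, 0 + l) - x (i, 1 + l) + x (i, 2 + l) - x (i, 3 + l) =
      ((sgn l : ℤˣ) : ℤ) * orbD x i := by
  unfold orbD
  fin_cases l
  · change x (i, 0) - x (i, 1) + x (i, 2) - x (i, 3) = (((1 : ℤˣ) : ℤ) : L) * _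
    push_cast; ring
  · change x (i, 1) - x (i, 2) + x (i, 3) - x (i, 0) = (((-1 : ℤˣ) : ℤ) : L) * _
    push_cast; ring
  · change x (i, 2) - x (i, 3) + x (i, 0) - x (i, 1) = (((1 : ℤˣ) : ℤ) : L) * _
    push_cast; ring
  · change x (i, 3) - x (i, 0) + x (i, 1) - x (i, 2) = (((-1 : ℤˣ) : ℤ) : L) * _
    push_cast; ring

theorem exists_galData {K L : Type*} [Field K] [Field L] [Algebra K L] (c : K)
    (x : Fin 3 × ZMod 4 → L) (hx : Cfg (algebraMap K L c) x)
    (hT : Function.Injective (orbT x)) (hD : ∀ i, orbD x i ≠ 0)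
    (hgen : ∀ g : L ≃ₐ[K] L, (∀ p, g (x p) = x p) → g = 1) :
    ∃ s r, GalData c x s r := by
  have h0 : ∀ (g : L ≃ₐ[K] L) (i : Fin 3), ∃ q : Fin 3 × ZMod 4, x q = g (x (i, 0)) := by
    intro g i
    apply hx.exists_of_root
    have h1 := hx.root (i, 0)
    have h2 := congrArg g h1
    rw [← phi4_map, map_zero, eval_map_algebraMap] at h2
    rw [← phi4_map, eval_map_algebraMap, ← h2]
    exact (aeval_algHom_apply (g : L →ₐ[K] L) _ _)
  choose q hq using h0
  have h1 : ∀ g i (n : ℕ), g (x (i, (n : ZMod 4))) = x ((q g i).1, (n : ZMod 4) + (q g i).2) := by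
    intro g i n
    induction n with
    | zero => simp [hq]
    | succ n ih =>
      push_cast
      rw [hx.step, map_add, map_pow, ih, AlgEquiv.commutes,
        show (n : ZMod 4) + 1 + (q g i).2 = (n + (q g i).2) + 1 by ring, hx.step]
  have h2 : ∀ g i j, g (x (i, j)) = x ((q g i).1, j + (q g i).2) := by
    intro g i j
    have := h1 g i j.val
    simpa using this
  have h3 : ∀ g i, g (orbT x i) = orbT x (q g i).1 := by
    intro g i
    rw [← orbT_shift x (q g i).1 (q g i).2, orbT]
    simp only [map_add, h2]
  obtain ⟨s, hs⟩ := exists_perm_hom (orbT x) hT (fun g i => ⟨_, (h3 g i).symm⟩)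
  refine ⟨s, fun g i => (q g i).2, hx, ?_, hT, hD, hgen⟩
  intro g i j
  have : s g i = (q g i).1 := by
    apply hT
    rw [hs, h3]
  rw [this, h2]

namespace GalData

variable {K L : Type*} [Field K] [Field L] [Algebra K L] {c : K}
    {x : Fin 3 × ZMod 4 → L} {s : (L ≃ₐ[K] L) →* Equiv.Perm (Fin 3)}
    {r : (L ≃ₐ[K] L) → Fin 3 → ZMod 4}

theorem act_T (h : GalData c x s r) (g : L ≃ₐ[K] L) (i : Fin 3) :
    g (orbT x i) = orbT x (s g i) := by
  rw [← orbT_shift x (s g i) (r g i), orbT]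
  simp only [map_add, h.act]

theorem act_D (h : GalData c x s r) (g : L ≃ₐ[K] L) (i : Fin 3) :
    g (orbD x i) = ((sgn (r g i) : ℤˣ) : ℤ) * orbD x (s g i) := by
  rw [← orbD_shift x (s g i) (r g i), orbD]
  simp only [map_add, map_sub, h.act]

theorem r_mul (h : GalData c x s r) (g k : L ≃ₐ[K] L) (i : Fin 3) :
    r (g * k) i = r k i + r g (s k i) := by
  have h1 := h.act (g * k) i 0
  rw [AlgEquiv.mul_apply, h.act, h.act] at h1
  have := h.cfg.inj h1
  simp only [Prod.mk.injEq, zero_add] at this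
  exact this.2.symm

theorem r_one (h : GalData c x s r) (i : Fin 3) : r 1 i = 0 := by
  have := h.r_mul 1 1 i
  simpa using this

/-- The discriminant square root. -/
theorem act_disc (h : GalData c x s r) (g : L ≃ₐ[K] L) :
    g ((orbT x 0 - orbT x 1) * (orbT x 1 - orbT x 2) * (orbT x 0 - orbT x 2)) =
      ((Equiv.Perm.sign (s g) : ℤˣ) : ℤ) *
      ((orbT x 0 - orbT x 1) * (orbT x 1 - orbT x 2) * (orbT x 0 - orbT x 2)) := by
  simp only [map_mul, map_sub, h.act_T]
  generalize s g = u
  have key : ∀ u : Equiv.Perm (Fin 3), (u 0 = 0 ∧ u 1 = 1 ∧ u 2 = 2 ∧ Equiv.Perm.sign u = 1) ∨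
      (u 0 = 1 ∧ u 1 = 2 ∧ u 2 = 0 ∧ Equiv.Perm.sign u = 1) ∨
      (u 0 = 2 ∧ u 1 = 0 ∧ u 2 = 1 ∧ Equiv.Perm.sign u = 1) ∨
      (u 0 = 0 ∧ u 1 = 2 ∧ u 2 = 1 ∧ Equiv.Perm.sign u = -1) ∨
      (u 0 = 1 ∧ u 1 = 0 ∧ u 2 = 2 ∧ Equiv.Perm.sign u = -1) ∨
      (u 0 = 2 ∧ u 1 = 1 ∧ u 2 = 0 ∧ Equiv.Perm.sign u = -1) := by decide
  rcases key u with ⟨h0, h1, h2, h3⟩ | ⟨h0, h1, h2, h3⟩ | ⟨h0, h1, h2, h3⟩ | ⟨h0, h1, h2, h3⟩ |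
    ⟨h0, h1, h2, h3⟩ | ⟨h0, h1, h2, h3⟩ <;>
  · rw [h0, h1, h2, h3]
    push_cast
    ring

theorem fixed [FiniteDimensional K L] [IsGalois K L] {z : L} (hz : ∀ g : L ≃ₐ[K] L, g z = z) :
    ∃ k : K, algebraMap K L k = z := by
  have := (IsGalois.mem_bot_iff_fixed (F := K) (E := L) z).2 hz
  exact IntermediateField.mem_bot.1 this

/-- parity character of the Galois group -/
theorem exists_chi (h : GalData c x s r) : ∃ χ : (L ≃ₐ[K] L) →* ℤˣ,
    ∀ g, χ g = sgn (r g 0 + r g 1 + r g 2) := by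
  have hsum : ∀ g, r g 0 + r g 1 + r g 2 = ∑ i, r g i := by
    intro g; rw [Fin.sum_univ_three]
  refine ⟨⟨⟨fun g => sgn (r g 0 + r g 1 + r g 2), ?_⟩, ?_⟩, fun g => rfl⟩
  · simp [h.r_one]; decide
  · intro g k
    change sgn _ = sgn _ * sgn _
    rw [← sgn_add, hsum, hsum, hsum]
    congr 1
    simp only [h.r_mul]
    rw [Finset.sum_add_distrib, Equiv.sum_comp (s k) (r g), add_comm]

theorem act_prodD (h : GalData c x s r) (g : L ≃ₐ[K] L) :
    g (orbD x 0 * orbD x 1 * orbD x 2) = ((sgn (r g 0 + r g 1 + r g 2) : ℤˣ) : ℤ) *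
      (orbD x 0 * orbD x 1 * orbD x 2) := by
  have hp : orbD x (s g 0) * orbD x (s g 1) * orbD x (s g 2) =
      orbD x 0 * orbD x 1 * orbD x 2 := by
    rw [← Fin.prod_univ_three (fun i => orbD x i), ← Fin.prod_univ_three
      (fun i => orbD x (s g i)), Equiv.prod_comp (s g) (orbD x)]
  rw [sgn_add, sgn_add, map_mul, map_mul, h.act_D, h.act_D, h.act_D, ← hp]
  push_cast
  ring

end GalData

theorem units_cases (u : ℤˣ) : u = 1 ∨ u = -1 := Int.units_eq_one_or u

theorem sgn_cases (z : ZMod 4) : sgn z = 1 ∧ 2 * z = 0 ∨ sgn z = -1 ∧ 2 * z = 2 := by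
  revert z; decide

namespace GalData

variable {K L : Type*} [Field K] [Field L] [Algebra K L] {c : K}
    {x : Fin 3 × ZMod 4 → L} {s : (L ≃ₐ[K] L) →* Equiv.Perm (Fin 3)}
    {r : (L ≃ₐ[K] L) → Fin 3 → ZMod 4}

theorem s_surj [FiniteDimensional K L] [IsGalois K L] (h : GalData c x s r)
    (hg : GoodParam (4 * c + 3)) : Function.Surjective s := by
  rw [← MonoidHom.range_eq_top]
  apply perm_three_gen
  · intro i
    by_contra hc
    push Not at hc
    obtain ⟨t, ht⟩ := fixed (K := K) (z := orbT x i) (by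
      intro g
      rw [h.act_T, hc (s g) ⟨g, rfl⟩])
    apply hg.root t
    apply (algebraMap K L).injective
    have := h.cfg.T_root i
    rw [← ht] at this
    simpa [map_ofNat] using this
  · by_contra hc
    push Not at hc
    obtain ⟨y, hy⟩ := fixed (K := K)
      (z := (orbT x 0 - orbT x 1) * (orbT x 1 - orbT x 2) * (orbT x 0 - orbT x 2)) (by
      intro g
      rw [h.act_disc]
      rcases units_cases (Equiv.Perm.sign (s g)) with h1 | h1
      · rw [h1]; simp
      · exact absurd h1 (hc (s g) ⟨g, rfl⟩))
    apply hg.disc y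
    apply (algebraMap K L).injective
    have := h.cfg.disc_eq
    rw [← hy] at this
    simpa [map_ofNat] using this

theorem exists_odd [FiniteDimensional K L] [IsGalois K L] (h : GalData c x s r)
    (hg : GoodParam (4 * c + 3)) :
    ∃ n, s n = 1 ∧ 2 * (r n 0 + r n 1 + r n 2) = 2 := by
  by_contra hc
  push Not at hc
  obtain ⟨χ, hχ⟩ := h.exists_chi
  have hs := h.s_surj hg
  have hker : s.ker ≤ χ.ker := by
    intro n hn
    rw [MonoidHom.mem_ker] at hn ⊢
    rw [hχ]
    rcases sgn_cases (r n 0 + r n 1 + r n 2) with h1 | h1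
    · exact h1.1
    · exact absurd h1.2 (hc n hn)
  set χ' : Equiv.Perm (Fin 3) →* ℤˣ := s.liftOfSurjective hs ⟨χ, hker⟩ with hχ'
  have hlift : ∀ g, χ' (s g) = χ g := by
    intro g
    exact s.liftOfRightInverse_comp_apply _ _ ⟨χ, hker⟩ g
  by_cases hsurj : Function.Surjective χ'
  · have hsign := Equiv.Perm.eq_sign_of_surjective_hom hsurj
    obtain ⟨y, hy⟩ := fixed (K := K)
      (z := (orbD x 0 * orbD x 1 * orbD x 2) *
        ((orbT x 0 - orbT x 1) * (orbT x 1 - orbT x 2) * (orbT x 0 - orbT x 2))) (by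
      intro g
      rw [map_mul, h.act_disc, h.act_prodD, ← hχ, ← hlift, hsign]
      rcases units_cases (Equiv.Perm.sign (s g)) with h1 | h1 <;>
      · rw [h1]; push_cast; ring)
    apply hg.nd y
    apply (algebraMap K L).injective
    rw [map_pow, hy, mul_pow, h.cfg.disc_eq, h.cfg.prodD_sq]
    simp [map_ofNat]
  · have htriv : ∀ u, χ' u = 1 := by
      intro u
      by_contra hu
      apply hsurj
      intro z
      rcases units_cases z with rfl | rfl
      · exact ⟨1, map_one _⟩
      · exact ⟨u, (units_cases _).resolve_left hu⟩
    obtain ⟨y, hy⟩ := fixed (K := K) (z := (orbD x 0 * orbD x 1 * orbD x 2)) (by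
      intro g
      rw [h.act_prodD, ← hχ, ← hlift, htriv]
      simp)
    apply hg.nrm y
    apply (algebraMap K L).injective
    rw [map_pow, hy, h.cfg.prodD_sq]
    simp [map_ofNat]

theorem exists_nonconst [FiniteDimensional K L] [IsGalois K L] [CharZero L] (h : GalData c x s r)
    (hg : GoodParam (4 * c + 3)) :
    ∃ n, s n = 1 ∧ ∃ i k, 2 * r n i ≠ 2 * r n k := by
  by_contra hc
  push Not at hc
  have hs := h.s_surj hg
  obtain ⟨ρ, hρ⟩ := hs (finRotate 3)
  obtain ⟨κ, hκ⟩ := hs (Equiv.swap 1 2)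
  set U0 : L := orbD x 1 * orbD x 2 with hU0
  have hker : ∀ n, s n = 1 → n U0 = U0 := by
    intro n hn
    have h12 := hc n hn 1 2
    have hh : sgn (r n 1) = sgn (r n 2) := by unfold sgn; rw [h12]
    rw [hU0, map_mul, h.act_D, h.act_D, hn, hh]
    rcases units_cases (sgn (r n 2)) with h1 | h1 <;>
    · rw [h1]; simp
  have hsame : ∀ g k, s g = s k → g U0 = k U0 := by
    intro g k hgk
    have := hker (k⁻¹ * g) (by rw [map_mul, map_inv, hgk, inv_mul_cancel])
    have h2 := congrArg k this
    rwa [← AlgEquiv.mul_apply, mul_inv_cancel_left] at h2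
  set U1 : L := ρ U0 with hU1
  set U2 : L := ρ U1 with hU2
  obtain ⟨ε1, he1, hu1⟩ : ∃ e : L, e ^ 2 = 1 ∧ U1 = e * (orbD x 2 * orbD x 0) := by
    refine ⟨((sgn (r ρ 1) : ℤˣ) : ℤ) * ((sgn (r ρ 2) : ℤˣ) : ℤ), ?_, ?_⟩
    · rcases units_cases (sgn (r ρ 1)) with h1 | h1 <;>
      rcases units_cases (sgn (r ρ 2)) with h2 | h2 <;> simp [h1, h2]
    · rw [hU1, hU0, map_mul, h.act_D, h.act_D, hρ,
        show finRotate 3 1 = 2 by decide, show finRotate 3 2 = 0 by decide]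
      ring
  obtain ⟨ε2, he2, hu2⟩ : ∃ e : L, e ^ 2 = 1 ∧ U2 = e * (orbD x 0 * orbD x 1) := by
    have hpm : ∀ z : ℤˣ, ρ (((z : ℤˣ) : ℤ) : L) = ((z : ℤˣ) : ℤ) := fun z => map_intCast ρ _
    have hee : ρ ε1 ^ 2 = 1 := by rw [← map_pow, he1, map_one]
    refine ⟨ρ ε1 * (((sgn (r ρ 2) : ℤˣ) : ℤ) * ((sgn (r ρ 0) : ℤˣ) : ℤ)), ?_, ?_⟩
    · rw [mul_pow, hee]
      rcases units_cases (sgn (r ρ 0)) with h1 | h1 <;>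
      rcases units_cases (sgn (r ρ 2)) with h2 | h2 <;> simp [h1, h2]
    · rw [hU2, hu1, map_mul, map_mul, h.act_D, h.act_D, hρ,
        show finRotate 3 0 = 1 by decide, show finRotate 3 2 = 0 by decide]
      ring
  obtain ⟨η, hη, hκ0⟩ : ∃ e : ℤˣ, True ∧ κ U0 = ((e : ℤ) : L) * U0 := by
    refine ⟨(sgn (r κ 1)) * (sgn (r κ 2)), trivial, ?_⟩
    · rw [hU0, map_mul, h.act_D, h.act_D, hκ,
        show Equiv.swap (1 : Fin 3) 2 1 = 2 by decide,
        show Equiv.swap (1 : Fin 3) 2 2 = 1 by decide]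
      push_cast
      ring
  have hη3 : ((η : ℤ) : L) ^ 2 = 1 := by
    rcases units_cases η with rfl | rfl <;> simp
  have hκ1 : κ U1 = ((η : ℤ) : L) * U2 := by
    have := hsame (κ * ρ) (ρ * ρ * κ) (by
      simp only [map_mul, hκ, hρ]; decide)
    simp only [AlgEquiv.mul_apply] at this
    rw [hU1, this, hκ0, map_mul, map_mul, map_intCast, map_intCast]
  have hκ2 : κ U2 = ((η : ℤ) : L) * U1 := by
    have := hsame (κ * ρ * ρ) (ρ * κ) (by
      simp only [map_mul, hκ, hρ]; decide)
    simp only [AlgEquiv.mul_apply] at this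
    rw [hU2, hU1, this, hκ0, map_mul, map_intCast]
  have hρ2 : ρ U2 = U0 := by
    have := hsame (ρ * ρ * ρ) 1 (by
      simp only [map_mul, hρ, map_one]; decide)
    simpa only [AlgEquiv.mul_apply, AlgEquiv.one_apply] using this
  set N : L := (orbD x 0 * orbD x 1 * orbD x 2) ^ 2 with hN
  have hNne : N ≠ 0 := pow_ne_zero _ (mul_ne_zero (mul_ne_zero (h.Dne 0) (h.Dne 1)) (h.Dne 2))
  have hP : U0 * U1 * U2 = ε1 * ε2 * N := by
    rw [hN, hu1, hu2, hU0]; ring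
  have hee : (ε1 * ε2) ^ 2 = 1 := by rw [mul_pow, he1, he2, one_mul]
  have hee2 : ε1 * ε2 = 1 ∨ ε1 * ε2 = -1 := mul_self_eq_one_iff.1 (by rw [← sq, hee])
  have hNK : N = algebraMap K L (4 * ((4 * c + 3) ^ 2 - 8 * (4 * c + 3) + 20)) := by
    rw [hN, h.cfg.prodD_sq]; simp [map_ofNat]
  have hNfix : κ N = N := by rw [hNK, AlgEquiv.commutes]
  have hPfix : κ (U0 * U1 * U2) = U0 * U1 * U2 := by
    rw [hP, map_mul, hNfix]
    rcases hee2 with h1 | h1 <;> rw [h1] <;> simp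
  have hPne : U0 * U1 * U2 ≠ 0 := by
    rw [hP]
    rcases hee2 with h1 | h1 <;> rw [h1] <;> simpa using hNne
  have hη1 : η = 1 := by
    rcases units_cases η with h1 | h1
    · exact h1
    · exfalso
      rw [map_mul, map_mul, hκ0, hκ1, hκ2, h1] at hPfix
      push_cast at hPfix
      have : 2 * (U0 * U1 * U2) = 0 := by linear_combination -hPfix
      exact hPne (by simpa using this)
  have hstab : ∀ g, s g 0 = 0 → g U0 = U0 := by
    intro g hg0
    have key : ∀ u : Equiv.Perm (Fin 3), u 0 = 0 → u = 1 ∨ u = Equiv.swap 1 2 := by decide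
    rcases key (s g) hg0 with h1 | h1
    · exact hker g h1
    · rw [hsame g κ (by rw [h1, hκ]), hκ0, hη1]
      simp
  obtain ⟨y, hy⟩ := fixed (K := K) (z := U0 + U1 + U2) (by
    set U : Fin 3 → L := ![U0, U1, U2] with hU
    set t : Fin 3 → (L ≃ₐ[K] L) := ![1, ρ, ρ * ρ] with ht
    have htU : ∀ i, t i U0 = U i := by
      intro i
      fin_cases i <;> rfl
    have hst : ∀ i, s (t i) 0 = i := by
      intro i
      fin_cases i
      · change s 1 0 = 0
        simp
      · change s ρ 0 = 1
        rw [hρ]; decide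
      · change s (ρ * ρ) 0 = 2
        rw [map_mul, hρ]; decide
    intro g
    have hgU : ∀ i, g (U i) = U (s g i) := by
      intro i
      have := hstab ((t (s g i))⁻¹ * g * t i) (by
        rw [map_mul, map_mul, map_inv, Equiv.Perm.mul_apply, Equiv.Perm.mul_apply, hst,
          Equiv.Perm.inv_eq_iff_eq, hst])
      have h2 := congrArg (t (s g i)) this
      rw [← AlgEquiv.mul_apply, mul_assoc, mul_inv_cancel_left, AlgEquiv.mul_apply, htU, htU] at h2
      exact h2
    have hsumU : U0 + U1 + U2 = ∑ i, U i := by rw [Fin.sum_univ_three]; rfl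
    rw [hsumU, map_sum]
    simp only [hgU]
    exact Equiv.sum_comp (s g) U)
  have hU0sq : U0 ^ 2 = orbD x 1 ^ 2 * orbD x 2 ^ 2 := by rw [hU0]; ring
  have hU1sq : U1 ^ 2 = orbD x 2 ^ 2 * orbD x 0 ^ 2 := by
    rw [hu1]; linear_combination (orbD x 2 * orbD x 0) ^ 2 * he1
  have hU2sq : U2 ^ 2 = orbD x 0 ^ 2 * orbD x 1 ^ 2 := by
    rw [hu2]; linear_combination (orbD x 0 * orbD x 1) ^ 2 * he2
  have hT2 : orbT x 2 = - orbT x 0 - orbT x 1 := by linear_combination h.cfg.e1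
  have c1 : orbD x 0 ^ 2 + orbD x 1 ^ 2 + orbD x 2 ^ 2 =
      12 - 2 * (4 * algebraMap K L c + 3) := by
    rw [h.cfg.D_sq, h.cfg.D_sq, h.cfg.D_sq, ← h.cfg.e2, hT2]
    ring
  have c2 : U0 ^ 2 + U1 ^ 2 + U2 ^ 2 =
      ((4 * algebraMap K L c + 3) - 4) * ((4 * algebraMap K L c + 3) - 12) := by
    rw [hU0sq, hU1sq, hU2sq, h.cfg.D_sq, h.cfg.D_sq, h.cfg.D_sq, ← h.cfg.e2, hT2]
    ring
  have c3 : (U0 * U1) ^ 2 + (U1 * U2) ^ 2 + (U0 * U2) ^ 2 =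
      N * (12 - 2 * (4 * algebraMap K L c + 3)) := by
    rw [← c1, mul_pow U0 U1, mul_pow U1 U2, mul_pow U0 U2, hU0sq, hU1sq, hU2sq, hN]
    ring
  have main : (algebraMap K L y ^ 2 -
      ((4 * algebraMap K L c + 3) - 4) * ((4 * algebraMap K L c + 3) - 12)) ^ 2 =
      4 * (N * (12 - 2 * (4 * algebraMap K L c + 3)) +
        2 * (ε1 * ε2 * N) * algebraMap K L y) := by
    rw [← c2, ← c3, ← hP, hy]
    ring
  rcases hee2 with h1 | h1
  · apply hg.quart y
    apply (algebraMap K L).injective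
    rw [h1, hNK] at main
    simp only [map_mul, map_sub, map_add, map_pow, map_ofNat] at main ⊢
    linear_combination main
  · apply hg.quart (-y)
    apply (algebraMap K L).injective
    rw [h1, hNK] at main
    simp only [map_mul, map_sub, map_add, map_pow, map_ofNat, map_neg] at main ⊢
    linear_combination main

theorem all_of_good [FiniteDimensional K L] [IsGalois K L] [CharZero L] (h : GalData c x s r)
    (hg : GoodParam (4 * c + 3)) (u : Equiv.Perm (Fin 3)) (v : Fin 3 → ZMod 4) :
    ∃ g, s g = u ∧ r g = v := by
  have hs := h.s_surj hg
  let R : AddSubmonoid (Fin 3 → ZMod 4) :=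
    { carrier := {v | ∃ n, s n = 1 ∧ r n = v}
      zero_mem' := ⟨1, map_one s, funext h.r_one⟩
      add_mem' := by
        rintro a b ⟨n, hn, rfl⟩ ⟨k, hk, rfl⟩
        refine ⟨n * k, by rw [map_mul, hn, hk, one_mul], ?_⟩
        funext i
        rw [h.r_mul, hk, Equiv.Perm.one_apply, Pi.add_apply, add_comm] }
  have hR : R = ⊤ := by
    apply vec_top
    · rintro u v ⟨n, hn, rfl⟩
      obtain ⟨g, rfl⟩ := hs u
      refine ⟨g⁻¹ * (n * g), by rw [map_mul, map_mul, map_inv, hn]; group, ?_⟩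
      funext i
      have h1 := h.r_mul g⁻¹ g i
      rw [inv_mul_cancel, h.r_one] at h1
      rw [h.r_mul, h.r_mul, map_mul, hn, one_mul]
      linear_combination -h1
    · obtain ⟨n, hn, h1⟩ := h.exists_odd hg
      exact ⟨r n, ⟨n, hn, rfl⟩, h1⟩
    · obtain ⟨n, hn, h1⟩ := h.exists_nonconst hg
      exact ⟨r n, ⟨n, hn, rfl⟩, h1⟩
  obtain ⟨g, rfl⟩ := hs u
  have hm : v - r g ∈ R := by rw [hR]; trivial
  obtain ⟨n, hn, hv⟩ := hm
  refine ⟨g * n, by rw [map_mul, hn, mul_one], ?_⟩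
  funext i
  rw [h.r_mul, hn, hv]
  simp

end GalData

/-- The simultaneous rotation of the three 4-cycles. -/
def rot : Equiv.Perm (Fin 3 × ZMod 4) :=
  Equiv.prodCongr (Equiv.refl _) (Equiv.addRight 1)

/-- The wreath product of `ZMod 4` by the symmetric group on three letters. -/
def wreath : Subgroup (Equiv.Perm (Fin 3 × ZMod 4)) := Subgroup.centralizer {rot}

theorem rot_apply (i : Fin 3) (j : ZMod 4) : rot (i, j) = (i, j + 1) := rfl

theorem mem_wreath {w : Equiv.Perm (Fin 3 × ZMod 4)} :
    w ∈ wreath ↔ ∀ p, w (rot p) = rot (w p) := by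
  unfold wreath
  rw [Subgroup.mem_centralizer_singleton_iff]
  constructor
  · intro h p
    exact (Equiv.ext_iff.1 h p)
  · intro h
    exact Equiv.ext h

theorem wreath_form {w : Equiv.Perm (Fin 3 × ZMod 4)} (hw : w ∈ wreath) :
    ∃ (u : Equiv.Perm (Fin 3)) (v : Fin 3 → ZMod 4), ∀ i j, w (i, j) = (u i, j + v i) := by
  rw [mem_wreath] at hw
  have h1 : ∀ i (n : ℕ), w (i, (n : ZMod 4)) = ((w (i, 0)).1, (n : ZMod 4) + (w (i, 0)).2) := by
    intro i n
    induction n with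
    | zero => simp
    | succ n ih =>
      push_cast
      rw [← rot_apply, hw, ih, rot_apply]
      congr 1
      ring
  have h2 : ∀ i j, w (i, j) = ((w (i, 0)).1, j + (w (i, 0)).2) := by
    intro i j
    have := h1 i j.val
    simpa using this
  have hinj : Function.Injective (fun i => (w (i, 0)).1) := by
    intro i k hik
    have hik' : (w (i, 0)).1 = (w (k, 0)).1 := hik
    have : w (i, 0) = w (k, (w (i, 0)).2 - (w (k, 0)).2) := by
      rw [h2 k, sub_add_cancel, ← hik']
    have := w.injective this
    exact (Prod.mk.inj this).1
  refine ⟨Equiv.ofBijective _ (Finite.injective_iff_bijective.1 hinj), fun i => (w (i, 0)).2, ?_⟩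
  intro i j
  exact h2 i j

namespace GalData

variable {K L : Type*} [Field K] [Field L] [Algebra K L] {c : K}
    {x : Fin 3 × ZMod 4 → L} {s : (L ≃ₐ[K] L) →* Equiv.Perm (Fin 3)}
    {r : (L ≃ₐ[K] L) → Fin 3 → ZMod 4}

theorem exists_embed (h : GalData c x s r) : ∃ φ : (L ≃ₐ[K] L) →* wreath,
    Function.Injective φ ∧
    ∀ g i j, (φ g : Equiv.Perm (Fin 3 × ZMod 4)) (i, j) = (s g i, j + r g i) := by
  obtain ⟨ψ, hψ⟩ := exists_perm_hom x h.cfg.inj (fun g p => ⟨_, (h.act g p.1 p.2).symm⟩)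
  have hf : ∀ g i j, ψ g (i, j) = (s g i, j + r g i) := by
    intro g i j
    apply h.cfg.inj
    rw [hψ, h.act]
  have hm : ∀ g, ψ g ∈ wreath := by
    intro g
    rw [mem_wreath]
    rintro ⟨i, j⟩
    rw [rot_apply, hf, hf, rot_apply]
    congr 1
    ring
  refine ⟨ψ.codRestrict wreath hm, ?_, fun g i j => hf g i j⟩
  rw [injective_iff_map_eq_one]
  intro g hg
  apply h.gen
  intro p
  have : ψ g = 1 := congrArg Subtype.val hg
  rw [← hψ, this]
  rfl

theorem equiv_wreath (h : GalData c x s r)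
    (hall : ∀ (u : Equiv.Perm (Fin 3)) (v : Fin 3 → ZMod 4), ∃ g, s g = u ∧ r g = v) :
    Nonempty ((L ≃ₐ[K] L) ≃* wreath) := by
  obtain ⟨φ, hinj, hφ⟩ := h.exists_embed
  refine ⟨MulEquiv.ofBijective φ ⟨hinj, ?_⟩⟩
  rintro ⟨w, hw⟩
  obtain ⟨u, v, huv⟩ := wreath_form hw
  obtain ⟨g, rfl, rfl⟩ := hall u v
  refine ⟨g, Subtype.ext (Equiv.ext ?_)⟩
  rintro ⟨i, j⟩
  rw [hφ, huv]

theorem realise (h : GalData c x s r) (he : Nonempty ((L ≃ₐ[K] L) ≃* wreath))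
    (v : Fin 3 → ZMod 4) : ∃ g, s g = 1 ∧ r g = v := by
  obtain ⟨φ, hinj, hφ⟩ := h.exists_embed
  obtain ⟨e⟩ := he
  have hsurj : Function.Surjective φ := by
    have h1 : Function.Injective (φ ∘ e.symm) := hinj.comp e.symm.injective
    have h2 := Finite.surjective_of_injective h1
    exact h2.of_comp
  let w : Equiv.Perm (Fin 3 × ZMod 4) :=
    { toFun := fun p => (p.1, p.2 + v p.1)
      invFun := fun p => (p.1, p.2 - v p.1)
      left_inv := by intro p; simp
      right_inv := by intro p; simp }
  have hw : w ∈ wreath := by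
    rw [mem_wreath]
    rintro ⟨i, j⟩
    change (i, j + 1 + v i) = (i, j + v i + 1)
    congr 1
    ring
  obtain ⟨g, hg⟩ := hsurj ⟨w, hw⟩
  have hgw : ∀ i j, (i, j + v i) = (s g i, j + r g i) := by
    intro i j
    rw [← hφ, hg]
    rfl
  refine ⟨g, ?_, ?_⟩
  · ext1 i
    exact (Prod.mk.inj (hgw i 0)).1.symm
  · funext i
    have := (Prod.mk.inj (hgw i 0)).2
    simpa using this.symm

theorem irreducible_of_all [FiniteDimensional K L] (h : GalData c x s r)
    (hall : ∀ (u : Equiv.Perm (Fin 3)) (v : Fin 3 → ZMod 4), ∃ g, s g = u ∧ r g = v) :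
    Irreducible (Phi4 c) := by
  classical
  have hIntg : IsIntegral K (x (0, 0)) := Algebra.IsIntegral.isIntegral _
  have hroot : aeval (x (0, 0)) (Phi4 c) = 0 := by
    have := h.cfg.root (0, 0)
    rwa [← phi4_map, eval_map_algebraMap] at this
  have hdvd := minpoly.dvd K (x (0, 0)) hroot
  have hall2 : ∀ q, aeval (x q) (minpoly K (x (0, 0))) = 0 := by
    rintro ⟨i, j⟩
    obtain ⟨g, hg1, hg2⟩ := hall (Equiv.swap 0 i) (fun _ => j)
    have h1 : x (i, j) = (g : L →ₐ[K] L) (x (0, 0)) := by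
      have := h.act g 0 0
      rw [hg1, hg2] at this
      simpa using this.symm
    rw [h1, aeval_algHom_apply, minpoly.aeval, map_zero]
  have hne : (minpoly K (x (0, 0))).map (algebraMap K L) ≠ 0 :=
    ((minpoly.monic hIntg).map _).ne_zero
  have hdeg : 12 ≤ (minpoly K (x (0, 0))).natDegree := by
    have hsub : (Finset.univ.image x) ⊆
        ((minpoly K (x (0, 0))).map (algebraMap K L)).roots.toFinset := by
      intro w hw
      obtain ⟨p, -, rfl⟩ := Finset.mem_image.1 hw
      rw [Multiset.mem_toFinset, mem_roots hne, IsRoot, eval_map_algebraMap]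
      exact hall2 p
    have h1 := Finset.card_le_card hsub
    have h2 := Multiset.toFinset_card_le ((minpoly K (x (0, 0))).map (algebraMap K L)).roots
    have h3 := card_roots' ((minpoly K (x (0, 0))).map (algebraMap K L))
    rw [natDegree_map] at h3
    rw [Finset.card_image_of_injective _ h.cfg.inj,
      Finset.card_univ, Fintype.card_prod, ZMod.card, Fintype.card_fin] at h1
    omega
  have heq := eq_of_monic_of_dvd_of_natDegree_le (minpoly.monic hIntg) (phi4_monic c) hdvd
    (by rw [phi4_natDegree]; exact hdeg)
  rw [heq]
  exact minpoly.irreducible hIntg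

end GalData

theorem exists_galData_splitting {K : Type*} [Field K] [CharZero K] (c : K)
    (h2 : 4 * c + 3 ≠ -2) (h3 : (4 * c + 3) ^ 3 + 108 ≠ 0)
    (h4 : (4 * c + 3) ^ 2 - 8 * (4 * c + 3) + 20 ≠ 0) :
    ∃ (x : Fin 3 × ZMod 4 → (Phi4 c).SplittingField)
      (s : ((Phi4 c).SplittingField ≃ₐ[K] (Phi4 c).SplittingField) →* Equiv.Perm (Fin 3))
      (r : ((Phi4 c).SplittingField ≃ₐ[K] (Phi4 c).SplittingField) → Fin 3 → ZMod 4),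
      GalData c x s r := by
  obtain ⟨x, hx⟩ := exists_cfg_splitting c h2 h3 h4
  have hcz : CharZero (Phi4 c).SplittingField :=
    charZero_of_injective_algebraMap (algebraMap K (Phi4 c).SplittingField).injective
  have h40 : (4 : (Phi4 c).SplittingField) ≠ 0 := by norm_num
  have hT := hx.T_inj h40 (by
    intro h; apply h3
    apply (algebraMap K (Phi4 c).SplittingField).injective
    simpa [map_ofNat] using h)
  have hD := hx.D_ne h40 (by
    intro h; apply h4
    apply (algebraMap K (Phi4 c).SplittingField).injective
    simpa [map_ofNat] using h)
  obtain ⟨s, r, hG⟩ := exists_galData c x hx hT hD (by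
    intro g hg
    apply Polynomial.Gal.ext
    intro z hz
    rw [mem_rootSet] at hz
    have hz2 := hz.2
    rw [← eval_map_algebraMap, phi4_map] at hz2
    obtain ⟨p, rfl⟩ := hx.exists_of_root hz2
    exact hg p)
  exact ⟨x, s, r, hG⟩

theorem good_conclusion {K : Type*} [Field K] [CharZero K] (c : K) (hg : GoodParam (4 * c + 3)) :
    Irreducible (Phi4 c) ∧ Nonempty ((Phi4 c).Gal ≃* wreath) := by
  obtain ⟨x, s, r, hG⟩ := exists_galData_splitting c
    (by
      intro h
      apply hg.root (-2)
      rw [h]; ring)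
    (by
      intro h
      apply hg.disc 0
      rw [h]; ring)
    (by
      intro h
      apply hg.nrm 0
      rw [h]; ring)
  have hcz : CharZero (Phi4 c).SplittingField :=
    charZero_of_injective_algebraMap (algebraMap K (Phi4 c).SplittingField).injective
  have hgal : IsGalois K (Phi4 c).SplittingField := ⟨⟩
  have hall := hG.all_of_good hg
  exact ⟨hG.irreducible_of_all hall, hG.equiv_wreath hall⟩

theorem not_irreducible_eta (c t : ℚ) (ht : t ^ 3 + (4 * c + 3) * t + 4 = 0) :
    ¬ Irreducible (Phi4 c) := by
  intro hirr
  have ht0 : t ≠ 0 := by rintro rfl; norm_num at ht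
  have hc : c = -(t ^ 3 + 3 * t + 4) / (4 * t) := by
    field_simp
    linear_combination ht
  set q : ℚ[X] := X ^ 4 + C (-t) * X ^ 3 + C ((t ^ 2 - t) / 2 + 2 * c) * X ^ 2 +
    C ((t ^ 2 + t + 2) / 2 - c * t) * X + C (c * t + 1 + c * (t ^ 2 + 2 - t) / 2 + c ^ 2) with hq
  set A : ℚ[X] := X ^ 4 + C (2 * c) * X ^ 2 + X + C (1 + c + c ^ 2) with hA
  set B : ℚ[X] := -X ^ 3 - C (1 / 2) * X ^ 2 + C (1 / 2 - c) * X + C (c / 2) with hB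
  set D : ℚ[X] := C (1 / 2) * (X ^ 2 + X + C c) with hD
  set m : ℚ := 4 * c + 3 with hm
  set h : ℚ[X] := A ^ 2 + A * B * C (-t) + A * D * C (t ^ 2 - 2 * (m + t ^ 2)) +
    B ^ 2 * C (m + t ^ 2) + B * D * C (-t * (m + t ^ 2)) + D ^ 2 * C ((m + t ^ 2) ^ 2) with hh
  have hfac : Phi4 c = q * h := by
    apply Polynomial.funext
    intro z
    rw [phi4_eval, hh, hq, hA, hB, hD]
    simp only [eval_add, eval_mul, eval_sub, eval_neg, eval_pow, eval_X, eval_C]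
    rw [hm, hc]
    field_simp
    ring
  have hqd : q.natDegree = 4 := by
    rw [hq]; compute_degree!
  have hq0 : q ≠ 0 := by intro h0; rw [h0] at hqd; simp at hqd
  have hne := (phi4_monic c).ne_zero
  rw [hfac] at hne
  have hh0 : h ≠ 0 := right_ne_zero_of_mul hne
  have hdeg := phi4_natDegree c
  rw [hfac, natDegree_mul hq0 hh0, hqd] at hdeg
  rcases hirr.isUnit_or_isUnit hfac with hu | hu
  · have := natDegree_eq_zero_of_isUnit hu
    omega
  · have := natDegree_eq_zero_of_isUnit hu
    omega

theorem bad_lambda {K L : Type*} [Field K] [Field L] [Algebra K L] [CharZero L] {c : K}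
    {x : Fin 3 × ZMod 4 → L} {s : (L ≃ₐ[K] L) →* Equiv.Perm (Fin 3)}
    {r : (L ≃ₐ[K] L) → Fin 3 → ZMod 4} (h : GalData c x s r) (y : K)
    (hy : y ^ 2 = 4 * ((4 * c + 3) ^ 2 - 8 * (4 * c + 3) + 20)) :
    ¬ Nonempty ((L ≃ₐ[K] L) ≃* wreath) := by
  intro he
  obtain ⟨g, hs, hr⟩ := h.realise he ![1, 0, 0]
  have hP := h.cfg.prodD_sq
  have h1 : (orbD x 0 * orbD x 1 * orbD x 2) ^ 2 = (algebraMap K L y) ^ 2 := by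
    rw [hP, ← map_pow, hy]
    simp [map_ofNat]
  have h2 := h.act_prodD g
  rw [hr] at h2
  have h3 : sgn ((![1, 0, 0] : Fin 3 → ZMod 4) 0 + (![1, 0, 0] : Fin 3 → ZMod 4) 1 +
      (![1, 0, 0] : Fin 3 → ZMod 4) 2) = -1 := by decide
  rw [h3] at h2
  have h4 : g (orbD x 0 * orbD x 1 * orbD x 2) = orbD x 0 * orbD x 1 * orbD x 2 := by
    rcases sq_eq_sq_iff_eq_or_eq_neg.1 h1 with h5 | h5 <;> rw [h5] <;> simp
  have h5 : orbD x 0 * orbD x 1 * orbD x 2 ≠ 0 :=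
    mul_ne_zero (mul_ne_zero (h.Dne 0) (h.Dne 1)) (h.Dne 2)
  rw [h4] at h2
  push_cast at h2
  apply h5
  have : 2 * (orbD x 0 * orbD x 1 * orbD x 2) = 0 := by linear_combination h2
  simpa using this

theorem bad_five_halves {K L : Type*} [Field K] [Field L] [Algebra K L] [CharZero L] {c : K}
    {x : Fin 3 × ZMod 4 → L} {s : (L ≃ₐ[K] L) →* Equiv.Perm (Fin 3)}
    {r : (L ≃ₐ[K] L) → Fin 3 → ZMod 4} (h : GalData c x s r)
    (hm : 4 * c + 3 = -7) :
    ¬ Nonempty ((L ≃ₐ[K] L) ≃* wreath) := by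
  intro he
  obtain ⟨g, hs, hr⟩ := h.realise he ![0, 1, 0]
  have hmL : 4 * algebraMap K L c + 3 = -7 := by
    have := congrArg (algebraMap K L) hm
    simpa [map_ofNat] using this
  have h1 : (orbD x 1 * orbD x 2) ^ 2 = (-13 + 2 * orbT x 0 + 3 * orbT x 0 ^ 2) ^ 2 := by
    have e1 := h.cfg.e1
    have e2 := h.cfg.e2
    have e3 := h.cfg.T_root 0
    rw [mul_pow, h.cfg.D_sq, h.cfg.D_sq]
    rw [hmL] at e2 e3
    have hp : orbT x 1 * orbT x 2 = orbT x 0 ^ 2 - 7 := by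
      linear_combination e2 - orbT x 0 * e1
    have hq : orbT x 1 ^ 2 + orbT x 2 ^ 2 = 14 - orbT x 0 ^ 2 := by
      linear_combination (orbT x 1 + orbT x 2 - orbT x 0) * e1 - 2 * hp
    linear_combination (orbT x 1 * orbT x 2 + orbT x 0 ^ 2 - 7) * hp + 4 * hq +
      (-8 * orbT x 0 - 12) * e3
  have h2 : g (orbD x 1 * orbD x 2) = -(orbD x 1 * orbD x 2) := by
    rw [map_mul, h.act_D, h.act_D, hs, hr]
    have a1 : sgn ((![0, 1, 0] : Fin 3 → ZMod 4) 1) = -1 := by decide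
    have a2 : sgn ((![0, 1, 0] : Fin 3 → ZMod 4) 2) = 1 := by decide
    rw [a1, a2]
    simp
  have h3 : g (orbT x 0) = orbT x 0 := by rw [h.act_T, hs]; rfl
  have h4 : g (orbD x 1 * orbD x 2) = orbD x 1 * orbD x 2 := by
    rcases sq_eq_sq_iff_eq_or_eq_neg.1 h1 with h5 | h5 <;> rw [h5] <;>
      simp only [map_neg, map_add, map_mul, map_pow, h3, map_ofNat]
  have h5 : orbD x 1 * orbD x 2 ≠ 0 := mul_ne_zero (h.Dne 1) (h.Dne 2)
  rw [h4] at h2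
  apply h5
  have : 2 * (orbD x 1 * orbD x 2) = 0 := by linear_combination h2
  simpa using this

/-- The exceptional set of `Φ₄(t, x)`: for every rational `c`, either `Φ₄(c, x)` is
reducible or its Galois group is not isomorphic to the Galois group of `Φ₄(t, x)`
over `ℚ(t)`, if and only if `c ∈ Im λ ∪ Im η ∪ {-5/2}`. -/
theorem phi4_exceptional_set (c : ℚ) :
    (¬ Irreducible (Phi4 c) ∨
      ¬ Nonempty ((Phi4 c).Gal ≃* (Phi4 (RatFunc.X : RatFunc ℚ)).Gal)) ↔
    ((∃ r : ℚ, r ≠ 0 ∧ c = (r ^ 2 + 2 * r - 4) / (8 * r)) ∨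
     (∃ r : ℚ, r ≠ 0 ∧ c = (4 - 3 * r - r ^ 3) / (4 * r)) ∨
     c = -5/2) := by
  obtain ⟨-, ⟨et⟩⟩ := good_conclusion (RatFunc.X : RatFunc ℚ) good_ratFunc
  constructor
  · intro hbad
    by_contra hc
    push Not at hc
    obtain ⟨c1, c2, c3⟩ := hc
    obtain ⟨hirr, ⟨e⟩⟩ := good_conclusion c (good_of_not_exc c (by push Not; exact c1)
      (by push Not; exact c2) c3)
    rcases hbad with h | h
    · exact h hirr
    · exact h ⟨e.trans et.symm⟩
  · intro hexc
    by_cases heta : ∃ r : ℚ, r ≠ 0 ∧ c = (4 - 3 * r - r ^ 3) / (4 * r)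
    · left
      obtain ⟨t, ht⟩ := (eta_iff c).1 heta
      exact not_irreducible_eta c t ht
    · right
      have hroot : ∀ t : ℚ, t ^ 3 + (4 * c + 3) * t + 4 ≠ 0 := by
        intro t ht
        exact heta ((eta_iff c).2 ⟨t, ht⟩)
      obtain ⟨x, s, r, hG⟩ := exists_galData_splitting c
        (by
          intro h
          apply hroot (-2)
          rw [h]; ring)
        (by
          intro h
          apply no_point_A (-(4 * c + 3)) 0
          linear_combination h)
        (by
          have : 0 < (4 * c + 3) ^ 2 - 8 * (4 * c + 3) + 20 := by
            nlinarith [sq_nonneg (4 * c + 3 - 4)]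
          exact this.ne')
      have hcz : CharZero (Phi4 c).SplittingField :=
        charZero_of_injective_algebraMap (algebraMap ℚ (Phi4 c).SplittingField).injective
      rintro ⟨e⟩
      rcases hexc with h | h | h
      · obtain ⟨y, hy⟩ := (lambda_iff c).1 h
        exact bad_lambda hG y hy ⟨e.trans et⟩
      · exact heta h
      · exact bad_five_halves hG (by rw [h]; norm_num) ⟨e.trans et⟩
end

section
/- The set of pairs (t,x) ∈ ℚ × ℚ satisfying x² − 64t² + 32t − 20 = 0 is exactly the set {(λ(z), (z² + 4)/z) : z ∈ ℚ, z ≠ 0}, where λ(z) = (z² + 2z − 4)/(8z). -/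
/-- The rational points of the curve `x² − 64t² + 32t − 20 = 0` are exactly the
points `(λ(z), (z² + 4)/z)` for nonzero rational `z`, where
`λ(z) = (z² + 2z − 4)/(8z)`. -/
theorem curve_C1_points (t x : ℚ) :
    x ^ 2 - 64 * t ^ 2 + 32 * t - 20 = 0 ↔
    ∃ z : ℚ, z ≠ 0 ∧ t = (z ^ 2 + 2 * z - 4) / (8 * z) ∧ x = (z ^ 2 + 4) / z := by
  constructor
  · intro h
    have hz : (x + 8 * t - 2) / 2 ≠ 0 := by
      intro h0
      have h1 : x = 2 - 8 * t := by linarith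
      subst h1
      ring_nf at h
      norm_num at h
    refine ⟨(x + 8 * t - 2) / 2, hz, ?_, ?_⟩
    · rw [eq_div_iff (mul_ne_zero (by norm_num) hz)]
      linear_combination (-1 / 4 : ℚ) * h
    · rw [eq_div_iff hz]
      linear_combination (1 / 4 : ℚ) * h
  · rintro ⟨z, hz, rfl, rfl⟩
    field_simp
    ring
end

section
/- The set of pairs (t,x) ∈ ℚ × ℚ satisfying x⁴ + (12 − 16t)x³ + (64t² − 64t + 36)x² + (256t² − 64t + 160)x + 256t² = 0 is exactly {(0, 0), (0, −10), (−5/2, −10)}. -/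
theorem prime_dvd_of_sq_dvd {p w : ℤ} (hp : Prime p) (h : p * p ∣ 5 * w ^ 4) : p ∣ w := by
  by_contra hw
  have hc : IsCoprime p w := (hp.coprime_iff_not_dvd).2 hw
  have hc2 : IsCoprime (p * p) (w ^ 4) := (hc.mul_left hc).pow_right
  have h5 : p * p ∣ 5 := hc2.dvd_of_dvd_mul_right h
  have h5p : Prime (5 : ℤ) := by norm_num
  exact hp.not_isUnit (h5p.squarefree p h5)

theorem fourth_of_coprime {A B w : ℤ} (hA : 0 < A) (hc : IsCoprime A B)
    (h : A * B = w ^ 4) : ∃ U, A = U ^ 4 := by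
  obtain ⟨d, hd⟩ := exists_associated_pow_of_mul_eq_pow' hc h
  rcases Int.associated_iff.1 hd with h | h
  · exact ⟨d, h.symm⟩
  · have : 0 ≤ d ^ 4 := by positivity
    omega

theorem square_of_coprime {A B w : ℤ} (hA : 0 < A) (hc : IsCoprime A B)
    (h : A * B = w ^ 2) : ∃ U, A = U ^ 2 := by
  obtain ⟨d, hd⟩ := exists_associated_pow_of_mul_eq_pow' hc h
  rcases Int.associated_iff.1 hd with h | h
  · exact ⟨d, h.symm⟩
  · have : 0 ≤ d ^ 2 := by positivity
    omega

theorem fac_five_aux {A B w : ℤ} (hA : 0 < A) (hB : 0 < B) (hc : IsCoprime A B)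
    (h : A * B = 5 * w ^ 4) (h5 : 5 ∣ A) :
    ∃ U V : ℤ, IsCoprime U V ∧ A + B = U ^ 4 + 5 * V ^ 4 ∧ U ^ 2 * V ^ 2 = w ^ 2 := by
  obtain ⟨A', rfl⟩ := h5
  have hc' : IsCoprime A' B := hc.of_mul_left_right
  have h' : A' * B = w ^ 4 := by linarith
  obtain ⟨V, hV⟩ := fourth_of_coprime (by omega) hc' h'
  obtain ⟨U, hU⟩ := fourth_of_coprime hB hc'.symm (by rw [mul_comm]; exact h')
  subst hU hV
  refine ⟨U, V, ?_, by ring, ?_⟩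
  · exact ((IsCoprime.pow_iff (by norm_num) (by norm_num)).1 hc').symm
  · have : (U ^ 2 * V ^ 2) ^ 2 = (w ^ 2) ^ 2 := by linarith
    exact (pow_left_inj₀ (by positivity) (by positivity) (by norm_num)).1 this

theorem fac_five {A B w : ℤ} (hA : 0 < A) (hB : 0 < B) (hc : IsCoprime A B)
    (h : A * B = 5 * w ^ 4) :
    ∃ U V : ℤ, IsCoprime U V ∧ A + B = U ^ 4 + 5 * V ^ 4 ∧ U ^ 2 * V ^ 2 = w ^ 2 := by
  have h5p : Prime (5 : ℤ) := by norm_num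
  rcases h5p.dvd_or_dvd (Dvd.intro _ h.symm) with h5 | h5
  · exact fac_five_aux hA hB hc h h5
  · have := fac_five_aux hB hA hc.symm (by rw [mul_comm]; exact h) h5
    rwa [add_comm B A] at this

theorem pos_of_mul_add {A B : ℤ} (h1 : 0 < A * B) (h2 : 0 < A + B) : 0 < A ∧ 0 < B := by
  rcases mul_pos_iff.1 h1 with h | h
  · exact h
  · omega

theorem one_of_coprime_sq {u v : ℤ} (hc : IsCoprime u v) (h : u ^ 2 = v ^ 2) :
    u ^ 2 = 1 ∧ v ^ 2 = 1 := by
  have h1 : IsCoprime (u ^ 2) (v ^ 2) := hc.pow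
  rw [← h, isCoprime_self] at h1
  have : u ^ 2 = 1 := by
    rcases Int.isUnit_iff.1 h1 with h | h
    · exact h
    · nlinarith [sq_nonneg u]
  exact ⟨this, by rw [← h]; exact this⟩

/-- The auxiliary quartic, given the main claim for smaller solutions. -/
theorem aux_quartic {r s e : ℤ} (hc : IsCoprime r s) (hs : s ≠ 0)
    (h : r ^ 4 + r ^ 2 * s ^ 2 - s ^ 4 = e ^ 2)
    (IH : ∀ a b c : ℤ, c.natAbs ≤ 2 * r.natAbs → IsCoprime a b →
      a ^ 4 - 2 * a ^ 2 * b ^ 2 + 5 * b ^ 4 = c ^ 2 → b = 0 ∨ a ^ 2 = b ^ 2) :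
    r ^ 2 = 1 ∧ s ^ 2 = 1 := by
  have hs2 : 0 < s ^ 2 := by positivity
  rcases Int.even_or_odd' s with ⟨w, rfl | hw⟩
  · exfalso
    have hr2 : IsCoprime r 2 := hc.of_mul_right_left
    have hrw : IsCoprime r w := hc.of_mul_right_right
    have hw0 : w ≠ 0 := by rintro rfl; simp at hs
    have hrodd : r % 2 = 1 := by
      rcases Int.emod_two_eq_zero_or_one r with h0 | h0
      · exfalso
        have : (2:ℤ) ∣ r := Int.dvd_of_emod_eq_zero h0
        have := hr2.symm.isUnit_of_dvd this
        norm_num [Int.isUnit_iff] at this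
      · exact h0
    have hodd : Odd r := Int.odd_iff.2 hrodd
    have heodd : Odd e := by
      have : Odd (e ^ 2) := by
        rw [← h]
        obtain ⟨k, rfl⟩ := hodd
        refine ⟨8 * k ^ 4 + 16 * k ^ 3 + 12 * k ^ 2 + 4 * k + 2 * (2 * k + 1) ^ 2 * w ^ 2
          - 8 * w ^ 4, by ring⟩
      exact (Int.odd_pow.1 this).resolve_right (by norm_num)
    obtain ⟨A, hA⟩ : ∃ A, r ^ 2 + 2 * w ^ 2 - e = 2 * A := by
      obtain ⟨k, rfl⟩ := hodd
      obtain ⟨l, rfl⟩ := heodd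
      exact ⟨2 * k ^ 2 + 2 * k + w ^ 2 - l, by ring⟩
    obtain ⟨B, hB⟩ : ∃ B, B = A + e := ⟨_, rfl⟩
    have hsum : A + B = r ^ 2 + 2 * w ^ 2 := by linarith
    have hprod : A * B = 5 * w ^ 4 := by
      have : (2 * A) * (2 * A + 2 * e) = 20 * w ^ 4 := by
        rw [← hA]; linear_combination h
      rw [hB]; linarith
    have hw4 : 0 < w ^ 4 := by positivity
    have hw2 : 0 < w ^ 2 := by positivity
    obtain ⟨hA0, hB0⟩ := pos_of_mul_add (A := A) (B := B) (by rw [hprod]; linarith)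
      (by rw [hsum]; nlinarith [sq_nonneg r])
    have hcop : IsCoprime A B := by
      refine isCoprime_of_prime_dvd (by omega) ?_
      intro p hp h1 h2
      have hpw : p ∣ w := prime_dvd_of_sq_dvd hp (hprod ▸ mul_dvd_mul h1 h2)
      have hpr : p ∣ r := by
        have h3 : p ∣ A + B - 2 * w ^ 2 :=
          dvd_sub (dvd_add h1 h2) (dvd_mul_of_dvd_right (dvd_pow hpw (by norm_num)) _)
        rw [hsum] at h3
        exact hp.dvd_of_dvd_pow (n := 2) (by simpa using h3)
      exact hp.not_isUnit (hrw.isUnit_of_dvd' hpr hpw)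
    obtain ⟨U, V, hUV, hs1, hs2⟩ := fac_five hA0 hB0 hcop hprod
    have hV : V ≠ 0 := by rintro rfl; simp at hs2; omega
    rcases IH U V r (by omega) hUV (by linarith) with h0 | h0
    · exact hV h0
    · obtain ⟨h1, h2⟩ := one_of_coprime_sq hUV h0
      have : r ^ 2 = 4 := by
        linear_combination hs1 - hsum + 2 * hs2 + (U ^ 2 + 1 - 2 * V ^ 2) * h1 + (5 * V ^ 2 + 3) * h2
      obtain ⟨k, rfl⟩ := hodd
      ring_nf at this
      omega
  · have h2s : IsCoprime 2 s := ⟨-w, 1, by rw [hw]; ring⟩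
    obtain ⟨A, hA⟩ : ∃ A, A = 2 * r ^ 2 + s ^ 2 - 2 * e := ⟨_, rfl⟩
    obtain ⟨B, hB⟩ : ∃ B, B = 2 * r ^ 2 + s ^ 2 + 2 * e := ⟨_, rfl⟩
    have hsum : A + B = 4 * r ^ 2 + 2 * s ^ 2 := by rw [hA, hB]; ring
    have hprod : A * B = 5 * s ^ 4 := by
      rw [hA, hB]; linear_combination 4 * h
    have hs4 : 0 < s ^ 4 := by positivity
    obtain ⟨hA0, hB0⟩ := pos_of_mul_add (A := A) (B := B) (by rw [hprod]; linarith)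
      (by rw [hsum]; nlinarith [sq_nonneg r])
    have hcop : IsCoprime A B := by
      refine isCoprime_of_prime_dvd (by omega) ?_
      intro p hp h1 h2
      have hpw : p ∣ s := prime_dvd_of_sq_dvd hp (hprod ▸ mul_dvd_mul h1 h2)
      have h3 : p ∣ A + B - 2 * s ^ 2 :=
        dvd_sub (dvd_add h1 h2) (dvd_mul_of_dvd_right (dvd_pow hpw (by norm_num)) _)
      have h4 : p ∣ 2 * 2 * r ^ 2 := by
        have : A + B - 2 * s ^ 2 = 2 * 2 * r ^ 2 := by rw [hsum]; ring
        rwa [this] at h3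
      rcases hp.dvd_or_dvd h4 with h5 | h5
      · have h6 : p ∣ 2 := by rcases hp.dvd_or_dvd h5 with h | h <;> exact h
        exact hp.not_isUnit (h2s.isUnit_of_dvd' h6 hpw)
      · exact hp.not_isUnit (hc.isUnit_of_dvd' (hp.dvd_of_dvd_pow h5) hpw)
    obtain ⟨U, V, hUV, hs1, hs3⟩ := fac_five hA0 hB0 hcop hprod
    have hV : V ≠ 0 := by rintro rfl; simp at hs3; omega
    rcases IH U V (2 * r) (by omega) hUV (by linarith) with h0 | h0
    · exact absurd h0 hV
    · obtain ⟨h1, h2⟩ := one_of_coprime_sq hUV h0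
      have h6 : s ^ 2 = 1 := by rw [← hs3, h1, h2]; norm_num
      have h7 : U ^ 4 = 1 := by linear_combination (U ^ 2 + 1) * h1
      have h8 : V ^ 4 = 1 := by linear_combination (V ^ 2 + 1) * h2
      exact ⟨by linarith, h6⟩

theorem abs_le_sq_int (m : ℤ) : |m| ≤ m ^ 2 := by
  rw [← sq_abs]
  exact Int.le_self_sq |m|

set_option maxHeartbeats 1000000 in
theorem main_quartic (N : ℕ) : ∀ a b c : ℤ, c.natAbs = N → IsCoprime a b →
    a ^ 4 - 2 * a ^ 2 * b ^ 2 + 5 * b ^ 4 = c ^ 2 → b = 0 ∨ a ^ 2 = b ^ 2 := by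
  induction N using Nat.strong_induction_on with
  | _ N ih =>
  intro a b c0 hcN hab h0
  by_cases hb : b = 0
  · exact Or.inl hb
  right
  obtain ⟨c, hc⟩ : ∃ c : ℤ, c = |c0| := ⟨_, rfl⟩
  have hcN' : c = N := by rw [hc, ← hcN]; simp
  have h : a ^ 4 - 2 * a ^ 2 * b ^ 2 + 5 * b ^ 4 = c ^ 2 := by rw [hc, sq_abs]; exact h0
  have hb4 : 0 < b ^ 4 := by positivity
  have hcpos : 0 < c := by
    rcases (by rw [hc]; positivity : 0 ≤ c).lt_or_eq with h1 | h1
    · exact h1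
    · exfalso; rw [← h1] at h; nlinarith [sq_nonneg (a ^ 2 - b ^ 2)]
  have IH : ∀ r : ℤ, 2 * |r| < c → ∀ a b c : ℤ, c.natAbs ≤ 2 * r.natAbs → IsCoprime a b →
      a ^ 4 - 2 * a ^ 2 * b ^ 2 + 5 * b ^ 4 = c ^ 2 → b = 0 ∨ a ^ 2 = b ^ 2 := by
    intro r hr a b c' h1 h2 h3
    have hr' : (r.natAbs : ℤ) = |r| := Int.natCast_natAbs r
    exact ih c'.natAbs (by omega) a b c' rfl h2 h3
  rcases Int.even_or_odd (a ^ 2 - b ^ 2) with hev | hodd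
  · -- both odd
    have hboth : Odd a ∧ Odd b := by
      rw [Int.even_sub, Int.even_pow' (by norm_num), Int.even_pow' (by norm_num)] at hev
      have : ¬ Even b := by
        intro hb2
        have ha2 := hev.2 hb2
        have := hab.isUnit_of_dvd' ha2.two_dvd hb2.two_dvd
        norm_num [Int.isUnit_iff] at this
      have h2 : ¬ Even a := fun h => this (hev.1 h)
      exact ⟨Int.not_even_iff_odd.1 h2, Int.not_even_iff_odd.1 this⟩
    obtain ⟨ha1, hb1⟩ := hboth
    obtain ⟨s, hs⟩ : ∃ s, a - b = 2 * s := (ha1.sub_odd hb1).two_dvd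
    obtain ⟨t, ht⟩ : ∃ t, t = s + b := ⟨_, rfl⟩
    have ha : a = t + s := by linarith
    have hbb : b = t - s := by linarith
    have hst : IsCoprime s t := by
      refine isCoprime_of_prime_dvd ?_ ?_
      · rintro ⟨rfl, rfl⟩; simp at hbb; exact hb hbb
      · intro p hp h1 h2
        exact hp.not_isUnit (hab.isUnit_of_dvd' (ha ▸ dvd_add h2 h1) (hbb ▸ dvd_sub h2 h1))
    have hce : Even c := by
      have : Even (c ^ 2) := by
        rw [← h]
        have e1 : Odd (a ^ 4) := ha1.pow
        have e2 : Odd (5 * b ^ 4) := Odd.mul (by decide) hb1.pow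
        have e3 : Even (2 * a ^ 2 * b ^ 2) := ⟨a ^ 2 * b ^ 2, by ring⟩
        exact (e1.sub_even e3).add_odd e2
      exact (Int.even_pow.1 this).1
    obtain ⟨d, hd⟩ := hce.two_dvd
    have hpt : PythagoreanTriple (b ^ 2) (2 * (s * t)) d := by
      unfold PythagoreanTriple
      have e : a ^ 2 - b ^ 2 = 4 * (s * t) := by rw [ha, hbb]; ring
      have e2 : (a ^ 2 - b ^ 2) ^ 2 + 4 * b ^ 4 = (2 * d) ^ 2 := by rw [← hd, ← h]; ring
      rw [e] at e2
      linarith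
    have hb2c : IsCoprime (b ^ 2) (2 * (s * t)) := by
      apply IsCoprime.pow_left
      have e1 : IsCoprime b 2 := by
        obtain ⟨k, rfl⟩ := hb1
        exact ⟨1, -k, by ring⟩
      have e2 : IsCoprime b s := by
        obtain ⟨x, y, hxy⟩ := hst
        exact ⟨y, x + y, by rw [hbb]; linear_combination hxy⟩
      have e3 : IsCoprime b t := by
        obtain ⟨x, y, hxy⟩ := hst
        exact ⟨-x, x + y, by rw [hbb]; linear_combination hxy⟩
      exact e1.mul_right (e2.mul_right e3)
    obtain ⟨m, n, h1, h2, h3, h4, h5, h6⟩ := hpt.coprime_classification'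
      (Int.isCoprime_iff_gcd_eq_one.1 hb2c) (Int.odd_iff.1 hb1.pow) (by omega)
    have h2' : s * t = m * n := by linarith
    by_cases hn : n = 0
    · rw [ha, hbb]
      have : s * t = 0 := by rw [h2', hn, mul_zero]
      linear_combination 4 * this
    exfalso
    have hn2 : 0 < n ^ 2 := by positivity
    have hb2 : 0 < b ^ 2 := by positivity
    have hm : m ≠ 0 := by rintro rfl; nlinarith
    obtain ⟨γ, α, ⟨δ, hδ⟩, ⟨β, hβ⟩, hγα⟩ := exists_dvd_and_dvd_of_dvd_mul (Dvd.intro _ h2'.symm)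
    have hγ : γ ≠ 0 := by rintro rfl; simp at hγα; exact hm hγα
    have hα : α ≠ 0 := by rintro rfl; simp at hγα; exact hm hγα
    have hnn : n = β * δ := by
      apply mul_left_cancel₀ hm
      rw [← h2', hδ, hβ, hγα]; ring
    have hβ0 : β ≠ 0 := by rintro rfl; simp at hnn; exact hn hnn
    have hδ0 : δ ≠ 0 := by rintro rfl; simp at hnn; exact hn hnn
    have hrel : (α * β - γ * δ) ^ 2 = (γ * α) ^ 2 - (β * δ) ^ 2 := by
      rw [← hγα, ← hnn, ← h1, hbb, hδ, hβ]
    have hdisc : γ ^ 2 * (α ^ 4 + α ^ 2 * δ ^ 2 - δ ^ 4)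
        = (β * (α ^ 2 + δ ^ 2) - α * γ * δ) ^ 2 := by
      linear_combination (-(α ^ 2 + δ ^ 2)) * hrel
    obtain ⟨e, he⟩ : γ ∣ β * (α ^ 2 + δ ^ 2) - α * γ * δ :=
      (Int.pow_dvd_pow_iff (by norm_num : 2 ≠ 0)).1 (Dvd.intro _ hdisc)
    have hq : α ^ 4 + α ^ 2 * δ ^ 2 - δ ^ 4 = e ^ 2 := by
      have hγ2 : γ ^ 2 ≠ 0 := by positivity
      apply mul_left_cancel₀ hγ2
      rw [hdisc, he]; ring
    have hcαδ : IsCoprime α δ := by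
      rw [hδ, hβ] at hst
      exact hst.of_mul_left_right.of_mul_right_left.symm
    have hbound : 2 * |α| < c := by
      have e1 : |α| ≤ |m| := by
        rw [hγα, abs_mul]
        exact le_mul_of_one_le_left (abs_nonneg α) (Int.one_le_abs hγ)
      have e2 : |m| ≤ m ^ 2 := abs_le_sq_int m
      rw [hd, h3]; linarith
    obtain ⟨g1, g2⟩ := aux_quartic hcαδ hδ0 hq (IH α hbound)
    have k1 : β * (β - α * δ * γ) = 0 := by
      have : 2 * (β * (β - α * δ * γ)) = 0 := by
        linear_combination hrel + (γ ^ 2 - β ^ 2) * g1 - (γ ^ 2 + β ^ 2) * g2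
      linarith
    have k2 : β = α * δ * γ := by
      rcases mul_eq_zero.1 k1 with h | h
      · exact absurd h hβ0
      · linarith
    have k3 : b ^ 2 = 0 := by
      rw [h1, hγα, hnn, k2]
      linear_combination (-γ ^ 2 * α ^ 2 * (δ ^ 2 + 1)) * g2
    omega
  · have hb2c : IsCoprime (a ^ 2 - b ^ 2) (2 * b ^ 2) := by
      have e1 : IsCoprime (a ^ 2 - b ^ 2) 2 := by
        obtain ⟨k, hk⟩ := hodd
        exact ⟨1, -k, by rw [hk]; ring⟩
      have e2 : IsCoprime (a ^ 2 - b ^ 2) (b ^ 2) := by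
        obtain ⟨x, y, hxy⟩ := (hab.pow : IsCoprime (a ^ 2) (b ^ 2))
        exact ⟨x, x + y, by linear_combination hxy⟩
      exact e1.mul_right e2
    have hpt : PythagoreanTriple (a ^ 2 - b ^ 2) (2 * b ^ 2) c := by
      unfold PythagoreanTriple
      linear_combination h
    obtain ⟨m, n, h1, h2, h3, h4, h5, h6⟩ := hpt.coprime_classification'
      (Int.isCoprime_iff_gcd_eq_one.1 hb2c) (Int.odd_iff.1 hodd) hcpos
    have h2' : m * n = b ^ 2 := by linarith
    have hb2 : 0 < b ^ 2 := by positivity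
    have hm : 0 < m := by
      rcases h6.lt_or_eq with h | h
      · exact h
      · rw [← h] at h2'; omega
    have hn : 0 < n := by
      by_contra hn; nlinarith
    have hmn : IsCoprime m n := Int.isCoprime_iff_gcd_eq_one.2 h4
    obtain ⟨r, rfl⟩ := square_of_coprime hm hmn h2'
    obtain ⟨s, rfl⟩ := square_of_coprime hn hmn.symm (by rw [mul_comm]; exact h2')
    have hs0 : s ≠ 0 := by rintro rfl; simp at hn
    have hr0 : r ≠ 0 := by rintro rfl; simp at hm
    have hrs : IsCoprime r s := (IsCoprime.pow_iff (by norm_num) (by norm_num)).1 hmn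
    have hq : r ^ 4 + r ^ 2 * s ^ 2 - s ^ 4 = a ^ 2 := by linear_combination h2' - h1
    have hne : ¬ (r ^ 2 = 1 ∧ s ^ 2 = 1) := by
      rintro ⟨g1, g2⟩
      rw [g1, g2] at h5; norm_num at h5
    have hbound : 2 * |r| < c := by
      rw [h3]
      have e2 : |r| ≤ r ^ 2 := abs_le_sq_int r
      have e3 : r ^ 2 ≠ 1 ∨ s ^ 2 ≠ 1 := by tauto
      rcases e3 with e3 | e3
      · have : 2 ≤ r ^ 2 := by omega
        nlinarith
      · have : 2 ≤ s ^ 2 := by omega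
        nlinarith [sq_nonneg (r ^ 2 - 1)]
    exact absurd (aux_quartic hrs hs0 hq (IH r hbound)) hne

theorem elliptic_int {p q N : ℤ} (hp : 0 < p) (hq : 0 < q) (hpq : IsCoprime p q)
    (h : p * q * (p ^ 2 - 2 * p * q + 5 * q ^ 2) = N ^ 2) : p = q ∨ p = 5 * q := by
  have h5p : Prime (5 : ℤ) := by norm_num
  by_cases h5 : (5 : ℤ) ∣ p
  · right
    obtain ⟨k, rfl⟩ := h5
    have hk : 0 < k := by omega
    have hkq : IsCoprime k q := hpq.of_mul_left_right
    have h5q : IsCoprime 5 q := hpq.of_mul_left_left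
    have h5N : (5 : ℤ) ∣ N := by
      apply h5p.dvd_of_dvd_pow (n := 2)
      rw [← h]
      exact ⟨k * q * ((5 * k) ^ 2 - 2 * (5 * k) * q + 5 * q ^ 2), by ring⟩
    obtain ⟨L, rfl⟩ := h5N
    have h' : k * q * (q ^ 2 - 2 * q * k + 5 * k ^ 2) = L ^ 2 := by linarith
    have c1 : IsCoprime k (q ^ 2 - 2 * q * k + 5 * k ^ 2) := by
      have : q ^ 2 - 2 * q * k + 5 * k ^ 2 = q ^ 2 + k * (5 * k - 2 * q) := by ring
      rw [this]
      exact (hkq.pow_right).add_mul_left_right _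
    have c2 : IsCoprime q (q ^ 2 - 2 * q * k + 5 * k ^ 2) := by
      have : q ^ 2 - 2 * q * k + 5 * k ^ 2 = 5 * k ^ 2 + q * (q - 2 * k) := by ring
      rw [this]
      exact (h5q.symm.mul_right hkq.symm.pow_right).add_mul_left_right _
    obtain ⟨a, rfl⟩ := square_of_coprime hk (hkq.mul_right c1) (by rw [← h']; ring)
    obtain ⟨b, rfl⟩ := square_of_coprime hq (hkq.symm.mul_right c2) (by rw [← h']; ring)
    obtain ⟨c, hc⟩ := square_of_coprime (by nlinarith [sq_nonneg (b ^ 2 - a ^ 2)])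
      (c1.symm.mul_right c2.symm) (by rw [← h']; ring)
    have hab : IsCoprime a b := (IsCoprime.pow_iff (by norm_num) (by norm_num)).1 hkq
    rcases main_quartic _ b a c rfl hab.symm (by linear_combination hc) with h0 | h0
    · rw [h0] at hk; simp at hk
    · rw [h0]
  · left
    have h5c : IsCoprime 5 p := (h5p.coprime_iff_not_dvd).2 h5
    have c1 : IsCoprime p (p ^ 2 - 2 * p * q + 5 * q ^ 2) := by
      have : p ^ 2 - 2 * p * q + 5 * q ^ 2 = 5 * q ^ 2 + p * (p - 2 * q) := by ring
      rw [this]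
      exact (h5c.symm.mul_right hpq.pow_right).add_mul_left_right _
    have c2 : IsCoprime q (p ^ 2 - 2 * p * q + 5 * q ^ 2) := by
      have : p ^ 2 - 2 * p * q + 5 * q ^ 2 = p ^ 2 + q * (5 * q - 2 * p) := by ring
      rw [this]
      exact (hpq.symm.pow_right).add_mul_left_right _
    obtain ⟨a, rfl⟩ := square_of_coprime hp (hpq.mul_right c1) (by rw [← h]; ring)
    obtain ⟨b, rfl⟩ := square_of_coprime hq (hpq.symm.mul_right c2) (by rw [← h]; ring)
    obtain ⟨c, hc⟩ := square_of_coprime (by nlinarith [sq_nonneg (a ^ 2 - b ^ 2)])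
      (c1.symm.mul_right c2.symm) (by rw [← h]; ring)
    have hab : IsCoprime a b := (IsCoprime.pow_iff (by norm_num) (by norm_num)).1 hpq
    rcases main_quartic _ a b c rfl hab (by linear_combination hc) with h0 | h0
    · rw [h0] at hq; simp at hq
    · exact h0

theorem elliptic_rat {z w : ℚ} (h : w ^ 2 = z * (z ^ 2 - 2 * z + 5)) :
    z = 0 ∨ z = 1 ∨ z = 5 := by
  by_cases hz : z = 0
  · exact Or.inl hz
  right
  have hz0 : 0 < z := by
    have h1 : 0 < z ^ 2 - 2 * z + 5 := by nlinarith [sq_nonneg (z - 1)]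
    rcases lt_or_gt_of_ne hz with h2 | h2
    · nlinarith [sq_nonneg w, mul_pos_of_neg_of_neg h2 (neg_lt_zero.2 h1)]
    · exact h2
  have hq0 : (z.den : ℚ) ≠ 0 := by exact_mod_cast z.den_nz
  have hzz : z = z.num / z.den := (Rat.num_div_den z).symm
  have hp : 0 < z.num := Rat.num_pos.2 hz0
  have hq : 0 < (z.den : ℤ) := by exact_mod_cast z.den_pos
  have hcop : IsCoprime z.num (z.den : ℤ) := by
    rw [Int.isCoprime_iff_gcd_eq_one]
    exact z.reduced
  have hM : (w * z.den ^ 2) ^ 2 = ((z.num * z.den * (z.num ^ 2 - 2 * z.num * z.den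
      + 5 * (z.den : ℤ) ^ 2) : ℤ) : ℚ) := by
    have hn : (z.num : ℚ) = z * z.den := (Rat.mul_den_eq_num z).symm
    push_cast
    rw [hn]
    linear_combination (z.den : ℚ) ^ 4 * h
  have hsq : IsSquare (((z.num * z.den * (z.num ^ 2 - 2 * z.num * z.den
      + 5 * (z.den : ℤ) ^ 2) : ℤ) : ℚ)) := ⟨w * z.den ^ 2, by rw [← hM]; ring⟩
  rw [Rat.isSquare_intCast_iff] at hsq
  obtain ⟨N, hN⟩ := hsq
  rcases elliptic_int hp hq hcop (N := N) (by rw [hN]; ring) with h1 | h1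
  · left
    rw [hzz, h1]; push_cast; field_simp
  · right
    rw [hzz, h1]; push_cast; field_simp

/-- The rational points of the curve
`x⁴ + (12 − 16t)x³ + (64t² − 64t + 36)x² + (256t² − 64t + 160)x + 256t² = 0`
are exactly `(0, 0)`, `(0, −10)` and `(−5/2, −10)`. -/
theorem curve_C3_points (t x : ℚ) :
    x ^ 4 + (12 - 16 * t) * x ^ 3 + (64 * t ^ 2 - 64 * t + 36) * x ^ 2 +
      (256 * t ^ 2 - 64 * t + 160) * x + 256 * t ^ 2 = 0 ↔
    (t = 0 ∧ x = 0) ∨ (t = 0 ∧ x = -10) ∨ (t = -5/2 ∧ x = -10) := by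
  constructor
  · intro h
    have key : ((8 * (x + 2) * t - x * (x + 2)) / 8) ^ 2
        = (-x / 2) * ((-x / 2) ^ 2 - 2 * (-x / 2) + 5) := by
      linear_combination h / 64
    rcases elliptic_rat key with h1 | h1 | h1
    · have hx : x = 0 := by linarith
      subst hx
      left
      refine ⟨?_, rfl⟩
      have : t ^ 2 = 0 := by linarith
      exact pow_eq_zero_iff (by norm_num) |>.1 this
    · exfalso
      have hx : x = -2 := by linarith
      subst hx
      ring_nf at h
      norm_num at h
    · right
      have hx : x = -10 := by linarith
      subst hx
      have : t * (t + 5 / 2) = 0 := by linear_combination h / 4096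
      rcases mul_eq_zero.1 this with h2 | h2
      · exact Or.inl ⟨h2, rfl⟩
      · exact Or.inr ⟨by linarith, rfl⟩
  · rintro (⟨rfl, rfl⟩ | ⟨rfl, rfl⟩ | ⟨rfl, rfl⟩) <;> norm_num
end
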